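/- arXiv:1311.0539 — 6 statements merged into one kernel-verified Lean document; each statement's English description precedes it below -/
import Mathlib

section
/- Let H be a graph with k ≥ 2 edges and maximum degree Δ. Then AR_s(H) ≥ (k−1)²/(2Δ). -/
open SimpleGraph

/-- A proper edge coloring of `G`: adjacent (distinct, vertex-sharing) edges get
different colors. -/
def IsProperEdgeColoring {V : Type*} (G : SimpleGraph V) (c : Sym2 V → ℕ) : Prop :=
  ∀ e₁ ∈ G.edgeSet, ∀ e₂ ∈ G.edgeSet, e₁ ≠ e₂ → (∃ v, v ∈ e₁ ∧ v ∈ e₂) → c e₁ ≠ c e₂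

/-- `G` contains a rainbow copy of `H` with respect to the edge coloring `c`:
there is an injective graph homomorphism `H → G` whose image edges receive
pairwise distinct colors. -/
def HasRainbowCopy {V W : Type*} (G : SimpleGraph V) (H : SimpleGraph W) (c : Sym2 V → ℕ) : Prop :=
  ∃ f : H →g G, Function.Injective f ∧
    ∀ e₁ ∈ H.edgeSet, ∀ e₂ ∈ H.edgeSet, c (Sym2.map f e₁) = c (Sym2.map f e₂) → e₁ = e₂

/-- `G → H`: every proper edge coloring of `G` contains a rainbow copy of `H`. -/
def ArrowsTo {V W : Type*} (G : SimpleGraph V) (H : SimpleGraph W) : Prop :=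
  ∀ c : Sym2 V → ℕ, IsProperEdgeColoring G c → HasRainbowCopy G H c

/-- The size anti-Ramsey number: the minimum number of edges of a (finite) graph
`G` with `G → H`. -/
noncomputable def ARs {W : Type*} (H : SimpleGraph W) : ℕ :=
  sInf {m | ∃ (n : ℕ) (G : SimpleGraph (Fin n)), ArrowsTo G H ∧ G.edgeSet.ncard = m}

/-- The local anti-Ramsey number: the minimum `n` such that `K_n → H`. -/
noncomputable def ARloc {W : Type*} (H : SimpleGraph W) : ℕ :=
  sInf {n | ArrowsTo (⊤ : SimpleGraph (Fin n)) H}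


section VizingPart

/-- Orbits of two involutions through a fixed point of the first one. -/
lemma orbit_lemma {V : Type*} [Finite V] (s t : V → V) (hs : Function.Involutive s)
    (ht : Function.Involutive t) (u : V) (hu : s u = u) :
    ∃ C : Set V, u ∈ C ∧ (∀ x ∈ C, s x ∈ C) ∧ (∀ x ∈ C, t x ∈ C) ∧
      ∀ x ∈ C, ∀ y ∈ C, s x = x → s y = y → x ≠ u → y ≠ u → x = y := by
  classical
  have : Fintype V := Fintype.ofFinite V
  let τ : V → V := fun x => t (s x)
  have hinj : Function.Injective τ := ht.injective.comp hs.injective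
  set p := Function.minimalPeriod τ u with hp
  have hper : u ∈ Function.periodicPts τ := hinj.mem_periodicPts u
  have hp0 : 0 < p := Function.minimalPeriod_pos_of_mem_periodicPts hper
  have hpp : τ^[p] u = u := Function.iterate_minimalPeriod
  -- `s` reverses the orbit
  have key : ∀ n, τ^[n] (s (τ^[n] u)) = u := by
    intro n
    induction n with
    | zero => simpa using hu
    | succ n ih =>
      rw [Function.iterate_succ_apply, Function.iterate_succ_apply' τ n u]
      have : τ (s (τ (τ^[n] u))) = s (τ^[n] u) := by
        simp only [τ]
        rw [hs, ht]
      rw [this, ih]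
  have key2 : ∀ n m, τ^[n * p] (τ^[m] u) = τ^[m] u := by
    intro n m
    rw [← Function.iterate_add_apply, Nat.add_comm, Function.iterate_add_apply]
    congr 1
    rw [Nat.mul_comm, Function.iterate_mul]
    exact Function.iterate_fixed hpp n
  have hsC : ∀ n, ∃ m, τ^[m] u = s (τ^[n] u) := by
    intro n
    refine ⟨n * p - n, ?_⟩
    have h1 : n ≤ n * p := Nat.le_mul_of_pos_right n hp0
    apply hinj.iterate n
    rw [key, ← Function.iterate_add_apply, Nat.add_sub_cancel' h1]
    simpa using key2 n 0
  refine ⟨{x | ∃ n, τ^[n] u = x}, ⟨0, rfl⟩, ?_, ?_, ?_⟩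
  · rintro x ⟨n, rfl⟩
    exact hsC n
  · rintro x ⟨n, rfl⟩
    obtain ⟨m, hm⟩ := hsC n
    refine ⟨m + 1, ?_⟩
    rw [Function.iterate_succ_apply', hm]
    simp only [τ]
    rw [hs]
  · rintro x ⟨n, rfl⟩ y ⟨m, rfl⟩ hx hy hxu hyu
    have dv : ∀ n, τ^[n] u = u ↔ p ∣ n := fun n =>
      Function.isPeriodicPt_iff_minimalPeriod_dvd (f := τ) (x := u) (n := n)
    have hx2 : p ∣ n + n := by
      rw [← dv, Function.iterate_add_apply]
      have := key n
      rwa [hx] at this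
    have hy2 : p ∣ m + m := by
      rw [← dv, Function.iterate_add_apply]
      have := key m
      rwa [hy] at this
    have hnx : ¬ p ∣ n := fun h => hxu ((dv n).2 h)
    have hny : ¬ p ∣ m := fun h => hyu ((dv m).2 h)
    have hnm : p ∣ n + m := by
      obtain ⟨a, ha⟩ := hx2
      obtain ⟨b, hb⟩ := hy2
      rcases Nat.even_or_odd' a with ⟨a', h | h⟩
      · exact absurd ⟨a', by rw [h] at ha; nlinarith⟩ hnx
      rcases Nat.even_or_odd' b with ⟨b', h' | h'⟩
      · exact absurd ⟨b', by rw [h'] at hb; nlinarith⟩ hny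
      exact ⟨a' + b' + 1, by rw [h] at ha; rw [h'] at hb; nlinarith⟩
    apply hinj.iterate n
    rw [← Function.iterate_add_apply, ← Function.iterate_add_apply, (dv _).2 hx2, (dv _).2 hnm]

/-- `σ 0, …, σ (k-1)` are disjoint matchings (as involutions) whose union is `K`. -/
structure GoodCol {V : Type*} (k : ℕ) (σ : ℕ → V → V) (K : V → V → Prop) : Prop where
  inv : ∀ i, Function.Involutive (σ i)
  un : ∀ u w, u ≠ w → (K u w ↔ ∃ i < k, σ i u = w)
  dis : ∀ i < k, ∀ j < k, ∀ u, σ i u = σ j u → σ i u ≠ u → i = j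

/-- Kempe swap of the colors `i`, `j` on the set `C`. -/
lemma kempe_swap {V : Type*} {k : ℕ} {σ : ℕ → V → V} {K : V → V → Prop} (h : GoodCol k σ K)
    (i j : ℕ) (hi : i < k) (hj : j < k) (C : Set V) [DecidablePred (· ∈ C)]
    (hCi : ∀ x ∈ C, σ i x ∈ C) (hCj : ∀ x ∈ C, σ j x ∈ C) :
    GoodCol k (fun l x => if x ∈ C then σ (Equiv.swap i j l) x else σ l x) K := by
  have hsw : ∀ l, l < k → Equiv.swap i j l < k := by
    intro l hl
    rw [Equiv.swap_apply_def]; split_ifs <;> assumption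
  have hC : ∀ l, l = i ∨ l = j → ∀ x, σ l x ∈ C ↔ x ∈ C := by
    rintro l (rfl | rfl) x
    · exact ⟨fun hx => by have := hCi _ hx; rwa [h.inv] at this, hCi x⟩
    · exact ⟨fun hx => by have := hCj _ hx; rwa [h.inv] at this, hCj x⟩
  constructor
  · intro l x
    by_cases hl : l = i ∨ l = j
    · have hl' : Equiv.swap i j l = i ∨ Equiv.swap i j l = j := by
        rcases hl with rfl | rfl <;> simp
      by_cases hx : x ∈ C
      · simp [hx, hC _ hl' x, h.inv _ x]
      · simp [hx, hC _ hl x, h.inv _ x]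
    · push Not at hl
      rw [Equiv.swap_apply_of_ne_of_ne hl.1 hl.2]
      simp [h.inv _ x]
  · intro u w huw
    rw [h.un u w huw]
    by_cases hu : u ∈ C
    · simp only [hu, if_true]
      constructor
      · rintro ⟨l, hl, e⟩
        exact ⟨Equiv.swap i j l, hsw l hl, by rwa [Equiv.swap_apply_self]⟩
      · rintro ⟨l, hl, e⟩
        exact ⟨Equiv.swap i j l, hsw l hl, e⟩
    · simp only [hu, if_false]
  · intro a ha b hb u
    by_cases hu : u ∈ C
    · simp only [hu, if_true]
      intro e1 e2
      exact (Equiv.swap i j).injective (h.dis _ (hsw a ha) _ (hsw b hb) u e1 e2)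
    · simp only [hu, if_false]
      exact h.dis a ha b hb u

/-- Admissible choice of missing colors. -/
structure GoodMiss {V : Type*} (k : ℕ) (σ : ℕ → V → V) (N : Finset V) (u0 : V)
    (A : V → Finset ℕ) : Prop where
  lt : ∀ u ∈ N, ∀ i ∈ A u, i < k
  fix : ∀ u ∈ N, ∀ i ∈ A u, σ i u = u
  one : (A u0).card = 1
  two : ∀ u ∈ N, u ≠ u0 → (A u).card = 2

lemma balance {V : Type*} [Finite V] [DecidableEq V] (k : ℕ) (K : V → V → Prop) (N : Finset V)
    (u0 : V) (hu0 : u0 ∈ N) (hN : N.card ≤ k) :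
    ∀ (m : ℕ) (σ : ℕ → V → V) (A : V → Finset ℕ), GoodCol k σ K → GoodMiss k σ N u0 A →
      ((Finset.range k).filter (fun i => N.filter (fun u => i ∈ A u) = ∅)).card = m →
      ∃ (σ' : ℕ → V → V) (A' : V → Finset ℕ), GoodCol k σ' K ∧ GoodMiss k σ' N u0 A' ∧
        ∃ i < k, (N.filter (fun u => i ∈ A' u)).card = 1 := by
  classical
  intro m
  induction m using Nat.strong_induction_on with
  | _ m ih =>
  intro σ A hσ hA hm
  by_cases hex : ∃ i < k, (N.filter (fun u => i ∈ A u)).card = 1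
  · exact ⟨σ, A, hσ, hA, hex⟩
  push Not at hex
  -- total count
  have hsum : ∑ i ∈ Finset.range k, (N.filter (fun u => i ∈ A u)).card = 2 * N.card - 1 := by
    have h1 : ∑ i ∈ Finset.range k, (N.filter (fun u => i ∈ A u)).card
        = ∑ u ∈ N, (A u).card := by
      simp only [Finset.card_filter]
      rw [Finset.sum_comm]
      refine Finset.sum_congr rfl fun u hu => ?_
      rw [← Finset.card_filter]
      congr 1
      ext i
      simp only [Finset.mem_filter, Finset.mem_range]
      exact ⟨fun h => h.2, fun h => ⟨hA.lt u hu i h, h⟩⟩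
    rw [h1, ← Finset.add_sum_erase N _ hu0, hA.one,
      Finset.sum_congr rfl (g := fun _ => 2) (fun u hu =>
        hA.two u (Finset.mem_of_mem_erase hu) (Finset.ne_of_mem_erase hu)),
      Finset.sum_const, Finset.card_erase_of_mem hu0, smul_eq_mul]
    have := Finset.card_pos.2 ⟨u0, hu0⟩
    omega
  have hNpos := Finset.card_pos.2 ⟨u0, hu0⟩
  obtain ⟨j, hj, hj0⟩ : ∃ j < k, N.filter (fun u => j ∈ A u) = ∅ := by
    by_contra! hcon
    have : ∑ i ∈ Finset.range k, 2 ≤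
        ∑ i ∈ Finset.range k, (N.filter (fun u => i ∈ A u)).card := by
      refine Finset.sum_le_sum fun i hi => ?_
      have h1 := hex i (Finset.mem_range.1 hi)
      have h2 := Finset.card_pos.2 (hcon i (Finset.mem_range.1 hi))
      omega
    simp at this
    omega
  obtain ⟨i, hi, hi3⟩ : ∃ i < k, 3 ≤ (N.filter (fun u => i ∈ A u)).card := by
    by_contra! hcon
    have : 2 ∣ ∑ i ∈ Finset.range k, (N.filter (fun u => i ∈ A u)).card := by
      refine Finset.dvd_sum fun i hi => ?_
      have h1 := hex i (Finset.mem_range.1 hi)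
      have h2 := hcon i (Finset.mem_range.1 hi)
      interval_cases (N.filter (fun u => i ∈ A u)).card <;> simp_all
    omega
  have hij : i ≠ j := by
    rintro rfl
    rw [hj0] at hi3
    simp at hi3
  obtain ⟨u, hu⟩ := Finset.card_pos.1 (by omega : 0 < (N.filter (fun u => i ∈ A u)).card)
  rw [Finset.mem_filter] at hu
  obtain ⟨C, huC, hCi, hCj, hC⟩ := orbit_lemma (σ i) (σ j) (hσ.inv i) (hσ.inv j) u
    (hA.fix u hu.1 i hu.2)
  -- some element of X_i is outside C
  obtain ⟨w, hw, hwC⟩ : ∃ w ∈ N.filter (fun u => i ∈ A u), w ∉ C := by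
    by_contra! hcon
    have h1 : 2 ≤ ((N.filter (fun u => i ∈ A u)).erase u).card := by
      rw [Finset.card_erase_of_mem (Finset.mem_filter.2 hu)]; omega
    obtain ⟨x, hx, y, hy, hxy⟩ := Finset.one_lt_card.1 h1
    rw [Finset.mem_erase] at hx hy
    have hx' := Finset.mem_filter.1 hx.2
    have hy' := Finset.mem_filter.1 hy.2
    exact hxy (hC x (hcon x hx.2) y (hcon y hy.2) (hA.fix x hx'.1 i hx'.2)
      (hA.fix y hy'.1 i hy'.2) hx.1 hy.1)
  rw [Finset.mem_filter] at hw
  let σ' : ℕ → V → V := fun l x => if x ∈ C then σ (Equiv.swap i j l) x else σ l x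
  let A' : V → Finset ℕ := fun x => if x ∈ C then (A x).map (Equiv.swap i j).toEmbedding else A x
  have hA'mem : ∀ x l, l ∈ A' x ↔ (if x ∈ C then Equiv.swap i j l ∈ A x else l ∈ A x) := by
    intro x l
    by_cases hx : x ∈ C
    · simp only [A', hx, if_true, Finset.mem_map_equiv, Equiv.symm_swap]
    · simp only [A', hx, if_false]
  have hA'card : ∀ x, (A' x).card = (A x).card := by
    intro x
    by_cases hx : x ∈ C
    · simp only [A', hx, if_true, Finset.card_map]
    · simp only [A', hx, if_false]
  have hσ' : GoodCol k σ' K := kempe_swap hσ i j hi hj C hCi hCj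
  have hA' : GoodMiss k σ' N u0 A' := by
    refine ⟨?_, ?_, ?_, ?_⟩
    · intro x hx l hl
      rw [hA'mem] at hl
      split_ifs at hl
      · have := hA.lt x hx _ hl
        rw [Equiv.swap_apply_def] at this
        split_ifs at this <;> omega
      · exact hA.lt x hx _ hl
    · intro x hx l hl
      rw [hA'mem] at hl
      simp only [σ']
      split_ifs at hl ⊢
      · exact hA.fix x hx _ hl
      · exact hA.fix x hx _ hl
    · rw [hA'card, hA.one]
    · intro x hx hne
      rw [hA'card, hA.two x hx hne]
  refine ih _ ?_ σ' A' hσ' hA' rfl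
  rw [← hm]
  apply Finset.card_lt_card
  rw [Finset.ssubset_iff_of_subset]
  · refine ⟨j, by simp only [Finset.mem_filter, Finset.mem_range]; exact ⟨hj, hj0⟩, ?_⟩
    intro hcon
    have h2 := (Finset.mem_filter.1 hcon).2
    have : u ∈ N.filter (fun u => j ∈ A' u) := by
      rw [Finset.mem_filter, hA'mem]
      simp [huC, hu.1, hu.2]
    rw [h2] at this
    simp at this
  · intro l hl
    rw [Finset.mem_filter] at hl ⊢
    refine ⟨hl.1, ?_⟩
    by_cases hlj : l = j
    · rw [hlj, hj0]
    by_cases hli : l = i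
    · exfalso
      have : w ∈ N.filter (fun u => l ∈ A' u) := by
        rw [Finset.mem_filter, hA'mem, hli]
        simp [hwC, hw.1, hw.2]
      rw [hl.2] at this
      simp at this
    rw [← hl.2]
    refine Finset.filter_congr fun x _ => ?_
    rw [hA'mem, Equiv.swap_apply_of_ne_of_ne hli hlj]
    simp

lemma sdr {V : Type*} [Finite V] [DecidableEq V] : ∀ (k : ℕ) (K : V → V → Prop) (N : Finset V)
    (u0 : V) (σ : ℕ → V → V), GoodCol k σ K → N.card ≤ k →
    (∀ u ∈ N, 1 ≤ ((Finset.range k).filter (fun i => σ i u = u)).card) →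
    (∀ u ∈ N, u ≠ u0 → 2 ≤ ((Finset.range k).filter (fun i => σ i u = u)).card) →
    ∃ (σ' : ℕ → V → V) (f : V → ℕ), GoodCol k σ' K ∧ Set.InjOn f N ∧
      ∀ u ∈ N, f u < k ∧ σ' (f u) u = u := by
  classical
  intro k
  induction k with
  | zero =>
    intro K N u0 σ hσ hN _ _
    have : N = ∅ := Finset.card_eq_zero.1 (by omega)
    subst this
    exact ⟨σ, fun _ => 0, hσ, by simp, by simp⟩
  | succ k ih =>
    intro K N u1 σ hσ hN h1 h2
    rcases N.eq_empty_or_nonempty with rfl | ⟨y, hy⟩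
    · exact ⟨σ, fun _ => 0, hσ, by simp, by simp⟩
    obtain ⟨u0, hu0, h2⟩ : ∃ u0 ∈ N, ∀ u ∈ N, u ≠ u0 →
        2 ≤ ((Finset.range (k+1)).filter (fun i => σ i u = u)).card := by
      by_cases h : u1 ∈ N
      · exact ⟨u1, h, h2⟩
      · exact ⟨y, hy, fun u hu _ => h2 u hu (fun e => h (e ▸ hu))⟩
    have hA : ∀ u, ∃ B : Finset ℕ, u ∈ N →
        B ⊆ (Finset.range (k+1)).filter (fun i => σ i u = u) ∧
          B.card = if u = u0 then 1 else 2 := by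
      intro u
      by_cases hu : u ∈ N
      · have : (if u = u0 then 1 else 2) ≤
            ((Finset.range (k+1)).filter (fun i => σ i u = u)).card := by
          split_ifs with h
          · exact h1 u hu
          · exact h2 u hu h
        obtain ⟨B, hB⟩ := Finset.exists_subset_card_eq this
        exact ⟨B, fun _ => hB⟩
      · exact ⟨∅, fun h => absurd h hu⟩
    choose A hA using hA
    have hGM : GoodMiss (k+1) σ N u0 A := by
      refine ⟨?_, ?_, ?_, ?_⟩
      · intro u hu i hi
        simpa using (Finset.mem_filter.1 ((hA u hu).1 hi)).1
      · intro u hu i hi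
        exact (Finset.mem_filter.1 ((hA u hu).1 hi)).2
      · simpa using (hA u0 hu0).2
      · intro u hu hne
        simpa [hne] using (hA u hu).2
    obtain ⟨σ1, A1, hσ1, hA1, i, hi, hi1⟩ := balance (k+1) K N u0 hu0 hN _ σ A hσ hGM rfl
    obtain ⟨x, hx⟩ := Finset.card_eq_one.1 hi1
    have hxN : x ∈ N ∧ i ∈ A1 x := by
      rw [← Finset.mem_filter (s := N) (p := fun u => i ∈ A1 u), hx]; simp
    -- rename color i to k
    let e := Equiv.swap i k
    have hek : e k = i := by simp [e]
    have he : ∀ l, l < k + 1 → e l < k + 1 := by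
      intro l hl
      simp only [e]
      rw [Equiv.swap_apply_def]; split_ifs <;> omega
    have hee : ∀ l, e (e l) = l := fun l => Equiv.swap_apply_self i k l
    let σ2 : ℕ → V → V := fun l => σ1 (e l)
    have hσ2 : GoodCol (k+1) σ2 K := by
      refine ⟨fun l => hσ1.inv _, ?_, ?_⟩
      · intro u w huw
        rw [hσ1.un u w huw]
        constructor
        · rintro ⟨l, hl, h⟩
          exact ⟨e l, he l hl, by simp only [σ2, hee]; exact h⟩
        · rintro ⟨l, hl, h⟩
          exact ⟨e l, he l hl, h⟩
      · intro a ha b hb u h h'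
        exact e.injective (hσ1.dis _ (he a ha) _ (he b hb) u h h')
    let K' : V → V → Prop := fun u w => ∃ l < k, σ2 l u = w
    have hσ2' : GoodCol k σ2 K' :=
      ⟨hσ2.inv, fun u w _ => Iff.rfl, fun a ha b hb => hσ2.dis a (by omega) b (by omega)⟩
    have hcard : ∀ u ∈ N.erase x, (A1 u).card ≤
        ((Finset.range k).filter (fun l => σ2 l u = u)).card := by
      intro u hu
      rw [Finset.mem_erase] at hu
      have hiu : i ∉ A1 u := by
        intro h
        have : u ∈ N.filter (fun u => i ∈ A1 u) := Finset.mem_filter.2 ⟨hu.2, h⟩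
        rw [hx] at this
        exact hu.1 (Finset.mem_singleton.1 this)
      rw [← Finset.card_map e.toEmbedding]
      apply Finset.card_le_card
      intro l hl
      have hl' : e l ∈ A1 u := by
        rw [Finset.mem_map_equiv] at hl
        simpa [e] using hl
      have hlt : l < k + 1 := by
        have := he _ (hA1.lt u hu.2 _ hl')
        rwa [hee] at this
      have hne : l ≠ k := by
        rintro rfl
        rw [hek] at hl'
        exact hiu hl'
      rw [Finset.mem_filter, Finset.mem_range]
      exact ⟨by omega, hA1.fix u hu.2 _ hl'⟩
    obtain ⟨σ3, f, hσ3, hf, hf2⟩ := ih K' (N.erase x) u0 σ2 hσ2'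
      (by rw [Finset.card_erase_of_mem hxN.1]; omega)
      (by
        intro u hu
        refine le_trans ?_ (hcard u hu)
        by_cases h : u = u0
        · rw [h, hA1.one]
        · rw [hA1.two u (Finset.mem_of_mem_erase hu) h]; omega)
      (by
        intro u hu h
        refine le_trans ?_ (hcard u hu)
        rw [hA1.two u (Finset.mem_of_mem_erase hu) h])
    refine ⟨fun l => if l = k then σ2 k else σ3 l, fun u => if u = x then k else f u,
      ⟨?_, ?_, ?_⟩, ?_, ?_⟩
    · intro l
      by_cases h : l = k
      · simp only [h, if_true]; exact hσ2.inv k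
      · simp only [h, if_false]; exact hσ3.inv l
    · intro u w huw
      rw [hσ2.un u w huw]
      have hK := hσ3.un u w huw
      constructor
      · rintro ⟨l, hl, h⟩
        by_cases hlk : l = k
        · exact ⟨k, by omega, by simpa [hlk] using h⟩
        · obtain ⟨l', hl', h'⟩ := hK.1 ⟨l, by omega, h⟩
          exact ⟨l', by omega, by simpa [hl'.ne] using h'⟩
      · rintro ⟨l, hl, h⟩
        by_cases hlk : l = k
        · exact ⟨k, by omega, by simpa [hlk] using h⟩
        · obtain ⟨l', hl', h'⟩ := hK.2 ⟨l, by omega, by simpa [hlk] using h⟩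
          exact ⟨l', by omega, h'⟩
    · have aux : ∀ a < k, ∀ u, σ3 a u = σ2 k u → σ2 k u ≠ u → False := by
        intro a ha u h hne
        obtain ⟨l, hl, h'⟩ := (hσ3.un u (σ2 k u) hne.symm).2 ⟨a, ha, h⟩
        have := hσ2.dis l (by omega) k (by omega) u h' (by rwa [h'])
        omega
      intro a ha b hb u
      by_cases hak : a = k <;> by_cases hbk : b = k <;> simp only [hak, hbk, if_true, if_false]
      · simp
      · intro h hne
        exact (aux b (by omega) u h.symm hne).elim
      · intro h hne
        exact (aux a (by omega) u h (by rwa [← h])).elim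
      · exact hσ3.dis a (by omega) b (by omega) u
    · intro a ha b hb
      have ha' : a ∈ N := ha
      have hb' : b ∈ N := hb
      by_cases hax : a = x <;> by_cases hbx : b = x <;> simp only [hax, hbx, if_true, if_false]
      · simp
      · intro h
        have := (hf2 b (Finset.mem_erase.2 ⟨hbx, hb'⟩)).1
        omega
      · intro h
        have := (hf2 a (Finset.mem_erase.2 ⟨hax, ha'⟩)).1
        omega
      · intro h
        exact hf (by simpa using ⟨ha', hax⟩) (by simpa using ⟨hb', hbx⟩) h
    · intro u hu
      by_cases hux : u = x
      · simp only [hux, if_true]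
        refine ⟨by omega, ?_⟩
        simp only [σ2, hek]
        exact hA1.fix x hxN.1 i hxN.2
      · have := hf2 u (Finset.mem_erase.2 ⟨hux, hu⟩)
        simp only [hux, if_false, this.1.ne]
        exact ⟨by omega, this.2⟩

end VizingPart

section MainPart

lemma vizing_aux {V : Type*} [Fintype V] [DecidableEq V] (G : SimpleGraph V)
    [DecidableRel G.Adj] (D : ℕ)
    (hD : ∀ v, (Finset.univ.filter (fun w => G.Adj v w)).card ≤ D) (S : Finset V) :
    ∃ σ : ℕ → V → V, GoodCol (D + 1) σ (fun u w => G.Adj u w ∧ u ∈ S ∧ w ∈ S) := by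
  classical
  induction S using Finset.induction_on with
  | empty =>
    refine ⟨fun _ => id, fun _ _ => rfl, ?_, ?_⟩
    · intro u w huw
      simp [huw]
    · intro i _ j _ u _ h
      simp at h
  | insert v S hv ih =>
    obtain ⟨σ, hσ⟩ := ih
    let N := S.filter (fun w => G.Adj v w)
    have hNv : v ∉ N := fun h => hv (Finset.mem_filter.1 h).1
    have hN : N.card ≤ D := by
      refine le_trans (Finset.card_le_card ?_) (hD v)
      intro w hw
      simpa using (Finset.mem_filter.1 hw).2
    have hmiss : ∀ u ∈ N, 2 ≤ ((Finset.range (D+1)).filter (fun i => σ i u = u)).card := by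
      intro u hu
      have hu' := Finset.mem_filter.1 hu
      have hsplit := Finset.card_filter_add_card_filter_not (s := Finset.range (D+1))
        (fun i => σ i u = u)
      rw [Finset.card_range] at hsplit
      have h1 : ((Finset.range (D+1)).filter (fun i => ¬ σ i u = u)).card ≤
          ((Finset.univ.filter (fun w => G.Adj u w)).erase v).card := by
        refine Finset.card_le_card_of_injOn (fun i => σ i u) ?_ ?_
        · intro i hi
          simp only [Finset.coe_filter, Set.mem_ofPred_eq, Finset.mem_range] at hi
          have := (hσ.un u (σ i u) (Ne.symm hi.2)).2 ⟨i, hi.1, rfl⟩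
          simp only [Finset.coe_erase, Finset.coe_filter, Finset.mem_univ, true_and,
            Set.mem_sdiff, Set.mem_ofPred_eq, Set.mem_singleton_iff]
          exact ⟨this.1, fun e => hv (e ▸ this.2.2)⟩
        · intro i hi j hj hij
          simp only [Finset.coe_filter, Set.mem_ofPred_eq, Finset.mem_range] at hi hj
          exact hσ.dis i hi.1 j hj.1 u hij hi.2
      have hmem : v ∈ Finset.univ.filter (fun w => G.Adj u w) := by
        simpa using hu'.2.symm
      rw [Finset.card_erase_of_mem hmem] at h1
      have h2 := hD u
      have h3 := Finset.card_pos.2 ⟨v, hmem⟩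
      omega
    obtain ⟨τ, f, hτ, hf, hf2⟩ := sdr (D+1) _ N v σ hσ (by omega)
      (fun u hu => le_trans (by omega) (hmiss u hu)) (fun u hu _ => hmiss u hu)
    have hτv : ∀ i < D + 1, τ i v = v := by
      intro i hi
      by_contra h
      exact hv ((hτ.un v (τ i v) (Ne.symm h)).2 ⟨i, hi, rfl⟩).2.1
    have hg : ∀ i, ∃ x : V, (x ∈ N ∧ f x = i) ∨ (x = v ∧ ∀ y ∈ N, f y ≠ i) := by
      intro i
      by_cases h : ∃ x ∈ N, f x = i
      · obtain ⟨x, hx⟩ := h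
        exact ⟨x, Or.inl hx⟩
      · push Not at h
        exact ⟨v, Or.inr ⟨rfl, h⟩⟩
    choose g hg using hg
    have hgfix : ∀ i < D + 1, τ i (g i) = g i := by
      intro i hi
      rcases hg i with ⟨h, e⟩ | ⟨h, _⟩
      · have := (hf2 _ h).2
        rwa [e] at this
      · rw [h]; exact hτv i hi
    let ρ : ℕ → V → V := fun i x => if i < D + 1 then
      (if x = v then g i else if x = g i then v else τ i x) else x
    have hρ : ∀ i < D + 1, ∀ x, ρ i x = if x = v then g i else if x = g i then v else τ i x := by
      intro i hi x
      simp only [ρ, hi, if_true]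
    have hρv : ∀ i < D + 1, ρ i v = g i := by
      intro i hi
      rw [hρ i hi]; simp
    have hρo : ∀ i < D + 1, ∀ x, x ≠ v → x ≠ g i → ρ i x = τ i x := by
      intro i hi x h1 h2
      rw [hρ i hi]; simp [h1, h2]
    have hρg : ∀ i < D + 1, ρ i (g i) = v := by
      intro i hi
      rw [hρ i hi]
      by_cases h : g i = v <;> simp [h]
    -- injectivity of `g` off the default
    have hginj : ∀ i j, g i = g j → g i ≠ v → i = j := by
      intro i j h hne
      rcases hg i with ⟨_, e⟩ | ⟨h', _⟩
      · rcases hg j with ⟨_, e'⟩ | ⟨h'', _⟩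
        · rw [← e, ← e', h]
        · exact absurd (h.trans h'') hne
      · exact absurd h' hne
    have hne : ∀ i < D + 1, ∀ x, x ≠ v → x ≠ g i → τ i x ≠ v ∧ τ i x ≠ g i := by
      intro i hi x h1 h2
      constructor
      · intro h
        apply h1
        rw [← hτ.inv i x, h, hτv i hi]
      · intro h
        apply h2
        rw [← hτ.inv i x, h, hgfix i hi]
    refine ⟨ρ, ?_, ?_, ?_⟩
    · intro i x
      by_cases hi : i < D + 1
      · by_cases h1 : x = v
        · rw [h1, hρv i hi, hρg i hi]
        by_cases h2 : x = g i
        · rw [h2, hρg i hi, hρv i hi]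
        obtain ⟨h3, h4⟩ := hne i hi x h1 h2
        rw [hρo i hi x h1 h2, hρo i hi _ h3 h4, hτ.inv]
      · simp only [ρ, hi, if_false]
    · intro u w huw
      have hvN : ∀ w, w ≠ v → ((G.Adj v w ∧ w ∈ insert v S) ↔ w ∈ N) := by
        intro w hw
        simp only [N, Finset.mem_filter, Finset.mem_insert, hw, false_or]
        exact and_comm
      have hNg : ∀ w, w ≠ v → (w ∈ N ↔ ∃ i < D + 1, g i = w) := by
        intro w hw
        constructor
        · intro h
          refine ⟨f w, (hf2 w h).1, ?_⟩
          rcases hg (f w) with ⟨h', e⟩ | ⟨_, h'⟩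
          · exact hf h' h e
          · exact absurd rfl (h' w h)
        · rintro ⟨i, hi, e⟩
          rcases hg i with ⟨h', _⟩ | ⟨h', _⟩
          · rwa [e] at h'
          · exact absurd (e.symm.trans h') hw
      by_cases hu : u = v
      · subst hu
        have h1 := hvN w huw.symm
        have h2 := hNg w huw.symm
        constructor
        · rintro ⟨h, _, h'⟩
          obtain ⟨i, hi, e⟩ := h2.1 (h1.1 ⟨h, h'⟩)
          exact ⟨i, hi, by rw [hρv i hi, e]⟩
        · rintro ⟨i, hi, e⟩
          rw [hρv i hi] at e
          have := h1.2 (h2.2 ⟨i, hi, e⟩)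
          exact ⟨this.1, Finset.mem_insert_self _ _, this.2⟩
      by_cases hw : w = v
      · subst hw
        have h1 := hvN u huw
        have h2 := hNg u huw
        constructor
        · rintro ⟨h, h', _⟩
          obtain ⟨i, hi, e⟩ := h2.1 (h1.1 ⟨h.symm, h'⟩)
          exact ⟨i, hi, by rw [← e, hρg i hi]⟩
        · rintro ⟨i, hi, e⟩
          have hug : g i = u := by
            by_contra hcon
            rw [hρo i hi u huw (Ne.symm hcon)] at e
            exact (hne i hi u huw (Ne.symm hcon)).1 e
          have := h1.2 (h2.2 ⟨i, hi, hug⟩)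
          exact ⟨this.1.symm, this.2, Finset.mem_insert_self _ _⟩
      · have h1 := hτ.un u w huw
        simp only [Finset.mem_insert, hu, hw, false_or]
        rw [h1]
        constructor
        · rintro ⟨i, hi, e⟩
          refine ⟨i, hi, ?_⟩
          have : u ≠ g i := by
            intro h
            apply huw
            rw [← e, h, hgfix i hi]
          rw [hρo i hi u hu this, e]
        · rintro ⟨i, hi, e⟩
          refine ⟨i, hi, ?_⟩
          have : u ≠ g i := by
            intro h
            apply hw
            rw [← e, h, hρg i hi]
          rwa [hρo i hi u hu this] at e
    · intro i hi j hj x h hx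
      by_cases hxv : x = v
      · subst hxv
        rw [hρv i hi] at h hx
        rw [hρv j hj] at h
        exact hginj i j h hx
      by_cases h1 : x = g i <;> by_cases h2 : x = g j
      · exact hginj i j (h1.symm.trans h2) (fun e => hxv (h1.trans e))
      · rw [hρo j hj x hxv h2] at h
        rw [h1, hρg i hi] at h
        exact absurd (h1 ▸ h.symm) (hne j hj x hxv h2).1
      · rw [hρo i hi x hxv h1] at h
        rw [h2, hρg j hj] at h
        exact absurd (h2 ▸ h) (hne i hi x hxv h1).1
      · rw [hρo i hi x hxv h1] at h hx
        rw [hρo j hj x hxv h2] at h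
        exact hτ.dis i hi j hj x h hx

/-- Vizing's theorem. -/
lemma vizing {V : Type*} [Fintype V] [DecidableEq V] (G : SimpleGraph V)
    [DecidableRel G.Adj] (D : ℕ)
    (hD : ∀ v, (Finset.univ.filter (fun w => G.Adj v w)).card ≤ D) :
    ∃ c : Sym2 V → ℕ, IsProperEdgeColoring G c ∧ ∀ e ∈ G.edgeSet, c e < D + 1 := by
  classical
  obtain ⟨σ, hσ⟩ := vizing_aux G D hD Finset.univ
  have h : ∀ e : Sym2 V, ∃ i, e ∈ G.edgeSet → i < D + 1 ∧ ∀ u w, s(u, w) = e → σ i u = w := by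
    intro e
    by_cases he : e ∈ G.edgeSet
    · induction e using Sym2.ind with
      | _ a b =>
        obtain ⟨i, hi, e⟩ := (hσ.un a b (G.ne_of_adj he)).1 ⟨he, by simp, by simp⟩
        refine ⟨i, fun _ => ⟨hi, ?_⟩⟩
        intro u w huw
        rcases Sym2.eq_iff.1 huw with ⟨rfl, rfl⟩ | ⟨rfl, rfl⟩
        · exact e
        · rw [← e, hσ.inv]
    · exact ⟨0, fun h => absurd h he⟩
  choose c hc using h
  refine ⟨c, ?_, fun e he => (hc e he).1⟩
  rintro e₁ he₁ e₂ he₂ hne ⟨v, hv1, hv2⟩ heq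
  obtain ⟨a, rfl⟩ := hv1
  obtain ⟨b, rfl⟩ := hv2
  apply hne
  have h1 := (hc _ he₁).2 v a rfl
  have h2 := (hc _ he₂).2 v b rfl
  rw [heq, h2] at h1
  rw [h1]

/-- `G` with the vertices of `S` isolated. -/
def isolate {V : Type*} (G : SimpleGraph V) (S : Finset V) : SimpleGraph V where
  Adj u w := G.Adj u w ∧ u ∉ S ∧ w ∉ S
  symm := ⟨fun _ _ h => ⟨h.1.symm, h.2.2, h.2.1⟩⟩
  loopless := ⟨fun _ h => G.loopless.irrefl _ h.1⟩

lemma color_bound {V W : Type} [Fintype V] [Fintype W] (G : SimpleGraph V) (H : SimpleGraph W)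
    [DecidableRel H.Adj] (hGH : ArrowsTo G H) (S : Finset V) (D : ℕ)
    (hD : ∀ v, ((isolate G S).neighborSet v).ncard ≤ D) :
    H.edgeSet.ncard ≤ H.maxDegree * S.card + D + 1 := by
  classical
  obtain ⟨c0, hc0, hlt⟩ := vizing (isolate G S) D (by
    intro v
    have := hD v
    rw [Set.ncard_eq_toFinset_card'] at this
    convert this using 2
    ext w; simp)
  let en := Fintype.equivFin (Sym2 V)
  let c : Sym2 V → ℕ := fun e => if e ∈ (isolate G S).edgeSet then c0 e else D + 1 + en e
  have hc : IsProperEdgeColoring G c := by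
    intro e₁ he₁ e₂ he₂ hne hv
    by_cases h1 : e₁ ∈ (isolate G S).edgeSet <;> by_cases h2 : e₂ ∈ (isolate G S).edgeSet <;>
      simp only [c, h1, h2, if_true, if_false]
    · exact hc0 e₁ h1 e₂ h2 hne hv
    · have := hlt e₁ h1; omega
    · have := hlt e₂ h2; omega
    · intro h
      apply hne
      apply en.injective
      apply Fin.ext
      omega
  obtain ⟨f, hf, hrain⟩ := hGH c hc
  let T : Finset W := Finset.univ.filter (fun w => f w ∈ S)
  have hT : T.card ≤ S.card :=
    Finset.card_le_card_of_injOn f (fun w hw => by simpa [T] using hw) hf.injOn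
  rw [Set.ncard_eq_toFinset_card']
  have hsplit := Finset.card_filter_add_card_filter_not (s := H.edgeSet.toFinset)
    (fun e => Sym2.map f e ∈ (isolate G S).edgeSet)
  have h1 : (H.edgeSet.toFinset.filter
      (fun e => Sym2.map f e ∈ (isolate G S).edgeSet)).card ≤ D + 1 := by
    rw [← Finset.card_range (D + 1)]
    refine Finset.card_le_card_of_injOn (fun e => c (Sym2.map f e)) ?_ ?_
    · intro e he
      simp only [Finset.coe_filter, Set.mem_ofPred_eq] at he
      simp only [c, he.2, if_true, Finset.coe_range, Set.mem_Iio]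
      exact hlt _ he.2
    · intro e he e' he' h
      simp only [Finset.coe_filter, Set.mem_ofPred_eq, Set.mem_toFinset] at he he'
      exact hrain e he.1 e' he'.1 h
  have h2 : (H.edgeSet.toFinset.filter
      (fun e => ¬ Sym2.map f e ∈ (isolate G S).edgeSet)).card ≤ T.card * H.maxDegree := by
    refine le_trans (Finset.card_le_card (t := T.biUnion (fun w => H.incidenceFinset w)) ?_)
      (Finset.card_biUnion_le_card_mul _ _ _ ?_)
    · intro e he
      simp only [Finset.mem_filter, Set.mem_toFinset] at he
      obtain ⟨he1, he2⟩ := he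
      induction e using Sym2.ind with
      | _ a b =>
        have hab : H.Adj a b := he1
        have h3 : ¬ (G.Adj (f a) (f b) ∧ f a ∉ S ∧ f b ∉ S) := he2
        have h4 := f.map_adj hab
        rw [Finset.mem_biUnion]
        by_cases ha : f a ∈ S
        · refine ⟨a, by simpa [T] using ha, ?_⟩
          simp [SimpleGraph.mk'_mem_incidenceSet_iff, hab]
        · have hb : f b ∈ S := by
            by_contra hb
            exact h3 ⟨h4, ha, hb⟩
          refine ⟨b, by simpa [T] using hb, ?_⟩
          simp [SimpleGraph.mk'_mem_incidenceSet_iff, hab]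
    · intro w _
      rw [SimpleGraph.card_incidenceFinset_eq_degree]
      exact H.degree_le_maxDegree w
  have h3 : T.card * H.maxDegree ≤ H.maxDegree * S.card := by
    rw [Nat.mul_comm]; exact Nat.mul_le_mul_left _ hT
  omega

lemma edge_count {V W : Type} [Fintype V] [Fintype W] (G : SimpleGraph V) (H : SimpleGraph W)
    [DecidableRel H.Adj] (hGH : ArrowsTo G H) : ∀ (r : ℕ) (S : Finset V),
    Fintype.card V - S.card = r →
    (H.edgeSet.ncard - 1 - H.maxDegree * S.card) ^ 2 ≤
      2 * H.maxDegree * (isolate G S).edgeSet.ncard := by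
  classical
  intro r
  induction r using Nat.strong_induction_on with
  | _ r ih =>
  intro S hS
  set y := H.edgeSet.ncard - 1 - H.maxDegree * S.card with hy
  rcases Nat.eq_zero_or_pos y with h0 | hpos
  · rw [h0]; simp
  obtain ⟨v, hv⟩ : ∃ v, y ≤ ((isolate G S).neighborSet v).ncard := by
    by_contra! hcon
    have := color_bound G H hGH S (y - 1) (fun v => by have := hcon v; omega)
    omega
  have hvS : v ∉ S := by
    intro h
    have : (isolate G S).neighborSet v = ∅ := by
      ext w
      simp only [SimpleGraph.mem_neighborSet, Set.mem_empty_iff_false, iff_false]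
      exact fun h' => h'.2.1 h
    rw [this, Set.ncard_empty] at hv
    omega
  have hcard : (insert v S).card = S.card + 1 := Finset.card_insert_of_notMem hvS
  have hle : (insert v S).card ≤ Fintype.card V := Finset.card_le_univ _
  have hI := ih _ (by omega) (insert v S) rfl
  rw [hcard] at hI
  have hE : ((isolate G S).neighborSet v).ncard + (isolate G (insert v S)).edgeSet.ncard ≤
      (isolate G S).edgeSet.ncard := by
    have hinj : Function.Injective (fun w : V => s(v, w)) := fun a b h =>
      Sym2.congr_right.1 h
    rw [← Set.ncard_image_of_injective _ hinj, ← Set.ncard_union_eq]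
    · refine Set.ncard_le_ncard ?_ (Set.toFinite _)
      rintro e (⟨w, hw, rfl⟩ | he)
      · exact hw
      · induction e using Sym2.ind with
        | _ a b =>
          have he' : G.Adj a b ∧ a ∉ insert v S ∧ b ∉ insert v S := he
          simp only [Finset.mem_insert, not_or] at he'
          exact ⟨he'.1, he'.2.1.2, he'.2.2.2⟩
    · rw [Set.disjoint_left]
      rintro e ⟨w, hw, rfl⟩ he
      have he' : G.Adj v w ∧ v ∉ insert v S ∧ w ∉ insert v S := he
      exact he'.2.1 (Finset.mem_insert_self _ _)
  set Δ := H.maxDegree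
  have hy2 : H.edgeSet.ncard - 1 - Δ * (S.card + 1) = y - Δ := by
    rw [hy, Nat.mul_add, Nat.mul_one]; omega
  rw [hy2] at hI
  have hmul : 2 * Δ * (y + (isolate G (insert v S)).edgeSet.ncard) ≤
      2 * Δ * (isolate G S).edgeSet.ncard := Nat.mul_le_mul_left _ (by omega)
  refine le_trans ?_ hmul
  rcases le_total Δ y with h | h
  · obtain ⟨z, hz⟩ := Nat.exists_eq_add_of_le h
    have : y - Δ = z := by omega
    rw [this] at hI
    rw [hz]
    nlinarith
  · nlinarith

/-- Rainbow cliques in properly colored large complete graphs. -/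
lemma rainbow_clique (M n : ℕ) (hn : M + M * (M + 1).choose 2 < n) (c : Sym2 (Fin n) → ℕ)
    (hc : IsProperEdgeColoring (⊤ : SimpleGraph (Fin n)) c) : ∀ m ≤ M,
    ∃ B : Finset (Fin n), B.card = m ∧ ∀ e₁ ∈ B.sym2, ∀ e₂ ∈ B.sym2, ¬ e₁.IsDiag →
      ¬ e₂.IsDiag → c e₁ = c e₂ → e₁ = e₂ := by
  classical
  intro m
  induction m with
  | zero => intro _; exact ⟨∅, by simp, by simp⟩
  | succ m ih =>
    intro hm
    obtain ⟨B, hB, hr⟩ := ih (by omega)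
    let F : Finset (Fin n) := B ∪ (B ×ˢ B.sym2).biUnion (fun p =>
      Finset.univ.filter (fun x => x ≠ p.1 ∧ c s(x, p.1) = c p.2))
    have hF : F.card < n := by
      refine lt_of_le_of_lt ?_ hn
      refine le_trans (Finset.card_union_le _ _) ?_
      refine Nat.add_le_add (by omega) ?_
      refine le_trans (Finset.card_biUnion_le_card_mul _ _ 1 ?_) ?_
      · intro p _
        rw [Finset.card_le_one]
        intro x hx y hy
        simp only [Finset.mem_filter, Finset.mem_univ, true_and] at hx hy
        by_contra hxy
        refine hc s(x, p.1) ?_ s(y, p.1) ?_ ?_ ⟨p.1, by simp, by simp⟩ (hx.2.trans hy.2.symm)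
        · simpa using hx.1
        · simpa using hy.1
        · intro h
          apply hxy
          exact Sym2.congr_left.1 h
      · rw [Finset.card_product, Finset.card_sym2, hB, Nat.mul_one]
        exact Nat.mul_le_mul (by omega) (Nat.choose_le_choose 2 (by omega))
    obtain ⟨x, hx⟩ : ∃ x, x ∉ F := by
      by_contra! h
      have : F = Finset.univ := Finset.eq_univ_iff_forall.2 h
      rw [this] at hF
      simp at hF
    have hxB : x ∉ B := fun h => hx (Finset.mem_union_left _ h)
    have hxc : ∀ b ∈ B, ∀ e ∈ B.sym2, c s(x, b) ≠ c e := by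
      intro b hb e he h
      apply hx
      refine Finset.mem_union_right _ (Finset.mem_biUnion.2 ⟨(b, e), ?_, ?_⟩)
      · exact Finset.mem_product.2 ⟨hb, he⟩
      · simp only [Finset.mem_filter, Finset.mem_univ, true_and]
        exact ⟨fun e => hxB (e ▸ hb), h⟩
    have hcases : ∀ e ∈ (insert x B).sym2, ¬ e.IsDiag → e ∈ B.sym2 ∨ ∃ b ∈ B, e = s(x, b) := by
      intro e he hd
      induction e using Sym2.ind with
      | _ a b =>
        rw [Finset.mk_mem_sym2_iff, Finset.mem_insert, Finset.mem_insert] at he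
        rcases he with ⟨rfl | ha, rfl | hb⟩
        · simp at hd
        · exact Or.inr ⟨b, hb, rfl⟩
        · exact Or.inr ⟨a, ha, Sym2.eq_swap⟩
        · exact Or.inl (Finset.mk_mem_sym2_iff.2 ⟨ha, hb⟩)
    refine ⟨insert x B, by rw [Finset.card_insert_of_notMem hxB, hB], ?_⟩
    intro e₁ he₁ e₂ he₂ hd₁ hd₂ heq
    rcases hcases e₁ he₁ hd₁ with h1 | ⟨b1, hb1, rfl⟩ <;>
      rcases hcases e₂ he₂ hd₂ with h2 | ⟨b2, hb2, rfl⟩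
    · exact hr e₁ h1 e₂ h2 hd₁ hd₂ heq
    · exact absurd heq.symm (hxc b2 hb2 e₁ h1)
    · exact absurd heq (hxc b1 hb1 e₂ h2)
    · by_contra hne
      exact hc _ (by simpa using hd₁) _ (by simpa using hd₂) hne ⟨x, by simp, by simp⟩ heq

lemma exists_arrows {W : Type} [Fintype W] (H : SimpleGraph W) :
    ∃ (n : ℕ) (G : SimpleGraph (Fin n)), ArrowsTo G H := by
  classical
  set M := Fintype.card W with hM
  refine ⟨M + M * (M + 1).choose 2 + 1, ⊤, ?_⟩
  intro c hc
  obtain ⟨B, hB, hr⟩ := rainbow_clique M _ (Nat.lt_succ_self _) c hc M le_rfl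
  have e : W ≃ B := Fintype.equivOfCardEq (by rw [Fintype.card_coe, hB])
  have hinj : Function.Injective (fun w => (e w : Fin (M + M * (M + 1).choose 2 + 1))) :=
    fun a b h => e.injective (Subtype.ext h)
  refine ⟨⟨fun w => (e w : Fin _), ?_⟩, hinj, ?_⟩
  · intro a b hab
    rw [SimpleGraph.top_adj]
    exact fun h => hab.ne (hinj h)
  · have hmem : ∀ x ∈ H.edgeSet, Sym2.map (fun w => (e w : Fin _)) x ∈ B.sym2 ∧
        ¬ (Sym2.map (fun w => (e w : Fin (M + M * (M + 1).choose 2 + 1))) x).IsDiag := by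
      intro x hx
      induction x using Sym2.ind with
      | _ a b =>
        have hab : H.Adj a b := hx
        rw [Sym2.map_mk]
        constructor
        · exact Finset.mk_mem_sym2_iff.2 ⟨(e a).2, (e b).2⟩
        · rw [Sym2.mk_isDiag_iff]
          exact fun h => hab.ne (hinj h)
    intro e₁ he₁ e₂ he₂ h
    exact Sym2.map.injective hinj
      (hr _ (hmem e₁ he₁).1 _ (hmem e₂ he₂).1 (hmem e₁ he₁).2 (hmem e₂ he₂).2 h)

end MainPart

theorem stmt_6 {W : Type} [Fintype W] (H : SimpleGraph W) [DecidableRel H.Adj]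
    (hk : 2 ≤ H.edgeSet.ncard) :
    ((H.edgeSet.ncard : ℝ) - 1) ^ 2 / (2 * (H.maxDegree : ℝ)) ≤ (ARs H : ℝ) := by
  have hne : {m | ∃ (n : ℕ) (G : SimpleGraph (Fin n)),
      ArrowsTo G H ∧ G.edgeSet.ncard = m}.Nonempty := by
    obtain ⟨n, G, h⟩ := exists_arrows H
    exact ⟨_, n, G, h, rfl⟩
  obtain ⟨n, G, hG, hm⟩ := Nat.sInf_mem hne
  have hm' : G.edgeSet.ncard = ARs H := hm
  have h := edge_count G H hG _ ∅ rfl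
  have hiso : isolate G ∅ = G := by
    ext u w
    simp [isolate]
  rw [hiso, hm', Finset.card_empty, Nat.mul_zero, Nat.sub_zero] at h
  have hR : ((H.edgeSet.ncard : ℝ) - 1) ^ 2 ≤ 2 * (H.maxDegree : ℝ) * (ARs H : ℝ) := by
    have h' : (((H.edgeSet.ncard - 1) ^ 2 : ℕ) : ℝ) ≤ ((2 * H.maxDegree * ARs H : ℕ) : ℝ) := by
      exact_mod_cast h
    rw [Nat.cast_pow, Nat.cast_sub (by omega)] at h'
    push_cast at h'
    exact h'
  rcases Nat.eq_zero_or_pos H.maxDegree with h0 | hpos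
  · rw [h0]; simp
  · have : (0 : ℝ) < 2 * (H.maxDegree : ℝ) := by positivity
    rw [div_le_iff₀ this]
    linarith
end

section
/- Let H be a graph with k ≥ 1 edges and maximum degree Δ whose chromatic index χ′(H) (the minimum number of colors in a proper edge coloring of H) equals Δ. Then AR_s(H) ≥ k(k+1)/(2Δ). -/
open SimpleGraph

/-- The chromatic index of `H`: the minimum number of colors in a proper edge
coloring of `H`. -/
noncomputable def chromIndex {W : Type*} (H : SimpleGraph W) : ℕ :=
  sInf {m | ∃ c : Sym2 W → ℕ, IsProperEdgeColoring H c ∧ ∀ e ∈ H.edgeSet, c e < m}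

/-- One recolouring step. -/
lemma step_aux {n : ℕ} {W : Type} [Fintype W] (G : SimpleGraph (Fin n)) (H : SimpleGraph W)
    (hG : ArrowsTo G H) (D : ℕ) (d : Sym2 W → ℕ) (hd : IsProperEdgeColoring H d)
    (hdD : ∀ e ∈ H.edgeSet, d e < D) (i : ℕ) (hi : i ≤ H.edgeSet.ncard) :
    ∃ c : Sym2 (Fin n) → ℕ, IsProperEdgeColoring G c ∧
      (∀ e₁ ∈ G.edgeSet, ∀ e₂ ∈ G.edgeSet, i ≤ c e₁ → c e₁ = c e₂ → e₁ = e₂) ∧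
      ∑ j ∈ Finset.range i, (H.edgeSet.ncard - j) ≤ D * {e ∈ G.edgeSet | c e < i}.ncard := by
  classical
  induction i with
  | zero =>
    obtain ⟨c, hc⟩ := Countable.exists_injective_nat (Sym2 (Fin n))
    exact ⟨c, fun e₁ _ e₂ _ h _ h_d => h (hc h_d), fun e₁ _ e₂ _ _ h => hc h, by simp⟩
  | succ i ih =>
    obtain ⟨c, hc, hinj, hsum⟩ := ih (by omega)
    obtain ⟨f, hf, hrb⟩ := hG c hc
    have hfG : ∀ e ∈ H.edgeSet, Sym2.map f e ∈ G.edgeSet := by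
      intro e he
      induction e with
      | _ a b => exact f.map_adj he
    have hfinj : Function.Injective (Sym2.map f) := Sym2.map.injective hf
    set E : Finset (Sym2 W) := H.edgeSet.toFinset with hE
    have hEmem : ∀ e, e ∈ E ↔ e ∈ H.edgeSet := fun e => by simp [hE]
    have hEcard : H.edgeSet.ncard = E.card := by rw [hE, Set.ncard_eq_toFinset_card']
    set R := E.filter (fun e => i ≤ c (Sym2.map f e)) with hR
    have hL : (E.filter (fun e => ¬ i ≤ c (Sym2.map f e))).card ≤ i := by
      have := Finset.card_le_card_of_injOn (s := E.filter (fun e => ¬ i ≤ c (Sym2.map f e)))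
        (t := Finset.range i) (fun e => c (Sym2.map f e))
        (by intro e he; simp at he; simpa using he.2)
        (by
          intro e he e_d he_d h
          simp only [Finset.coe_filter, Set.mem_ofPred_eq, hEmem] at he he_d
          exact hrb e he.1 e_d he_d.1 h)
      simpa using this
    have hRcard : E.card - i ≤ R.card := by
      have := Finset.card_filter_add_card_filter_not (s := E) (fun e => i ≤ c (Sym2.map f e))
      have h_d : R.card = (E.filter (fun e => i ≤ c (Sym2.map f e))).card := by rw [hR]
      have h_dd : R.card + (E.filter (fun e => ¬ i ≤ c (Sym2.map f e))).card = E.card := by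
        rw [← this, h_d]
      omega
    obtain ⟨a, ha⟩ : ∃ a, R.card ≤ D * (R.filter (fun e => d e = a)).card := by
      by_contra! hcon
      have h1 : R.card = ∑ a ∈ Finset.range D, (R.filter (fun e => d e = a)).card := by
        apply Finset.card_eq_sum_card_fiberwise
        intro e he
        have : e ∈ H.edgeSet := (hEmem e).1 (Finset.mem_filter.1 he).1
        simpa using hdD e this
      have h2 : D * R.card = ∑ a ∈ Finset.range D, D * (R.filter (fun e => d e = a)).card := by
        rw [← Finset.mul_sum, ← h1]
      have h3 : 0 < D := by
        have h0 : 0 < R.card := by omega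
        obtain ⟨e, he⟩ := Finset.card_pos.1 h0
        have := hdD e ((hEmem e).1 (Finset.mem_filter.1 he).1)
        omega
      have h4 : ∑ a ∈ Finset.range D, D * (R.filter (fun e => d e = a)).card
          < ∑ a ∈ Finset.range D, R.card :=
        Finset.sum_lt_sum_of_nonempty ⟨0, by simpa using h3⟩ (fun a _ => hcon a)
      simp only [Finset.sum_const, Finset.card_range, smul_eq_mul] at h4
      omega
    set M : Finset (Sym2 (Fin n)) := (R.filter (fun e => d e = a)).image (Sym2.map f) with hM
    have hMcard : M.card = (R.filter (fun e => d e = a)).card :=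
      Finset.card_image_of_injective _ hfinj
    have hMprop : ∀ x ∈ M, x ∈ G.edgeSet ∧ i ≤ c x := by
      intro x hx
      obtain ⟨e, he, rfl⟩ := Finset.mem_image.1 hx
      simp only [hR, Finset.mem_filter, hEmem] at he
      exact ⟨hfG e he.1.1, he.1.2⟩
    have hMdisj : ∀ x ∈ M, ∀ y ∈ M, x ≠ y → ¬ ∃ v, v ∈ x ∧ v ∈ y := by
      intro x hx y hy hxy
      obtain ⟨e, he, rfl⟩ := Finset.mem_image.1 hx
      obtain ⟨e_d, he_d, rfl⟩ := Finset.mem_image.1 hy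
      simp only [hR, Finset.mem_filter, hEmem] at he he_d
      rintro ⟨v, hv, hv_d⟩
      obtain ⟨u, hu, rfl⟩ := Sym2.mem_map.1 hv
      obtain ⟨u_d, hu_d, huu⟩ := Sym2.mem_map.1 hv_d
      have := hf huu
      subst this
      exact hd e he.1.1 e_d he_d.1.1 (fun h => hxy (by rw [h])) ⟨_, hu, hu_d⟩
        (he.2.trans he_d.2.symm)
    refine ⟨fun e => if e ∈ M then i else if c e < i then c e else c e + 1, ?_, ?_, ?_⟩
    · intro x hx y hy hxy hv
      have h1 := hc x hx y hy hxy hv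
      have h2 := hMdisj x
      have h3 := hMdisj y
      by_cases hxM : x ∈ M
      · by_cases hyM : y ∈ M
        · exact absurd hv (hMdisj x hxM y hyM hxy)
        · simp only [hxM, hyM, if_true, if_false]
          split_ifs <;> omega
      · by_cases hyM : y ∈ M
        · simp only [hxM, hyM, if_true, if_false]
          split_ifs <;> omega
        · simp only [hxM, hyM, if_false]
          split_ifs <;> omega
    · intro x hx y hy hix hxy
      have h1 := hinj x hx y hy
      dsimp only at hix hxy
      split_ifs at hix hxy
      all_goals first | omega | exact h1 (by omega) (by omega)
    · have hset : {e ∈ G.edgeSet | (if e ∈ M then i else if c e < i then c e else c e + 1) < i + 1}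
          = {e ∈ G.edgeSet | c e < i} ∪ (M : Set (Sym2 (Fin n))) := by
        ext e
        simp only [Set.mem_ofPred_eq, Set.mem_union, Finset.mem_coe]
        by_cases heM : e ∈ M
        · simp [heM, (hMprop e heM).1]
        · simp only [heM, if_false, or_false]
          apply and_congr_right
          intro _
          split_ifs <;> omega
      rw [hset, Set.ncard_union_eq, Set.ncard_coe_finset, Finset.sum_range_succ, mul_add, hMcard]
      · omega
      · rw [Set.disjoint_left]
        intro e he heM
        have h1 := (hMprop e heM).2
        have h2 := he.2
        omega

/-- Large complete graphs contain rainbow cliques. -/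
lemma clique_aux (s : ℕ) : ∃ N : ℕ, ∀ n, N ≤ n → ∀ c : Sym2 (Fin n) → ℕ,
    IsProperEdgeColoring (⊤ : SimpleGraph (Fin n)) c →
    ∃ S : Finset (Fin n), S.card = s ∧ ∀ x ∈ S, ∀ y ∈ S, ∀ z ∈ S, ∀ w ∈ S, x ≠ y → z ≠ w →
      c s(x, y) = c s(z, w) → s(x, y) = s(z, w) := by
  classical
  induction s with
  | zero => exact ⟨0, fun n _ c _ => ⟨∅, by simp⟩⟩
  | succ s ih =>
    obtain ⟨N, hN⟩ := ih
    refine ⟨N + s + s * (s * s) + 1, fun n hn c hc => ?_⟩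
    obtain ⟨S, hS, hr⟩ := hN n (by omega) c hc
    set B := S ∪ (S ×ˢ (S ×ˢ S)).biUnion
      (fun p => Finset.univ.filter (fun v => v ≠ p.1 ∧ c s(p.1, v) = c s(p.2.1, p.2.2))) with hB
    have hprop : ∀ x v w : Fin n, v ≠ x → w ≠ x → c s(x, v) = c s(x, w) → v = w := by
      intro x v w hv hw h
      by_contra hne
      refine hc s(x, v) (by simpa using hv.symm) s(x, w) (by simpa using hw.symm) ?_
        ⟨x, by simp, by simp⟩ h
      intro h_d
      exact hne (Sym2.congr_right.1 h_d)
    have hBcard : B.card ≤ s + s * (s * s) := by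
      refine (Finset.card_union_le _ _).trans ?_
      have := Finset.card_biUnion_le_card_mul (S ×ˢ (S ×ˢ S))
        (fun p => Finset.univ.filter (fun v => v ≠ p.1 ∧ c s(p.1, v) = c s(p.2.1, p.2.2))) 1
        (by
          intro p _
          rw [Finset.card_le_one]
          intro v hv w hw
          simp only [Finset.mem_filter] at hv hw
          exact hprop p.1 v w hv.2.1 hw.2.1 (hv.2.2.trans hw.2.2.symm))
      simp only [Finset.card_product, hS, mul_one] at this
      omega
    obtain ⟨v, hv⟩ : ∃ v, v ∉ B := by
      by_contra! hcon
      have : B = Finset.univ := Finset.eq_univ_iff_forall.2 hcon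
      rw [this, Finset.card_univ, Fintype.card_fin] at hBcard
      omega
    have hvS : v ∉ S := fun h => hv (Finset.mem_union_left _ h)
    have hbad : ∀ x ∈ S, ∀ y ∈ S, ∀ z ∈ S, c s(x, v) ≠ c s(y, z) := by
      intro x hx y hy z hz h
      apply hv
      apply Finset.mem_union_right
      rw [Finset.mem_biUnion]
      refine ⟨(x, y, z), by simp [hx, hy, hz], ?_⟩
      simp only [Finset.mem_filter, Finset.mem_univ, true_and]
      exact ⟨fun h_d => hvS (h_d ▸ hx), h⟩
    have hvv : ∀ x y, x ≠ v → y ≠ v → c s(x, v) = c s(y, v) → x = y := by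
      intro x y hx hy h
      rw [Sym2.eq_swap, Sym2.eq_swap (a := y)] at h
      exact hprop v x y hx hy h
    refine ⟨insert v S, by rw [Finset.card_insert_of_notMem hvS, hS], ?_⟩
    have hsw : ∀ x y : Fin n, s(x, y) = s(y, x) := fun x y => Sym2.eq_swap
    have hne : ∀ x ∈ S, x ≠ v := fun x hx h => hvS (h ▸ hx)
    intro x hx y hy z hz w hw hxy hzw h
    rw [Finset.mem_insert] at hx hy hz hw
    rcases hx with rfl | hx <;> rcases hy with rfl | hy <;> rcases hz with rfl | hz <;>
      rcases hw with rfl | hw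
    all_goals first
      | exact absurd rfl hxy
      | exact absurd rfl hzw
      | exact hr _ hx _ hy _ hz _ hw hxy hzw h
      | skip
    all_goals grind

lemma arrow_exists {W : Type} [Fintype W] (H : SimpleGraph W) :
    ∃ n, ArrowsTo (⊤ : SimpleGraph (Fin n)) H := by
  classical
  obtain ⟨N, hN⟩ := clique_aux (Fintype.card W)
  refine ⟨N, fun c hc => ?_⟩
  obtain ⟨S, hS, hr⟩ := hN N le_rfl c hc
  have e : W ≃ S := Fintype.equivOfCardEq (by simp [hS])
  have hinj : Function.Injective (fun w => (e w : Fin N)) :=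
    Subtype.val_injective.comp e.injective
  refine ⟨⟨fun w => (e w : Fin N), fun {a b} hab => ?_⟩, hinj, ?_⟩
  · simp only [SimpleGraph.top_adj]
    exact fun h => hab.ne (hinj h)
  · intro e₁ h₁ e₂ h₂ h
    apply Sym2.map.injective hinj
    induction e₁ with
    | _ a b =>
      induction e₂ with
      | _ a_d b_d =>
        have n1 : a ≠ b := SimpleGraph.Adj.ne h₁
        have n2 : a_d ≠ b_d := SimpleGraph.Adj.ne h₂
        exact hr _ (e a).2 _ (e b).2 _ (e a_d).2 _ (e b_d).2 (fun h => n1 (hinj h))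
          (fun h => n2 (hinj h)) h

lemma sum_aux (k : ℕ) : 2 * ∑ j ∈ Finset.range k, (k - j) = k * (k + 1) := by
  have h : ∑ j ∈ Finset.range k, (k - j) = ∑ j ∈ Finset.range k, (j + 1) := by
    rw [← Finset.sum_range_reflect]
    apply Finset.sum_congr rfl
    intro j hj
    have := Finset.mem_range.1 hj
    omega
  rw [h]
  clear h
  induction k with
  | zero => simp
  | succ k ih => rw [Finset.sum_range_succ, mul_add, ih]; ring

theorem stmt_7 {W : Type} [Fintype W] (H : SimpleGraph W) [DecidableRel H.Adj]
    (hk : 1 ≤ H.edgeSet.ncard)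
    (hchi : chromIndex H = H.maxDegree) :
    (H.edgeSet.ncard : ℝ) * (H.edgeSet.ncard + 1) / (2 * (H.maxDegree : ℝ))
      ≤ (ARs H : ℝ) := by
  rcases Nat.eq_zero_or_pos H.maxDegree with h0 | hpos
  · simp [h0]
  have hne := Nat.nonempty_of_pos_sInf (hchi ▸ hpos : 0 < chromIndex H)
  obtain ⟨d, hd, hdD⟩ := Nat.sInf_mem hne
  change ∀ e ∈ H.edgeSet, d e < chromIndex H at hdD
  rw [hchi] at hdD
  have hne2 : {m | ∃ (n : ℕ) (G : SimpleGraph (Fin n)), ArrowsTo G H ∧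
      G.edgeSet.ncard = m}.Nonempty := by
    obtain ⟨n, hn⟩ := arrow_exists H
    exact ⟨_, n, _, hn, rfl⟩
  obtain ⟨n, G, hG, hm⟩ := Nat.sInf_mem hne2
  change G.edgeSet.ncard = ARs H at hm
  obtain ⟨c, -, -, hs⟩ := step_aux G H hG H.maxDegree d hd hdD _ le_rfl
  have hle : {e ∈ G.edgeSet | c e < H.edgeSet.ncard}.ncard ≤ ARs H := by
    rw [← hm]
    exact Set.ncard_le_ncard (fun e he => he.1) (Set.toFinite _)
  have h2 := sum_aux H.edgeSet.ncard
  have h3 := Nat.mul_le_mul_left H.maxDegree hle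
  have key : H.edgeSet.ncard * (H.edgeSet.ncard + 1) ≤ ARs H * (2 * H.maxDegree) := by
    rw [← h2]
    calc _ ≤ 2 * (H.maxDegree * ARs H) := Nat.mul_le_mul_left 2 (hs.trans h3)
      _ = _ := by ring
  have hposR : (0 : ℝ) < 2 * (H.maxDegree : ℝ) := by
    have : (0 : ℝ) < H.maxDegree := by exact_mod_cast hpos
    linarith
  rw [div_le_iff₀ hposR]
  exact_mod_cast key
end

section
/- For every k ≥ 3: k(k−1)/4 ≤ AR_s(P_{k−1}) ≤ AR_s(C_k) ≤ k², where P_{k−1} denotes the path with k−1 edges and C_k denotes the cycle with k edges. -/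
open SimpleGraph

def IsMatch {V : Type*} (M : Finset (Sym2 V)) : Prop :=
  ∀ e₁ ∈ M, ∀ e₂ ∈ M, (∃ v, v ∈ e₁ ∧ v ∈ e₂) → e₁ = e₂

lemma IsMatch.mono {V : Type*} {M N : Finset (Sym2 V)} (h : IsMatch M) (hN : N ⊆ M) :
    IsMatch N := fun e₁ h₁ e₂ h₂ h' => h e₁ (hN h₁) e₂ (hN h₂) h'

lemma exists_greedy_coloring {V : Type*} [DecidableEq V] (n : ℕ) :
    ∀ E : Finset (Sym2 V), E.card = n → ∃ c : Sym2 V → ℕ,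
      (∀ e₁ ∈ E, ∀ e₂ ∈ E, e₁ ≠ e₂ → (∃ v, v ∈ e₁ ∧ v ∈ e₂) → c e₁ ≠ c e₂) ∧
      ∀ A B : Finset (Sym2 V), IsMatch A → IsMatch B → A ∪ B ⊆ E →
        Set.InjOn c (↑(A ∪ B) : Set (Sym2 V)) →
        (A ∪ B).card * ((A ∪ B).card + 1) ≤ 4 * E.card := by
  induction n using Nat.strong_induction_on with
  | _ n ih =>
  intro E hE
  classical
  rcases E.eq_empty_or_nonempty with rfl | ⟨e₀, he₀⟩
  · refine ⟨fun _ => 0, by simp, ?_⟩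
    intro A B _ _ hs _
    rw [Finset.subset_empty.1 hs]
    simp
  obtain ⟨M, hM, hmax⟩ := Finset.exists_max_image (E.powerset.filter IsMatch) Finset.card
    ⟨∅, by simp [IsMatch]⟩
  simp only [Finset.mem_filter, Finset.mem_powerset] at hM hmax
  obtain ⟨hME, hMm⟩ := hM
  have hpos : 1 ≤ M.card := by
    have := hmax {e₀} ⟨by simpa using he₀, by intro a ha b hb _; simp at ha hb; rw [ha, hb]⟩
    simpa using this
  have hcard : (E \ M).card + M.card = E.card := Finset.card_sdiff_add_card_eq_card hME
  obtain ⟨c, hc1, hc2⟩ := ih (E \ M).card (by omega) (E \ M) rfl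
  refine ⟨fun e => if e ∈ M then 0 else c e + 1, ?_, ?_⟩
  · intro e₁ h₁ e₂ h₂ hne hv
    by_cases m₁ : e₁ ∈ M <;> by_cases m₂ : e₂ ∈ M
    · exact absurd (hMm e₁ m₁ e₂ m₂ hv) hne
    · simp [m₁, m₂]
    · simp [m₁, m₂]
    · simp only [m₁, m₂, if_false]
      have := hc1 e₁ (by simp [h₁, m₁]) e₂ (by simp [h₂, m₂]) hne hv
      omega
  · intro A B hA hB hs hinj
    have hAM := hmax A ⟨fun x hx => hs (Finset.mem_union_left _ hx), hA⟩
    have hBM := hmax B ⟨fun x hx => hs (Finset.mem_union_right _ hx), hB⟩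
    have hu := Finset.card_union_le A B
    have heq : (A \ M) ∪ (B \ M) = (A ∪ B) \ M := (Finset.union_sdiff_distrib A B M).symm
    have h := hc2 (A \ M) (B \ M) (hA.mono Finset.sdiff_subset) (hB.mono Finset.sdiff_subset)
      (by rw [heq]; exact Finset.sdiff_subset_sdiff hs le_rfl)
      (by
        rw [heq]
        intro x hx y hy hxy
        simp only [Finset.coe_sdiff, Set.mem_sdiff, Finset.mem_coe] at hx hy
        exact hinj hx.1 hy.1 (by simp [hx.2, hy.2, hxy]))
    rw [heq] at h
    have h1 : ((A ∪ B) ∩ M).card ≤ 1 := by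
      rw [Finset.card_le_one]
      intro x hx y hy
      rw [Finset.mem_inter] at hx hy
      exact hinj hx.1 hy.1 (by simp [hx.2, hy.2])
    have h2 := Finset.card_sdiff_add_card_inter (A ∪ B) M
    generalize (A ∪ B).card = u at *
    generalize ((A ∪ B) \ M).card = w at *
    have hw : u ≤ w + 1 := by omega
    rcases Nat.eq_zero_or_pos u with rfl | hu0
    · simp
    obtain ⟨t, rfl⟩ : ∃ t, u = t + 1 := ⟨u - 1, by omega⟩
    have : t * (t + 1) ≤ w * (w + 1) := Nat.mul_le_mul (by omega) (by omega)
    nlinarith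

lemma path_lower (k n : ℕ) (hk : 3 ≤ k) (G : SimpleGraph (Fin n))
    (h : ArrowsTo G (pathGraph k)) : k * (k - 1) ≤ 4 * G.edgeSet.ncard := by
  classical
  obtain ⟨c, hc1, hc2⟩ := exists_greedy_coloring _ G.edgeFinset rfl
  obtain ⟨f, hf, hr⟩ := h c (by
    intro e₁ h₁ e₂ h₂
    exact hc1 e₁ (by simpa using h₁) e₂ (by simpa using h₂))
  obtain ⟨m, rfl⟩ : ∃ m, k = m + 1 := ⟨k - 1, by omega⟩
  let p : Fin m → Sym2 (Fin (m + 1)) := fun i => s(i.castSucc, i.succ)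
  have hp : ∀ i, p i ∈ (pathGraph (m + 1)).edgeSet := by
    intro i
    simp [p, pathGraph_adj]
  have hpinj : Function.Injective p := by
    intro i j hij
    simp only [p, Sym2.eq_iff, Fin.ext_iff, Fin.val_castSucc, Fin.val_succ] at hij
    ext; omega
  let q : Fin m → Sym2 (Fin n) := fun i => Sym2.map f (p i)
  have hcq : ∀ i j, c (q i) = c (q j) → i = j := fun i j hij =>
    hpinj (hr _ (hp i) _ (hp j) hij)
  have hmatch : ∀ b : ℕ, IsMatch ((Finset.univ.filter fun i : Fin m => i.val % 2 = b).image q) := by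
    intro b e₁ h₁ e₂ h₂ hv
    simp only [Finset.mem_image, Finset.mem_filter, Finset.mem_univ, true_and] at h₁ h₂
    obtain ⟨i, hi, rfl⟩ := h₁
    obtain ⟨j, hj, rfl⟩ := h₂
    obtain ⟨v, hv1, hv2⟩ := hv
    simp only [q, p, Sym2.map_mk, Sym2.mem_iff] at hv1 hv2
    have : i = j := by
      rcases hv1 with rfl | rfl <;> rcases hv2 with h | h <;>
      · have := hf h
        simp only [Fin.ext_iff, Fin.val_castSucc, Fin.val_succ] at this
        ext; omega
    rw [this]
  have hun : (Finset.univ.filter fun i : Fin m => i.val % 2 = 0).image q ∪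
      (Finset.univ.filter fun i : Fin m => i.val % 2 = 1).image q = Finset.univ.image q := by
    rw [← Finset.image_union]
    congr 1
    ext i
    simp
    omega
  have := hc2 _ _ (hmatch 0) (hmatch 1) (by
      rw [hun]
      intro e he
      simp only [Finset.mem_image, Finset.mem_univ, true_and] at he
      obtain ⟨i, rfl⟩ := he
      rw [mem_edgeFinset]
      exact f.map_mem_edgeSet (hp i)) (by
      rw [hun]
      intro x hx y hy hxy
      simp only [Finset.coe_image, Finset.coe_univ, Set.image_univ, Set.mem_range] at hx hy
      obtain ⟨i, rfl⟩ := hx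
      obtain ⟨j, rfl⟩ := hy
      rw [hcq i j hxy])
  rw [hun, Finset.card_image_of_injective _ (fun i j hij => hcq i j (by rw [hij]))] at this
  rw [← coe_edgeFinset, Set.ncard_coe_finset]
  simp at this ⊢
  rw [mul_comm]; exact this

lemma arrows_path_of_cycle {V : Type*} (k : ℕ) (G : SimpleGraph V)
    (h : ArrowsTo G (cycleGraph k)) : ArrowsTo G (pathGraph k) := by
  intro c hc
  obtain ⟨f, hf, hr⟩ := h c hc
  have hle : pathGraph k ≤ cycleGraph k := pathGraph_le_cycleGraph
  refine ⟨f.comp (Hom.ofLE hle), by simpa using hf, ?_⟩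
  intro e₁ h₁ e₂ h₂ he
  exact hr e₁ (edgeSet_mono hle h₁) e₂ (edgeSet_mono hle h₂) he

lemma arrows_iso {V V' W : Type*} (G : SimpleGraph V) (G' : SimpleGraph V') (H : SimpleGraph W)
    (φ : G ≃g G') (h : ArrowsTo G H) : ArrowsTo G' H := by
  intro c hc
  obtain ⟨f, hf, hr⟩ := h (fun e => c (Sym2.map φ e)) (by
    intro e₁ h₁ e₂ h₂ hne ⟨v, hv1, hv2⟩
    refine hc _ (φ.toHom.map_mem_edgeSet h₁) _ (φ.toHom.map_mem_edgeSet h₂)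
      (fun hh => hne (Sym2.map.injective φ.injective hh)) ⟨φ v, ?_, ?_⟩
    · exact Sym2.mem_map.2 ⟨v, hv1, rfl⟩
    · exact Sym2.mem_map.2 ⟨v, hv2, rfl⟩)
  refine ⟨φ.toHom.comp f, φ.injective.comp hf, ?_⟩
  intro e₁ h₁ e₂ h₂ he
  refine hr e₁ h₁ e₂ h₂ ?_
  simpa [Sym2.map_map] using he

/-- blow-up sizes -/
def bsz (k i : ℕ) : ℕ := if i % 2 = 0 then 1 else 2 * i - 1 + 2 * (k % 2)

/-- The blow-up of the cycle. -/
def blow (k : ℕ) : SimpleGraph (Σ i : Fin k, Fin (bsz k i)) :=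
  (cycleGraph k).comap Sigma.fst

lemma blow_arrows (n : ℕ) : ArrowsTo (blow (n + 3)) (cycleGraph (n + 3)) := by
  classical
  intro c hc
  have hadj : ∀ i : Fin (n + 3), (cycleGraph (n + 3)).Adj i (i + 1) := by
    intro i
    rw [cycleGraph_adj]
    right; simp
  let ed : ((i : Fin (n + 3)) → Fin (bsz (n + 3) i)) → Fin (n + 3) →
      Sym2 (Σ i : Fin (n + 3), Fin (bsz (n + 3) i)) :=
    fun x i => s(⟨i, x i⟩, ⟨i + 1, x (i + 1)⟩)
  have hed : ∀ x i, ed x i ∈ (blow (n + 3)).edgeSet := by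
    intro x i
    exact hadj i
  have key : ∀ j : ℕ, 2 * j ≤ n + 3 → ∃ x : (i : Fin (n + 3)) → Fin (bsz (n + 3) i),
      Set.InjOn (fun i => c (ed x i))
        {i : Fin (n + 3) | i.val < 2 * j ∨ 2 * ((n + 3) / 2) ≤ i.val} := by
    intro j
    induction j with
    | zero =>
      intro _
      refine ⟨fun i => ⟨0, by unfold bsz; split_ifs <;> omega⟩, ?_⟩
      intro a ha b hb _
      simp only [Set.mem_ofPred_eq] at ha hb
      ext; omega
    | succ j ih =>
      intro hj
      obtain ⟨x, hx⟩ := ih (by omega)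
      set S : Finset (Fin (n + 3)) :=
        Finset.univ.filter fun i => i.val < 2 * j ∨ 2 * ((n + 3) / 2) ≤ i.val with hS
      have hScard : S.card ≤ 2 * j + (n + 3) % 2 := by
        have : S.card ≤ (Finset.range (2 * j) ∪ Finset.Ico (2 * ((n + 3) / 2)) (n + 3)).card := by
          apply Finset.card_le_card_of_injOn (fun i : Fin (n + 3) => i.val)
          · intro i hi
            simp [hS] at hi ⊢
            omega
          · intro a _ b _ hab
            exact Fin.ext hab
        refine this.trans ((Finset.card_union_le _ _).trans ?_)
        simp
        omega
      let C := S.image fun i => c (ed x i)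
      have hC : C.card ≤ 2 * j + (n + 3) % 2 := Finset.card_image_le.trans hScard
      let u : Fin (n + 3) := ⟨2 * j, by omega⟩
      let v : Fin (n + 3) := ⟨2 * j + 1, by omega⟩
      have huv : u + 1 = v := by
        ext
        simp only [u, v, Fin.val_add, Fin.val_one]
        exact Nat.mod_eq_of_lt (by omega)
      have hv1 : (v + 1).val = if 2 * j + 2 = n + 3 then 0 else 2 * j + 2 := by
        simp only [v, Fin.val_add, Fin.val_one]
        split_ifs with h
        · rw [show 2 * j + 1 + 1 = n + 3 from h]; simp
        · exact Nat.mod_eq_of_lt (by omega)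
      have huv' : u ≠ v + 1 := by
        intro h
        have := congrArg Fin.val h
        rw [hv1] at this
        simp only [u] at this
        split_ifs at this <;> omega
      have hvv1 : v + 1 ≠ v := by simp
      have huv0 : u ≠ v := by
        intro h; have := congrArg Fin.val h; simp [u, v] at this
      -- bad sets
      have hbad : ∀ w : Fin (n + 3), (cycleGraph (n + 3)).Adj w v →
          (Finset.univ.filter fun y : Fin (bsz (n + 3) v) =>
            c s(⟨w, x w⟩, ⟨v, y⟩) ∈ C).card ≤ C.card := by
        intro w hw
        apply Finset.card_le_card_of_injOn (fun y => c s(⟨w, x w⟩, ⟨v, y⟩))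
        · intro y hy
          simpa using hy
        · intro y _ z _ hyz
          by_contra hne
          refine hc s(⟨w, x w⟩, ⟨v, y⟩) hw s(⟨w, x w⟩, ⟨v, z⟩) hw ?_ ⟨⟨w, x w⟩, by simp, by simp⟩ hyz
          intro h
          rw [Sym2.congr_right] at h
          simp at h
          exact hne h
      have hb1 := hbad u (huv ▸ hadj u)
      have hb2 := hbad (v + 1) (hadj v).symm
      have hex : ∃ y : Fin (bsz (n + 3) v), c s(⟨u, x u⟩, ⟨v, y⟩) ∉ C ∧
          c s(⟨v + 1, x (v + 1)⟩, ⟨v, y⟩) ∉ C := by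
        by_contra hcon
        push Not at hcon
        have hcov : (Finset.univ : Finset (Fin (bsz (n + 3) v))) ⊆
            (Finset.univ.filter fun y : Fin (bsz (n + 3) v) => c s(⟨u, x u⟩, ⟨v, y⟩) ∈ C) ∪
            (Finset.univ.filter fun y : Fin (bsz (n + 3) v) =>
              c s(⟨v + 1, x (v + 1)⟩, ⟨v, y⟩) ∈ C) := by
          intro y _
          simp only [Finset.mem_union, Finset.mem_filter, Finset.mem_univ, true_and]
          by_cases h : c s(⟨u, x u⟩, ⟨v, y⟩) ∈ C
          · exact Or.inl h
          · exact Or.inr (hcon y h)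
        have h1 := (Finset.card_le_card hcov).trans (Finset.card_union_le _ _)
        rw [Finset.card_univ, Fintype.card_fin] at h1
        have : bsz (n + 3) v = 4 * j + 1 + 2 * ((n + 3) % 2) := by
          simp only [bsz, v]
          rw [if_neg (by omega)]
          omega
        omega
      obtain ⟨y, hy1, hy2⟩ := hex
      let x' := Function.update x v y
      have hxv : x' v = y := Function.update_self ..
      have hxn : ∀ i, i ≠ v → x' i = x i := fun i hi => Function.update_of_ne hi ..
      have hold : ∀ i ∈ S, ed x' i = ed x i := by
        intro i hi
        simp only [hS, Finset.mem_filter, Finset.mem_univ, true_and] at hi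
        have h1 : i ≠ v := by
          intro h; rw [h] at hi; simp only [v] at hi; omega
        have h2 : i + 1 ≠ v := by
          intro h
          rw [← huv] at h
          have := add_right_cancel h
          rw [this] at hi; simp only [u] at hi; omega
        simp only [ed]
        rw [hxn _ h1, hxn _ h2]
      have hedu : ed x' u = s(⟨u, x u⟩, ⟨v, y⟩) := by
        simp only [ed]
        rw [huv, hxv, hxn _ huv0]
      have hedv : ed x' v = s(⟨v + 1, x (v + 1)⟩, ⟨v, y⟩) := by
        simp only [ed]
        rw [hxv, hxn _ hvv1, Sym2.eq_swap]
      have hcu : c (ed x' u) ∉ C := by rw [hedu]; exact hy1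
      have hcv : c (ed x' v) ∉ C := by rw [hedv]; exact hy2
      have hcuv : c (ed x' u) ≠ c (ed x' v) := by
        apply hc _ (hed _ _) _ (hed _ _)
        · rw [hedu, hedv]
          intro h
          rw [Sym2.congr_left] at h
          exact huv' (congrArg Sigma.fst h)
        · rw [hedu, hedv]
          exact ⟨⟨v, y⟩, by simp, by simp⟩
      have hmem : ∀ i ∈ S, c (ed x' i) ∈ C := by
        intro i hi
        rw [hold i hi]
        exact Finset.mem_image_of_mem _ hi
      have hcase : ∀ i : Fin (n + 3), (i.val < 2 * (j + 1) ∨ 2 * ((n + 3) / 2) ≤ i.val) →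
          i ∈ S ∨ i = u ∨ i = v := by
        intro i hi
        simp only [hS, Finset.mem_filter, Finset.mem_univ, true_and, u, v, Fin.ext_iff]
        omega
      refine ⟨x', ?_⟩
      intro a ha b hb hab
      simp only at hab
      rcases hcase a ha with ha | rfl | rfl <;> rcases hcase b hb with hb | rfl | rfl
      · rw [hold a ha, hold b hb] at hab
        exact hx (by simpa [hS] using ha) (by simpa [hS] using hb) hab
      · exact absurd (hab ▸ hmem a ha) hcu
      · exact absurd (hab ▸ hmem a ha) hcv
      · exact absurd (hab ▸ hmem b hb) hcu
      · rfl
      · exact absurd hab hcuv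
      · exact absurd (hab ▸ hmem b hb) hcv
      · exact absurd hab.symm hcuv
      · rfl
  obtain ⟨x, hx⟩ := key ((n + 3) / 2) (by omega)
  have hinj : ∀ i j, c (ed x i) = c (ed x j) → i = j := by
    intro i j hij
    exact hx (by simp only [Set.mem_ofPred_eq]; omega) (by simp only [Set.mem_ofPred_eq]; omega) hij
  refine ⟨⟨fun i => ⟨i, x i⟩, fun {a b} hab => hab⟩, fun a b hab => congrArg Sigma.fst hab, ?_⟩
  have hform : ∀ e ∈ (cycleGraph (n + 3)).edgeSet, ∃ i, e = s(i, i + 1) := by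
    intro e
    induction e with
    | _ a b =>
    intro h
    rw [mem_edgeSet, cycleGraph_adj] at h
    rcases h with h | h
    · exact ⟨b, by rw [← h, Sym2.eq_swap]; simp⟩
    · exact ⟨a, by rw [← h]; simp⟩
  intro e₁ h₁ e₂ h₂ he
  obtain ⟨i, rfl⟩ := hform e₁ h₁
  obtain ⟨j, rfl⟩ := hform e₂ h₂
  rw [hinj i j he]

lemma blow_sum (k r : ℕ) :
    ∑ i ∈ Finset.range (2 * r), (if i % 2 = 0 then 2 * i + 1 + 2 * (k % 2)
      else 2 * i - 1 + 2 * (k % 2)) + 2 * r = 4 * r * r + 4 * r * (k % 2) := by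
  induction r with
  | zero => simp
  | succ r ih =>
    rw [show 2 * (r + 1) = 2 * r + 1 + 1 by ring, Finset.sum_range_succ, Finset.sum_range_succ,
      if_pos (by omega), if_neg (by omega)]
    have : 2 * (2 * r + 1) - 1 = 4 * r + 1 := by omega
    rw [this]
    nlinarith

lemma blow_card (n : ℕ) : (blow (n + 3)).edgeSet.ncard ≤ (n + 3) ^ 2 := by
  classical
  let T := Σ i : Fin (n + 3), Fin (bsz (n + 3) i) × Fin (bsz (n + 3) (i + 1 : Fin (n + 3)))
  let g : T → Sym2 (Σ i : Fin (n + 3), Fin (bsz (n + 3) i)) :=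
    fun t => s(⟨t.1, t.2.1⟩, ⟨t.1 + 1, t.2.2⟩)
  have hsub : (blow (n + 3)).edgeSet ⊆ Set.range g := by
    intro e
    induction e with
    | _ a b =>
    obtain ⟨a, x⟩ := a
    obtain ⟨b, y⟩ := b
    intro h
    have h : (cycleGraph (n + 3)).Adj a b := h
    rw [cycleGraph_adj] at h
    rcases h with h | h
    · obtain rfl : a = b + 1 := by rw [← h]; simp
      exact ⟨⟨b, y, x⟩, Sym2.eq_swap⟩
    · obtain rfl : b = a + 1 := by rw [← h]; simp
      exact ⟨⟨a, x, y⟩, rfl⟩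
  have h1 : (blow (n + 3)).edgeSet.ncard ≤ Fintype.card T := by
    refine (Set.ncard_le_ncard hsub (Set.toFinite _)).trans ?_
    rw [← Set.image_univ]
    refine (Set.ncard_image_le (Set.toFinite _)).trans ?_
    rw [Set.ncard_univ, Nat.card_eq_fintype_card]
  refine h1.trans ?_
  simp only [T, Fintype.card_sigma, Fintype.card_prod, Fintype.card_fin]
  have h2 : ∀ i : Fin (n + 3), bsz (n + 3) i * bsz (n + 3) (i + 1 : Fin (n + 3)) ≤
      (fun i : ℕ => if i = 2 * ((n + 3) / 2) then 1 else
        if i % 2 = 0 then 2 * i + 1 + 2 * ((n + 3) % 2)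
      else 2 * i - 1 + 2 * ((n + 3) % 2)) i.val := by
    intro i
    have hi := i.isLt
    have hv : (i + 1).val = if i.val + 1 = n + 3 then 0 else i.val + 1 := by
      simp only [Fin.val_add, Fin.val_one]
      split_ifs with h
      · rw [h]; simp
      · exact Nat.mod_eq_of_lt (by omega)
    rw [hv]
    simp only [bsz]
    split_ifs <;> first | omega | simp | skip
    all_goals first | omega | (simp; omega) 
  refine (Finset.sum_le_sum fun i _ => h2 i).trans ?_
  rw [Fin.sum_univ_eq_sum_range (fun i : ℕ => if i = 2 * ((n + 3) / 2) then 1 else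
        if i % 2 = 0 then 2 * i + 1 + 2 * ((n + 3) % 2)
      else 2 * i - 1 + 2 * ((n + 3) % 2)) (n + 3)]
  set r := (n + 3) / 2 with hr
  have h3 := blow_sum (n + 3) r
  have h4 : ∑ i ∈ Finset.range (2 * r), (if i = 2 * r then 1 else
        if i % 2 = 0 then 2 * i + 1 + 2 * ((n + 3) % 2)
      else 2 * i - 1 + 2 * ((n + 3) % 2)) = ∑ i ∈ Finset.range (2 * r),
        (if i % 2 = 0 then 2 * i + 1 + 2 * ((n + 3) % 2)
      else 2 * i - 1 + 2 * ((n + 3) % 2)) := by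
    apply Finset.sum_congr rfl
    intro i hi
    rw [Finset.mem_range] at hi
    rw [if_neg (by omega)]
  rcases Nat.mod_two_eq_zero_or_one (n + 3) with h | h
  · have h5 : n + 3 = 2 * r := by omega
    have h6 : Finset.range (n + 3) = Finset.range (2 * r) := by rw [h5]
    rw [h6, h4]
    have h7 : (n + 3) ^ 2 = (2 * r) ^ 2 := by rw [h5]
    rw [h7]
    rw [h] at h3 ⊢
    nlinarith
  · have h5 : n + 3 = 2 * r + 1 := by omega
    have h6 : Finset.range (n + 3) = Finset.range (2 * r + 1) := by rw [h5]
    rw [h6, Finset.sum_range_succ, h4, if_pos rfl]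
    have h7 : (n + 3) ^ 2 = (2 * r + 1) ^ 2 := by rw [h5]
    rw [h7]
    rw [h] at h3 ⊢
    nlinarith

lemma exists_cycle_graph (k : ℕ) (hk : 3 ≤ k) : ∃ (n : ℕ) (G : SimpleGraph (Fin n)),
    ArrowsTo G (cycleGraph k) ∧ G.edgeSet.ncard ≤ k ^ 2 := by
  obtain ⟨n, rfl⟩ : ∃ n, k = n + 3 := ⟨k - 3, by omega⟩
  let φ := (blow (n + 3)).overFinIso rfl
  refine ⟨_, _, arrows_iso _ _ _ φ (blow_arrows n), ?_⟩
  refine le_trans (le_of_eq ?_) (blow_card n)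
  exact (Nat.card_congr φ.mapEdgeSet).symm

theorem stmt_8 (k : ℕ) (hk : 3 ≤ k) :
    (k : ℝ) * ((k : ℝ) - 1) / 4 ≤ (ARs (SimpleGraph.pathGraph k) : ℝ) ∧
    ARs (SimpleGraph.pathGraph k) ≤ ARs (SimpleGraph.cycleGraph k) ∧
    (ARs (SimpleGraph.cycleGraph k) : ℝ) ≤ (k : ℝ) ^ 2 := by
  obtain ⟨n, G, hG, hcard⟩ := exists_cycle_graph k hk
  have hcyc : ARs (cycleGraph k) ∈ {m | ∃ (n : ℕ) (G : SimpleGraph (Fin n)),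
      ArrowsTo G (cycleGraph k) ∧ G.edgeSet.ncard = m} := Nat.sInf_mem ⟨_, n, G, hG, rfl⟩
  have hpath : ARs (pathGraph k) ∈ {m | ∃ (n : ℕ) (G : SimpleGraph (Fin n)),
      ArrowsTo G (pathGraph k) ∧ G.edgeSet.ncard = m} :=
    Nat.sInf_mem ⟨_, n, G, arrows_path_of_cycle k G hG, rfl⟩
  refine ⟨?_, ?_, ?_⟩
  · obtain ⟨n', G', hG', he⟩ := hpath
    have h := path_lower k n' hk G' hG'
    rw [he] at h
    have h' : ((k * (k - 1) : ℕ) : ℝ) ≤ ((4 * ARs (pathGraph k) : ℕ) : ℝ) := by exact_mod_cast h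
    rw [Nat.cast_mul, Nat.cast_sub (by omega)] at h'
    push_cast at h'
    linarith
  · obtain ⟨n', G', hG', he⟩ := hcyc
    exact Nat.sInf_le ⟨n', G', arrows_path_of_cycle k G' hG', he⟩
  · have h : ARs (cycleGraph k) ≤ k ^ 2 := by
      refine le_trans ?_ hcard
      exact Nat.sInf_le ⟨n, G, hG, rfl⟩
    exact_mod_cast h
end

section
/- For every k ≥ 1, AR_s(M_k) = k(k+1)/2, where M_k denotes a matching with k edges (k pairwise disjoint edges). -/
open SimpleGraph

/-- The matching `M_k` with `k` pairwise disjoint edges, on vertex set `Fin (2k)`: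
vertices `2i` and `2i+1` are matched. -/
def matchingGraph (k : ℕ) : SimpleGraph (Fin (2 * k)) :=
  SimpleGraph.fromRel (fun v w => v.val / 2 = w.val / 2)


/-- `s` is a set of `k` pairwise vertex-disjoint edges of `G`. -/
def IsMat {V : Type*} (G : SimpleGraph V) (k : ℕ) (s : Finset (Sym2 V)) : Prop :=
  s.card = k ∧ (∀ e ∈ s, e ∈ G.edgeSet) ∧
    ∀ e₁ ∈ s, ∀ e₂ ∈ s, (∃ v, v ∈ e₁ ∧ v ∈ e₂) → e₁ = e₂

/-- A rainbow copy of the matching graph yields a rainbow set of disjoint edges. -/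
lemma exists_isMat_of_copy {V : Type*} (G : SimpleGraph V) (k : ℕ) (c : Sym2 V → ℕ)
    (h : HasRainbowCopy G (matchingGraph k) c) :
    ∃ s, IsMat G k s ∧ Set.InjOn c (s : Set (Sym2 V)) := by
  classical
  obtain ⟨f, hf, hc⟩ := h
  let a : Fin k → Fin (2 * k) := fun i => ⟨2 * i.val, by omega⟩
  let b : Fin k → Fin (2 * k) := fun i => ⟨2 * i.val + 1, by omega⟩
  have hadj : ∀ i, (matchingGraph k).Adj (a i) (b i) := by
    intro i
    simp only [matchingGraph, SimpleGraph.fromRel_adj, a, b]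
    refine ⟨?_, Or.inl ?_⟩
    · intro h; simp [Fin.ext_iff] at h
    · show 2 * i.val / 2 = (2 * i.val + 1) / 2
      omega
  have haa : ∀ i j, a i = a j → i = j := by
    intro i j h; simp only [a, Fin.ext_iff] at h ⊢; omega
  have hbb : ∀ i j, b i = b j → i = j := by
    intro i j h; simp only [b, Fin.ext_iff] at h ⊢; omega
  have hab : ∀ i j, a i ≠ b j := by
    intro i j h; simp only [a, b, Fin.ext_iff] at h; omega
  have hinj : ∀ i j, (∃ v, v ∈ s(f (a i), f (b i)) ∧ v ∈ s(f (a j), f (b j))) → i = j := by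
    rintro i j ⟨v, h1, h2⟩
    simp only [Sym2.mem_iff] at h1 h2
    rcases h1 with h1 | h1 <;> rcases h2 with h2 | h2
    · exact haa _ _ (hf (h1.symm.trans h2))
    · exact absurd (hf (h1.symm.trans h2)) (hab _ _)
    · exact absurd (hf (h2.symm.trans h1)) (hab _ _)
    · exact hbb _ _ (hf (h1.symm.trans h2))
  refine ⟨Finset.univ.image (fun i => s(f (a i), f (b i))), ⟨?_, ?_, ?_⟩, ?_⟩
  · rw [Finset.card_image_of_injective, Finset.card_univ, Fintype.card_fin]
    intro i j h
    apply hinj i j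
    refine ⟨f (a i), by simp, ?_⟩
    have h' : s(f (a i), f (b i)) = s(f (a j), f (b j)) := h
    rw [← h']; simp
  · intro e he
    simp only [Finset.mem_image, Finset.mem_univ, true_and] at he
    obtain ⟨i, rfl⟩ := he
    exact f.map_adj (hadj i)
  · intro e₁ h₁ e₂ h₂ h
    simp only [Finset.mem_image, Finset.mem_univ, true_and] at h₁ h₂
    obtain ⟨i, rfl⟩ := h₁
    obtain ⟨j, rfl⟩ := h₂
    rw [hinj i j h]
  · intro e₁ h₁ e₂ h₂ h
    simp only [Finset.coe_image, Finset.coe_univ, Set.image_univ, Set.mem_range] at h₁ h₂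
    obtain ⟨i, rfl⟩ := h₁
    obtain ⟨j, rfl⟩ := h₂
    have := hc s(a i, b i) (hadj i) s(a j, b j) (hadj j) (by simpa using h)
    have h3 := congrArg (Sym2.map f) this
    simpa using h3

/-- Lower bound: with fewer than `k(k+1)/2` edges, some proper coloring has no rainbow `M_k`.
If `G` has a matching of size `k`, remove it and use it as a new color class. -/
lemma exists_coloring {V : Type*} [Finite V] (k : ℕ) : ∀ G : SimpleGraph V,
    2 * G.edgeSet.ncard < k * (k + 1) →
    ∃ c : Sym2 V → ℕ, IsProperEdgeColoring G c ∧
      ¬ ∃ s, IsMat G k s ∧ Set.InjOn c (s : Set (Sym2 V)) := by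
  classical
  induction k with
  | zero => intro G h; omega
  | succ k ih =>
    intro G h
    by_cases hM : ∃ M, IsMat G (k + 1) M
    · obtain ⟨M, hMc, hMe, hMd⟩ := hM
      have hes : (G.deleteEdges (M : Set (Sym2 V))).edgeSet = G.edgeSet \ (M : Set (Sym2 V)) :=
        SimpleGraph.edgeSet_deleteEdges _
      have hcard : (G.deleteEdges (M : Set (Sym2 V))).edgeSet.ncard + (k + 1)
          = G.edgeSet.ncard := by
        rw [hes, ← hMc, ← Set.ncard_coe_finset M]
        exact Set.ncard_sdiff_add_ncard_of_subset (fun e he => hMe e he) (Set.toFinite _)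
      obtain ⟨c, hc, hno⟩ := ih (G.deleteEdges (M : Set (Sym2 V))) (by nlinarith)
      refine ⟨fun e => if e ∈ M then 0 else c e + 1, ?_, ?_⟩
      · intro e₁ h₁ e₂ h₂ hne hv
        by_cases m₁ : e₁ ∈ M <;> by_cases m₂ : e₂ ∈ M
        · exact absurd (hMd _ m₁ _ m₂ hv) hne
        · simp [m₁, m₂]
        · simp [m₁, m₂]
        · have := hc e₁ (by rw [hes]; exact ⟨h₁, m₁⟩) e₂ (by rw [hes]; exact ⟨h₂, m₂⟩) hne hv
          simpa [m₁, m₂] using this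
      · rintro ⟨s, ⟨hs, hse, hsd⟩, hsc⟩
        apply hno
        have h1 : (s.filter (· ∈ M)).card ≤ 1 := by
          rw [Finset.card_le_one]
          intro e₁ h₁ e₂ h₂
          rw [Finset.mem_filter] at h₁ h₂
          exact hsc h₁.1 h₂.1 (by simp [h₁.2, h₂.2])
        have h2 := Finset.card_filter_add_card_filter_not (s := s) (· ∈ M)
        obtain ⟨u, hu, huc⟩ := Finset.exists_subset_card_eq
          (s := s.filter (fun e => ¬ e ∈ M)) (n := k) (by omega)
        have hu' : ∀ e ∈ u, e ∈ s ∧ e ∉ M := fun e he => Finset.mem_filter.1 (hu he)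
        refine ⟨u, ⟨huc, ?_, ?_⟩, ?_⟩
        · intro e he
          rw [hes]
          exact ⟨hse e (hu' e he).1, (hu' e he).2⟩
        · intro e₁ h₁ e₂ h₂
          exact hsd e₁ (hu' _ h₁).1 e₂ (hu' _ h₂).1
        · intro e₁ h₁ e₂ h₂ h
          exact hsc (hu' _ h₁).1 (hu' _ h₂).1 (by simp [(hu' _ h₁).2, (hu' _ h₂).2, h])
    · obtain ⟨c, hc⟩ := exists_injective_nat (Sym2 V)
      refine ⟨c, ?_, ?_⟩
      · intro e₁ _ e₂ _ hne _ h
        exact hne (hc h)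
      · rintro ⟨s, hs, _⟩
        exact hM ⟨s, hs⟩

/-- The disjoint union of stars with `1, 2, ..., k` edges (and isolated vertices);
`(i, none)` is the center of the `i`-th star. -/
def starsGraph (k : ℕ) : SimpleGraph (Fin k × Option (Fin k)) :=
  SimpleGraph.fromRel (fun x y => x.1 = y.1 ∧ x.2 = none ∧ ∃ j, j ≤ x.1 ∧ y.2 = some j)

lemma starsGraph_adj {k : ℕ} (i j : Fin k) (h : j ≤ i) :
    (starsGraph k).Adj (i, none) (i, some j) := by
  simp [starsGraph, h]

lemma starsGraph_ncard (k : ℕ) : (starsGraph k).edgeSet.ncard ≤ k * (k + 1) / 2 := by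
  classical
  let S : Finset (Sym2 (Fin k × Option (Fin k))) :=
    Finset.univ.biUnion (fun i : Fin k => (Finset.Iic i).image (fun j => s((i, none), (i, some j))))
  have hsub : (starsGraph k).edgeSet ⊆ (S : Set _) := by
    intro e
    induction e using Sym2.ind with
    | _ x y =>
      intro h
      rw [SimpleGraph.mem_edgeSet] at h
      simp only [starsGraph, SimpleGraph.fromRel_adj] at h
      obtain ⟨x1, x2⟩ := x
      obtain ⟨y1, y2⟩ := y
      simp only [S, Finset.coe_biUnion, Set.mem_iUnion, Finset.coe_image, Set.mem_image,
        Finset.mem_coe, Finset.mem_univ, Finset.mem_Iic]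
      rcases h.2 with ⟨h1, h2, j, hj, h3⟩ | ⟨h1, h2, j, hj, h3⟩
      · simp only at h1 h2 h3 hj
        subst h1 h2 h3
        exact ⟨x1, trivial, j, hj, rfl⟩
      · simp only at h1 h2 h3 hj
        subst h1 h2 h3
        exact ⟨y1, trivial, j, hj, Sym2.eq_swap⟩
  calc (starsGraph k).edgeSet.ncard ≤ (S : Set _).ncard :=
        Set.ncard_le_ncard hsub (Finset.finite_toSet S)
    _ = S.card := Set.ncard_coe_finset S
    _ ≤ ∑ i : Fin k, ((Finset.Iic i).image
          (fun j => s(((i, none) : Fin k × Option (Fin k)), (i, some j)))).card :=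
        Finset.card_biUnion_le
    _ ≤ ∑ i : Fin k, (i.val + 1) := by
        apply Finset.sum_le_sum
        intro i _
        exact Finset.card_image_le.trans (by simp)
    _ = k * (k + 1) / 2 := by
        rw [Fin.sum_univ_eq_sum_range (fun i => i + 1) k]
        have := Finset.sum_range_succ' (fun i => i) k
        have h2 := Finset.sum_range_id (k + 1)
        simp only [add_zero] at this
        rw [← this, h2, Nat.add_sub_cancel, Nat.mul_comm]

lemma starsGraph_arrows (k : ℕ) : ArrowsTo (starsGraph k) (matchingGraph k) := by
  classical
  intro c hc
  let t : Fin k → Finset ℕ := fun i =>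
    (Finset.Iic i).image (fun j => c s((i, none), (i, some j)))
  have ht : ∀ i, (t i).card = i.val + 1 := by
    intro i
    rw [Finset.card_image_of_injOn, Fin.card_Iic]
    intro j hj j' hj' h
    by_contra hne
    refine hc s((i, none), (i, some j)) (starsGraph_adj i j (by simpa using hj))
      s((i, none), (i, some j')) (starsGraph_adj i j' (by simpa using hj')) ?_
      ⟨(i, none), by simp, by simp⟩ h
    intro h'
    simp at h'
    exact hne h'
  obtain ⟨g, hg, hgt⟩ := (Finset.all_card_le_biUnion_card_iff_exists_injective t).1 (by
    intro s
    rcases s.eq_empty_or_nonempty with rfl | hs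
    · simp
    · have h1 : s ⊆ Finset.Iic (s.max' hs) := fun x hx => Finset.mem_Iic.2 (s.le_max' x hx)
      have h2 := Finset.card_le_card h1
      have h3 : t (s.max' hs) ⊆ s.biUnion t := Finset.subset_biUnion_of_mem t (s.max'_mem hs)
      have h4 := Finset.card_le_card h3
      rw [ht] at h4
      rw [Fin.card_Iic] at h2
      omega)
  have hex : ∀ i, ∃ j, j ≤ i ∧ c s((i, none), (i, some j)) = g i := by
    intro i
    have := hgt i
    simpa [t] using this
  choose a ha hac using hex
  let p : Fin (2 * k) → Fin k := fun v => ⟨v.val / 2, by omega⟩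
  let F : Fin (2 * k) → Fin k × Option (Fin k) := fun v =>
    (p v, if v.val % 2 = 0 then none else some (a (p v)))
  have hF : ∀ v w : Fin (2 * k), v ≠ w → v.val / 2 = w.val / 2 →
      s(F v, F w) = s((p v, none), (p v, some (a (p v)))) := by
    intro v w hne h
    have hp : p w = p v := by simp only [p, h]
    have hne' : v.val ≠ w.val := fun h => hne (Fin.ext h)
    rcases Nat.mod_two_eq_zero_or_one v.val with hv | hv
    · have hw : w.val % 2 = 1 := by omega
      simp [F, hv, hw, hp]
    · have hw : w.val % 2 = 0 := by omega
      simp only [F, hv, hw, hp]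
      rw [Sym2.eq_swap]
      simp
  have hM : ∀ v w, (matchingGraph k).Adj v w → v ≠ w ∧ v.val / 2 = w.val / 2 := by
    intro v w h
    simp only [matchingGraph, SimpleGraph.fromRel_adj] at h
    exact ⟨h.1, h.2.elim id Eq.symm⟩
  refine ⟨⟨F, ?_⟩, ?_, ?_⟩
  · intro v w h
    obtain ⟨h1, h2⟩ := hM v w h
    rw [← SimpleGraph.mem_edgeSet, hF v w h1 h2]
    exact starsGraph_adj _ _ (ha _)
  · intro v w h
    have h' : F v = F w := h
    simp only [F, Prod.mk.injEq] at h'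
    obtain ⟨h1, h2⟩ := h'
    have h1' : v.val / 2 = w.val / 2 := by simpa [p] using h1
    apply Fin.ext
    split_ifs at h2 <;> omega
  · intro e₁ h₁ e₂ h₂
    induction e₁ using Sym2.ind with
    | _ v w =>
    induction e₂ using Sym2.ind with
    | _ x y =>
      intro h
      obtain ⟨h1, h2⟩ := hM v w h₁
      obtain ⟨h3, h4⟩ := hM x y h₂
      have h' : c s(F v, F w) = c s(F x, F y) := h
      rw [hF v w h1 h2, hF x y h3 h4, hac, hac] at h'
      have h5 : v.val / 2 = x.val / 2 := by simpa [p] using hg h'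
      have h1' : v.val ≠ w.val := fun h => h1 (Fin.ext h)
      have h3' : x.val ≠ y.val := fun h => h3 (Fin.ext h)
      rw [Sym2.eq_iff, Fin.ext_iff, Fin.ext_iff, Fin.ext_iff, Fin.ext_iff]
      omega

/-- Arrowing transfers along graph isomorphisms. -/
lemma ArrowsTo.of_iso {V V' W : Type*} {G : SimpleGraph V} {G' : SimpleGraph V'}
    {H : SimpleGraph W} (φ : G ≃g G') (h : ArrowsTo G H) : ArrowsTo G' H := by
  intro c hc
  obtain ⟨f, hf, hr⟩ := h (fun e => c (Sym2.map φ e)) (by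
    intro e₁ h₁ e₂ h₂ hne hv
    obtain ⟨v, hv₁, hv₂⟩ := hv
    refine hc _ ?_ _ ?_ ?_ ⟨φ v, Sym2.mem_map.2 ⟨v, hv₁, rfl⟩, Sym2.mem_map.2 ⟨v, hv₂, rfl⟩⟩
    · exact (φ.toHom.mapEdgeSet ⟨e₁, h₁⟩).2
    · exact (φ.toHom.mapEdgeSet ⟨e₂, h₂⟩).2
    · exact fun h => hne (Sym2.map.injective φ.injective h))
  refine ⟨φ.toHom.comp f, φ.injective.comp hf, ?_⟩
  intro e₁ h₁ e₂ h₂ he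
  apply hr e₁ h₁ e₂ h₂
  simpa [Sym2.map_map] using he

theorem stmt_9 (k : ℕ) (hk : 1 ≤ k) :
    ARs (matchingGraph k) = k * (k + 1) / 2 := by
  classical
  let φ := SimpleGraph.Iso.map (Fintype.equivFin (Fin k × Option (Fin k))) (starsGraph k)
  have hmem := ArrowsTo.of_iso φ (starsGraph_arrows k)
  have hle : ((starsGraph k).map
      (Fintype.equivFin (Fin k × Option (Fin k)))).edgeSet.ncard
      ≤ k * (k + 1) / 2 := by
    rw [← Nat.card_coe_set_eq, ← Nat.card_congr φ.mapEdgeSet, Nat.card_coe_set_eq]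
    exact starsGraph_ncard k
  apply le_antisymm
  · refine le_trans ?_ hle
    exact Nat.sInf_le ⟨_, _, hmem, rfl⟩
  · refine le_csInf ⟨_, _, _, hmem, rfl⟩ ?_
    rintro m ⟨n, G, hG, rfl⟩
    by_contra hlt
    obtain ⟨c, hc, hno⟩ := exists_coloring k G (by omega)
    exact hno (exists_isMat_of_copy G k c (hG c hc))
end

section
/- There exists a constant c > 0 such that the following holds: for every graph H with n vertices, no isolated vertices, and vertex cover number τ = τ(H) ≥ 2, one has AR_s(H) ≤ AR_s(K(τ, n−τ)) ≤ c·n·τ⁵/log τ + c·τ⁶/log τ, where K(s,t) denotes the graph on s+t vertices obtained from the complete bipartite graph with parts S of size s and T of size t by adding all edges inside S. -/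
open SimpleGraph

/-- The vertex cover number of `H`: the minimum size of a set of vertices
meeting every edge of `H`. -/
noncomputable def coverNumber {W : Type*} (H : SimpleGraph W) : ℕ :=
  sInf {m | ∃ S : Set W, S.Finite ∧ S.ncard = m ∧ ∀ e ∈ H.edgeSet, ∃ v ∈ S, v ∈ e}

/-- The graph `K(s,t)`: a complete bipartite graph with parts `S`, `T` of sizes
`s` and `t`, together with all edges inside `S`. -/
def Kst (s t : ℕ) : SimpleGraph (Fin s ⊕ Fin t) :=
  SimpleGraph.fromRel (fun v _ => v.isLeft = true)


open Finset in
theorem cube_avoid {V : Type*} [DecidableEq V] (F : Finset V) (𝒯 : Finset (Finset V))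
    (h3 : ∀ T ∈ 𝒯, T.card = 3 ∧ T ⊆ F) :
    7 ^ 𝒯.card * 2 ^ F.card ≤
      8 ^ 𝒯.card * (F.powerset.filter (fun A => ∀ T ∈ 𝒯, ¬ T ⊆ A)).card := by
  induction 𝒯 using Finset.induction_on with
  | empty => simp
  | insert T 𝒯 hT ih =>
    have ih' := ih (fun T hT => h3 T (mem_insert_of_mem hT))
    obtain ⟨hc, hs⟩ := h3 T (mem_insert_self _ _)
    have hlow : ∀ p : Finset V → Prop, (∀ A B, B ⊆ A → p A → p B) → ∀ [DecidablePred p],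
        IsLowerSet ((F.powerset.filter p : Finset (Finset V)) : Set (Finset V)) := by
      intro p hp _ A B hBA hA
      simp only [coe_filter, mem_powerset, Set.mem_ofPred_eq] at hA ⊢
      exact ⟨hBA.trans hA.1, hp A B hBA hA.2⟩
    have key := IsLowerSet.le_card_inter_finset' (s := F)
      (hlow (fun A => ¬ T ⊆ A) (fun A B hBA h hB => h (hB.trans hBA)))
      (hlow (fun A => ∀ T ∈ 𝒯, ¬ T ⊆ A) (fun A B hBA h T hT hB => h T hT (hB.trans hBA)))
      (by simp +contextual) (by simp +contextual)
    have e1 : F.powerset.filter (fun A => ¬ T ⊆ A) ∩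
        F.powerset.filter (fun A => ∀ T ∈ 𝒯, ¬ T ⊆ A) =
        F.powerset.filter (fun A => ∀ T' ∈ insert T 𝒯, ¬ T' ⊆ A) := by
      ext A
      simp only [mem_inter, mem_filter, mem_powerset, forall_mem_insert]
      tauto
    rw [e1] at key
    have e2 : (F.powerset.filter (fun A => T ⊆ A)).card = 2 ^ (F.card - 3) := by
      rw [← hc, ← card_Icc_finset hs]
      congr 1
      ext A
      simp [and_comm]
    have e3 := card_filter_add_card_filter_not (s := F.powerset) (fun A => T ⊆ A)
    rw [e2, card_powerset] at e3
    have hF : 3 ≤ F.card := hc ▸ card_le_card hs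
    obtain ⟨g, hg⟩ := Nat.exists_eq_add_of_le hF
    rw [hg] at e3 key ih' ⊢
    rw [card_insert_of_notMem hT]
    simp only [Nat.add_sub_cancel_left, pow_add] at e3
    have e4 : (F.powerset.filter (fun A => ¬ T ⊆ A)).card = 7 * 2 ^ g := by omega
    rw [e4] at key
    have : 0 < 2 ^ g := by positivity
    rw [pow_succ, pow_succ]
    rw [pow_add] at *
    nlinarith [Nat.mul_le_mul_left (8 ^ 𝒯.card) key, Nat.mul_le_mul_left 7 ih']

theorem exp_quarter : Real.exp (-(1/4)) ≤ 7 / 8 := by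
  rw [Real.exp_neg]
  have := Real.add_one_le_exp (1/4 : ℝ)
  rw [inv_le_comm₀ (Real.exp_pos _) (by norm_num)]
  linarith

open Finset in
theorem cube_lemma {V : Type*} [DecidableEq V] (F : Finset V) (𝓛 : Finset (Finset V))
    (h3 : ∀ T ∈ 𝓛, T.card = 3) (y : ℝ) :
    Real.exp (-2 * y) * ((1 + 2 * y) * (F.powerset.card : ℝ) -
      2 * ∑ A ∈ F.powerset, ((𝓛.filter (fun T => T ⊆ A)).card : ℝ)) ≤
    ((F.powerset.filter (fun A => ∀ T ∈ 𝓛, ¬ T ⊆ A)).card : ℝ) := by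
  set 𝒯 := 𝓛.filter (fun T => T ⊆ F) with h𝒯
  have hm : ∀ T ∈ 𝒯, T.card = 3 ∧ T ⊆ F := fun T hT =>
    ⟨h3 T (mem_filter.1 hT).1, (mem_filter.1 hT).2⟩
  have h1 := cube_avoid F 𝒯 hm
  have e1 : F.powerset.filter (fun A => ∀ T ∈ 𝓛, ¬ T ⊆ A) =
      F.powerset.filter (fun A => ∀ T ∈ 𝒯, ¬ T ⊆ A) := by
    apply filter_congr
    intro A hA
    rw [mem_powerset] at hA
    constructor
    · intro h T hT; exact h T (mem_filter.1 hT).1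
    · intro h T hT hTA; exact h T (mem_filter.2 ⟨hT, hTA.trans hA⟩) hTA
  have e2 : ∑ A ∈ F.powerset, ((𝓛.filter (fun T => T ⊆ A)).card : ℝ) =
      𝒯.card * (2 ^ F.card / 8) := by
    have : ∀ A ∈ F.powerset, ((𝓛.filter (fun T => T ⊆ A)).card : ℝ) =
        ∑ T ∈ 𝒯, if T ⊆ A then (1:ℝ) else 0 := by
      intro A hA
      rw [mem_powerset] at hA
      rw [sum_boole, h𝒯, filter_filter]
      congr 2
      apply filter_congr
      intro T _
      exact ⟨fun h => ⟨h.trans hA, h⟩, fun h => h.2⟩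
    rw [sum_congr rfl this, sum_comm]
    rw [← nsmul_eq_mul]
    apply sum_eq_card_nsmul
    intro T hT
    obtain ⟨hc, hs⟩ := hm T hT
    rw [sum_boole]
    have e2 : (F.powerset.filter (fun A => T ⊆ A)).card = 2 ^ (F.card - 3) := by
      rw [← hc, ← card_Icc_finset hs]
      congr 1
      ext A
      simp [and_comm]
    rw [e2]
    have hF : 3 ≤ F.card := hc ▸ card_le_card hs
    obtain ⟨g, hg⟩ := Nat.exists_eq_add_of_le hF
    rw [hg]
    simp only [Nat.add_sub_cancel_left, pow_add]
    push_cast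
    ring
  rw [e1, e2, card_powerset]
  set x := 𝒯.card
  have h1' : (7:ℝ) ^ x * 2 ^ F.card ≤ 8 ^ x *
      ((F.powerset.filter (fun A => ∀ T ∈ 𝒯, ¬ T ⊆ A)).card : ℝ) := by exact_mod_cast h1
  have h2 : (7/8 : ℝ) ^ x * 2 ^ F.card ≤
      ((F.powerset.filter (fun A => ∀ T ∈ 𝒯, ¬ T ⊆ A)).card : ℝ) := by
    rw [div_pow, div_mul_eq_mul_div, div_le_iff₀ (by positivity)]
    linarith
  refine le_trans ?_ h2
  have h3 : Real.exp (-(x / 4 : ℝ)) ≤ (7/8 : ℝ) ^ x := by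
    have := pow_le_pow_left₀ (Real.exp_pos _).le exp_quarter x
    rw [← Real.exp_nat_mul] at this
    have e : -(x / 4 : ℝ) = x * (-(1 / 4)) := by ring
    rw [e]
    exact this
  have h4 : Real.exp (-2 * y) * (1 + 2 * y - x / 4) ≤ Real.exp (-(x / 4 : ℝ)) := by
    have := Real.add_one_le_exp (2 * y - x / 4 : ℝ)
    have e : Real.exp (-(x / 4 : ℝ)) = Real.exp (-2 * y) * Real.exp (2 * y - x / 4) := by
      rw [← Real.exp_add]; congr 1; ring
    rw [e]
    apply mul_le_mul_of_nonneg_left _ (Real.exp_pos _).le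
    linarith
  calc _ = Real.exp (-2 * y) * (1 + 2 * y - x / 4) * 2 ^ F.card := by push_cast; ring
    _ ≤ _ := mul_le_mul_of_nonneg_right (h4.trans h3) (by positivity)

/-- independent subsets of `Y` -/
def IndF {V : Type*} [DecidableEq V] (𝒬 : Finset (Finset V)) (Y : Finset V) : Finset (Finset V) :=
  Y.powerset.filter (fun I => ∀ Q ∈ 𝒬, ¬ Q ⊆ I)

/-- link of `v` inside `Y` -/
def LkF {V : Type*} [DecidableEq V] (𝒬 : Finset (Finset V)) (Y : Finset V) (v : V) :
    Finset (Finset V) :=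
  Y.powerset.filter (fun T => insert v T ∈ 𝒬)

open Finset in
theorem local_lemma {V : Type*} [DecidableEq V] (𝒬 : Finset (Finset V))
    (h4 : ∀ Q ∈ 𝒬, Q.card = 4) (Y : Finset V) (v : V) (hv : v ∉ Y)
    (hgood : ∀ Q ∈ 𝒬, Q ⊆ Y → (Q ∩ (LkF 𝒬 Y v).biUnion id).card ≤ 1) (y : ℝ) :
    Real.exp (-2 * y) * ((1 + 2 * y) * ((IndF 𝒬 Y).card : ℝ) -
      2 * ∑ I ∈ IndF 𝒬 Y, (((LkF 𝒬 Y v).filter (fun T => T ⊆ I)).card : ℝ)) ≤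
    (((IndF 𝒬 Y).filter (fun I => ∀ T ∈ LkF 𝒬 Y v, ¬ T ⊆ I)).card : ℝ) := by
  set 𝓛 := LkF 𝒬 Y v with h𝓛
  set N := 𝓛.biUnion id with hN
  have h3 : ∀ T ∈ 𝓛, T.card = 3 := by
    intro T hT
    simp only [h𝓛, LkF, mem_filter, mem_powerset] at hT
    have := h4 _ hT.2
    rw [card_insert_of_notMem (fun h => hv (hT.1 h))] at this
    omega
  have hNY : N ⊆ Y := by
    intro a ha
    simp only [hN, mem_biUnion, id] at ha
    obtain ⟨T, hT, ha⟩ := ha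
    simp only [h𝓛, LkF, mem_filter, mem_powerset] at hT
    exact hT.1 ha
  have hTN : ∀ T ∈ 𝓛, T ⊆ N := fun T hT => subset_biUnion_of_mem id hT
  let h : Finset V → ℝ := fun I => (if ∀ T ∈ 𝓛, ¬ T ⊆ I then (1:ℝ) else 0) -
    Real.exp (-2 * y) * ((1 + 2 * y) - 2 * ((𝓛.filter (fun T => T ⊆ I)).card : ℝ))
  suffices hs : 0 ≤ ∑ I ∈ IndF 𝒬 Y, h I by
    simp only [h, sum_sub_distrib, sum_boole, ← mul_sum, sum_const, nsmul_eq_mul] at hs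
    linarith
  rw [← sum_fiberwise_of_maps_to (t := (IndF 𝒬 Y).image (fun I => I \ N)) (g := fun I => I \ N)
    (fun I hI => mem_image_of_mem _ hI)]
  apply sum_nonneg
  intro F hF
  obtain ⟨I₀, hI₀, rfl⟩ := mem_image.1 hF
  simp only [IndF, mem_filter, mem_powerset] at hI₀
  obtain ⟨hI₀Y, hI₀⟩ := hI₀
  set F := I₀ \ N with hFdef
  have hFY : F ⊆ Y := sdiff_subset.trans hI₀Y
  have hFN : ∀ a ∈ F, a ∉ N := fun a ha => (mem_sdiff.1 ha).2
  set Fr := N.filter (fun a => ∀ Q ∈ 𝒬, ¬ Q ⊆ insert a F) with hFr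
  have hfib : (IndF 𝒬 Y).filter (fun I => I \ N = F) = Fr.powerset.image (fun A => F ∪ A) := by
    ext I
    simp only [IndF, mem_filter, mem_powerset, mem_image]
    constructor
    · rintro ⟨⟨hIY, hI⟩, hIN⟩
      refine ⟨I ∩ N, ?_, ?_⟩
      · intro a ha
        rw [hFr, mem_filter]
        refine ⟨(mem_inter.1 ha).2, fun Q hQ hQs => hI Q hQ (hQs.trans ?_)⟩
        rw [insert_subset_iff, ← hIN]
        exact ⟨(mem_inter.1 ha).1, sdiff_subset⟩
      · rw [← hIN]; exact sdiff_union_inter I N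
    · rintro ⟨A, hA, rfl⟩
      have hAN : A ⊆ N := hA.trans (filter_subset _ _)
      refine ⟨⟨union_subset hFY (hAN.trans hNY), ?_⟩, ?_⟩
      · intro Q hQ hQs
        have hc := hgood Q hQ (hQs.trans (union_subset hFY (hAN.trans hNY)))
        by_cases hne : (Q ∩ N).Nonempty
        · obtain ⟨a, ha⟩ := hne
          have hall : ∀ b ∈ Q ∩ N, b = a := by
            intro b hb
            exact card_le_one.1 hc b hb a ha
          have haA : a ∈ A := by
            rcases mem_union.1 (hQs (mem_inter.1 ha).1) with h | h
            · exact absurd (mem_inter.1 ha).2 (hFN a h)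
            · exact h
          refine (mem_filter.1 (hA haA)).2 Q hQ ?_
          intro b hb
          rcases mem_union.1 (hQs hb) with h | h
          · exact mem_insert_of_mem h
          · rw [hall b (mem_inter.2 ⟨hb, hAN h⟩)]; exact mem_insert_self _ _
        · refine hI₀ Q hQ ?_
          intro b hb
          rcases mem_union.1 (hQs hb) with h | h
          · exact (mem_sdiff.1 h).1
          · exact absurd ⟨b, mem_inter.2 ⟨hb, hAN h⟩⟩ hne
      · ext a
        simp only [mem_sdiff, mem_union]
        constructor
        · rintro ⟨h | h, h'⟩
          · exact h
          · exact absurd (hAN h) h'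
        · intro h; exact ⟨Or.inl h, hFN a h⟩
  have hsub : ∀ A ∈ Fr.powerset, ∀ T ∈ 𝓛, (T ⊆ F ∪ A ↔ T ⊆ A) := by
    intro A _ T hT
    constructor
    · intro h a ha
      rcases mem_union.1 (h ha) with h | h
      · exact absurd (hTN T hT ha) (hFN a h)
      · exact h
    · intro h; exact h.trans subset_union_right
  rw [hfib, sum_image]
  · have := cube_lemma Fr 𝓛 h3 y
    have e : ∀ A ∈ Fr.powerset, h (F ∪ A) = h A := by
      intro A hA
      simp only [h]
      rw [filter_congr (hsub A hA)]
      congr 1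
      have : (∀ T ∈ 𝓛, ¬ T ⊆ F ∪ A) ↔ (∀ T ∈ 𝓛, ¬ T ⊆ A) :=
        forall₂_congr (fun T hT => not_congr (hsub A hA T hT))
      simp only [this]
    rw [sum_congr rfl e]
    simp only [h, sum_sub_distrib, sum_boole, ← mul_sum, sum_const, nsmul_eq_mul]
    linarith
  · intro A hA B hB hAB
    have hd : ∀ A ∈ Fr.powerset, (F ∪ A) ∩ N = A := by
      intro A hA
      have hAN : A ⊆ N := (mem_powerset.1 hA).trans (filter_subset _ _)
      ext a
      simp only [mem_inter, mem_union]
      constructor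
      · rintro ⟨h | h, h'⟩
        · exact absurd h' (hFN a h)
        · exact h
      · intro h; exact ⟨Or.inr h, hAN h⟩
    rw [← hd A hA, ← hd B hB]
    simp only at hAB
    rw [hAB]

theorem choose_ratio (m n : ℕ) (hnm : n ≤ m) (j : ℕ) (hj : j ≤ n) :
    (m - j).choose (n - j) * m ^ j ≤ m.choose n * n ^ j := by
  induction j with
  | zero => simp
  | succ j ih =>
    have ih' := ih (by omega)
    obtain ⟨a, ha⟩ := Nat.exists_eq_add_of_le hj
    obtain ⟨b, hb⟩ := Nat.exists_eq_add_of_le hnm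
    have e1 : m - j = (m - (j + 1)) + 1 := by omega
    have e2 : n - j = (n - (j + 1)) + 1 := by omega
    have key := Nat.add_one_mul_choose_eq (m - (j + 1)) (n - (j + 1))
    rw [← e1, ← e2] at key
    have hpos : 0 < m - j := by omega
    have hcross : m * (n - j) ≤ n * (m - j) := by
      rw [Nat.mul_sub, Nat.mul_sub, mul_comm n m]
      have := Nat.mul_le_mul_right j hnm
      omega
    apply Nat.le_of_mul_le_mul_left _ hpos
    calc (m - j) * ((m - (j + 1)).choose (n - (j + 1)) * m ^ (j + 1))
        = ((m - j) * (m - (j + 1)).choose (n - (j + 1))) * m ^ (j + 1) := by ring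
      _ = (m - j).choose (n - j) * (n - j) * m ^ (j + 1) := by rw [key]
      _ = ((m - j).choose (n - j) * m ^ j) * (m * (n - j)) := by ring
      _ ≤ (m.choose n * n ^ j) * (n * (m - j)) := Nat.mul_le_mul ih' hcross
      _ = _ := by ring

open Finset in
theorem cover_count {V : Type*} [DecidableEq V] [Fintype V] (n : ℕ) (hn : n ≤ Fintype.card V)
    (S : Finset V) :
    (((univ : Finset V).powersetCard n).filter (fun Y => S ⊆ Y)).card * Fintype.card V ^ S.card ≤
      (Fintype.card V).choose n * n ^ S.card := by
  by_cases hS : S.card ≤ n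
  · refine le_trans (Nat.mul_le_mul_right _ ?_) (choose_ratio _ n hn S.card hS)
    have : (Fintype.card V - S.card).choose (n - S.card) =
        (((univ : Finset V) \ S).powersetCard (n - S.card)).card := by
      rw [card_powersetCard, card_sdiff_of_subset (subset_univ _), card_univ]
    rw [this]
    apply card_le_card_of_injOn (fun Y => Y \ S)
    · intro Y hY
      simp only [coe_filter, mem_powersetCard, Set.mem_ofPred_eq] at hY
      refine mem_powersetCard.2 ⟨sdiff_subset_sdiff (subset_univ _) subset_rfl, ?_⟩
      rw [card_sdiff_of_subset hY.2, hY.1.2]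
    · intro Y hY Z hZ h
      simp only [coe_filter, mem_powersetCard, Set.mem_ofPred_eq] at hY hZ
      simp only at h
      rw [← sdiff_union_of_subset hY.2, ← sdiff_union_of_subset hZ.2, h]
  · have : (((univ : Finset V).powersetCard n).filter (fun Y => S ⊆ Y)) = ∅ := by
      rw [filter_eq_empty_iff]
      intro Y hY h
      rw [mem_powersetCard] at hY
      exact hS (hY.2 ▸ card_le_card h)
    rw [this]; simp

open Finset in
theorem cover_union {V ι : Type*} [DecidableEq V] [Fintype V] (n : ℕ)
    (hn : n ≤ Fintype.card V) (h0 : 0 < Fintype.card V) (P : Finset ι) (S : ι → Finset V) (j : ℕ)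
    (hS : ∀ i ∈ P, (S i).card = j) :
    ((((univ : Finset V).powersetCard n).filter (fun Y => ∃ i ∈ P, S i ⊆ Y)).card : ℝ) ≤
      P.card * ((Fintype.card V).choose n * ((n : ℝ) / Fintype.card V) ^ j) := by
  have h1 : ((univ : Finset V).powersetCard n).filter (fun Y => ∃ i ∈ P, S i ⊆ Y) ⊆
      P.biUnion (fun i => ((univ : Finset V).powersetCard n).filter (fun Y => S i ⊆ Y)) := by
    intro Y hY
    simp only [mem_filter, mem_biUnion] at hY ⊢
    obtain ⟨h, i, hi, hs⟩ := hY
    exact ⟨i, hi, h, hs⟩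
  have h2 := (card_le_card h1).trans card_biUnion_le
  have h3 : ((((univ : Finset V).powersetCard n).filter (fun Y => ∃ i ∈ P, S i ⊆ Y)).card : ℝ) ≤
      ∑ i ∈ P, ((((univ : Finset V).powersetCard n).filter (fun Y => S i ⊆ Y)).card : ℝ) := by
    exact_mod_cast h2
  refine h3.trans ?_
  rw [← nsmul_eq_mul]
  apply sum_le_card_nsmul
  intro i hi
  have := cover_count n hn (S i)
  rw [hS i hi] at this
  rw [div_pow, mul_div_assoc', le_div_iff₀ (by positivity)]
  exact_mod_cast this

open Finset in
theorem deg_step {V : Type*} [DecidableEq V] [Fintype V] (𝒬 : Finset (Finset V))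
    (h4 : ∀ Q ∈ 𝒬, Q.card = 4) (U : Finset V) (hU : U.card < 4) (B : ℕ)
    (hB : ∀ x, x ∉ U → (𝒬.filter (fun Q => insert x U ⊆ Q)).card ≤ B) :
    (𝒬.filter (fun Q => U ⊆ Q)).card ≤ Fintype.card V * B := by
  have h1 : 𝒬.filter (fun Q => U ⊆ Q) ⊆
      (univ \ U).biUnion (fun x => 𝒬.filter (fun Q => insert x U ⊆ Q)) := by
    intro Q hQ
    rw [mem_filter] at hQ
    obtain ⟨x, hx, hxU⟩ := exists_mem_notMem_of_card_lt_card (s := U) (t := Q)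
      (by rw [h4 Q hQ.1]; exact hU)
    simp only [mem_biUnion, mem_sdiff, mem_univ, true_and, mem_filter]
    exact ⟨x, hxU, hQ.1, insert_subset hx hQ.2⟩
  refine (card_le_card h1).trans ((card_biUnion_le_card_mul _ _ B ?_).trans ?_)
  · intro x hx
    exact hB x (mem_sdiff.1 hx).2
  · exact Nat.mul_le_mul_right _ (card_le_univ _)

open Finset in
theorem deg2 {V : Type*} [DecidableEq V] [Fintype V] (𝒬 : Finset (Finset V))
    (h4 : ∀ Q ∈ 𝒬, Q.card = 4)
    (hcd : ∀ U : Finset V, U.card = 3 → (𝒬.filter (fun Q => U ⊆ Q)).card ≤ 3)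
    (U : Finset V) (hU : U.card = 2) :
    (𝒬.filter (fun Q => U ⊆ Q)).card ≤ Fintype.card V * 3 :=
  deg_step 𝒬 h4 U (by omega) 3 (fun x hx => hcd _ (by rw [card_insert_of_notMem hx, hU]))

open Finset in
theorem deg1 {V : Type*} [DecidableEq V] [Fintype V] (𝒬 : Finset (Finset V))
    (h4 : ∀ Q ∈ 𝒬, Q.card = 4)
    (hcd : ∀ U : Finset V, U.card = 3 → (𝒬.filter (fun Q => U ⊆ Q)).card ≤ 3)
    (v : V) :
    (𝒬.filter (fun Q => v ∈ Q)).card ≤ Fintype.card V * (Fintype.card V * 3) := by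
  have := deg_step 𝒬 h4 {v} (by simp) (Fintype.card V * 3)
    (fun x hx => deg2 𝒬 h4 hcd _ (by rw [card_insert_of_notMem hx, card_singleton]))
  simpa using this

open Finset in
theorem pair_count {V : Type*} [DecidableEq V] [Fintype V] (𝒬 : Finset (Finset V))
    (h4 : ∀ Q ∈ 𝒬, Q.card = 4)
    (hcd : ∀ U : Finset V, U.card = 3 → (𝒬.filter (fun Q => U ⊆ Q)).card ≤ 3)
    (v : V) (r B : ℕ) (hB : ∀ U : Finset V, U.card = r → (𝒬.filter (fun Q => U ⊆ Q)).card ≤ B) :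
    ((𝒬 ×ˢ 𝒬).filter (fun p => v ∈ p.1 ∧ (p.1 ∩ p.2).card = r)).card ≤
      Fintype.card V * (Fintype.card V * 3) * (Nat.choose 4 r * B) := by
  have h1 : (𝒬 ×ˢ 𝒬).filter (fun p => v ∈ p.1 ∧ (p.1 ∩ p.2).card = r) ⊆
      (𝒬.filter (fun Q => v ∈ Q)).biUnion (fun Q₁ => (Q₁.powersetCard r).biUnion (fun U =>
        (𝒬.filter (fun Q => U ⊆ Q)).image (fun Q => (Q₁, Q)))) := by
    rintro ⟨Q₁, Q₂⟩ hp
    simp only [mem_filter, mem_product] at hp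
    simp only [mem_biUnion, mem_filter, mem_powersetCard, mem_image]
    exact ⟨Q₁, ⟨hp.1.1, hp.2.1⟩, Q₁ ∩ Q₂, ⟨inter_subset_left, hp.2.2⟩, Q₂,
      ⟨hp.1.2, inter_subset_right⟩, rfl⟩
  refine (card_le_card h1).trans ((card_biUnion_le_card_mul _ _ (Nat.choose 4 r * B) ?_).trans ?_)
  · intro Q₁ hQ₁
    refine (card_biUnion_le_card_mul _ _ B ?_).trans ?_
    · intro U hU
      exact card_image_le.trans (hB U (mem_powersetCard.1 hU).2)
    · rw [card_powersetCard, h4 _ (mem_filter.1 hQ₁).1]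
  · exact Nat.mul_le_mul_right _ (deg1 𝒬 h4 hcd v)

open Finset in
theorem triple_count {V : Type*} [DecidableEq V] [Fintype V] (𝒬 : Finset (Finset V))
    (h4 : ∀ Q ∈ 𝒬, Q.card = 4)
    (hcd : ∀ U : Finset V, U.card = 3 → (𝒬.filter (fun Q => U ⊆ Q)).card ≤ 3)
    (v : V) :
    ((𝒬 ×ˢ (𝒬 ×ˢ 𝒬)).filter (fun p => v ∈ p.1 ∧ v ∈ p.2.1 ∧ v ∉ p.2.2 ∧
      (p.1 ∩ p.2.1).card = 1 ∧ (p.2.2 ∩ p.1).card = 1 ∧ (p.2.2 ∩ p.2.1).card = 1)).card ≤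
      (Fintype.card V * (Fintype.card V * 3)) * ((Fintype.card V * (Fintype.card V * 3)) *
        (16 * (Fintype.card V * 3))) := by
  have h1 : (𝒬 ×ˢ (𝒬 ×ˢ 𝒬)).filter (fun p => v ∈ p.1 ∧ v ∈ p.2.1 ∧ v ∉ p.2.2 ∧
      (p.1 ∩ p.2.1).card = 1 ∧ (p.2.2 ∩ p.1).card = 1 ∧ (p.2.2 ∩ p.2.1).card = 1) ⊆
      (𝒬.filter (fun Q => v ∈ Q)).biUnion (fun Q₁ => (𝒬.filter (fun Q => v ∈ Q)).biUnion
        (fun Q₂ => ((Q₁ ×ˢ Q₂).filter (fun a => a.1 ≠ a.2)).biUnion (fun a =>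
        (𝒬.filter (fun Q => {a.1, a.2} ⊆ Q)).image (fun Q => (Q₁, Q₂, Q))))) := by
    rintro ⟨Q₁, Q₂, Q⟩ hp
    simp only [mem_filter, mem_product] at hp
    obtain ⟨⟨hQ₁, hQ₂, hQ⟩, hv1, hv2, hv, h12, hq1, hq2⟩ := hp
    simp only [mem_biUnion, mem_filter, mem_image, mem_product]
    obtain ⟨a, ha⟩ := card_eq_one.1 hq1
    obtain ⟨b, hb⟩ := card_eq_one.1 hq2
    have ha' : a ∈ Q ∩ Q₁ := by rw [ha]; exact mem_singleton_self _
    have hb' : b ∈ Q ∩ Q₂ := by rw [hb]; exact mem_singleton_self _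
    rw [mem_inter] at ha' hb'
    refine ⟨Q₁, ⟨hQ₁, hv1⟩, Q₂, ⟨hQ₂, hv2⟩, (a, b), ⟨⟨ha'.2, hb'.2⟩, ?_⟩, Q, ⟨hQ, ?_⟩, rfl⟩
    · intro hab
      simp only at hab
      subst hab
      have : a = v := card_le_one.1 h12.le a (mem_inter.2 ⟨ha'.2, hb'.2⟩) v
        (mem_inter.2 ⟨hv1, hv2⟩)
      exact hv (this ▸ ha'.1)
    · intro x hx
      simp only [mem_insert, mem_singleton] at hx
      rcases hx with rfl | rfl
      · exact ha'.1
      · exact hb'.1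
  refine (card_le_card h1).trans ((card_biUnion_le_card_mul _ _
    ((Fintype.card V * (Fintype.card V * 3)) * (16 * (Fintype.card V * 3))) ?_).trans
    (Nat.mul_le_mul_right _ (deg1 𝒬 h4 hcd v)))
  intro Q₁ hQ₁
  refine (card_biUnion_le_card_mul _ _ (16 * (Fintype.card V * 3)) ?_).trans
    (Nat.mul_le_mul_right _ (deg1 𝒬 h4 hcd v))
  intro Q₂ hQ₂
  refine (card_biUnion_le_card_mul _ _ (Fintype.card V * 3) ?_).trans
    (Nat.mul_le_mul_right _ ?_)
  · intro a ha
    exact card_image_le.trans (deg2 𝒬 h4 hcd _ (card_pair (mem_filter.1 ha).2))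
  · refine (card_filter_le _ _).trans ?_
    rw [card_product, h4 _ (mem_filter.1 hQ₁).1, h4 _ (mem_filter.1 hQ₂).1]

open Finset in
theorem bad_count {V : Type*} [DecidableEq V] [Fintype V] (𝒬 : Finset (Finset V))
    (h4 : ∀ Q ∈ 𝒬, Q.card = 4)
    (hcd : ∀ U : Finset V, U.card = 3 → (𝒬.filter (fun Q => U ⊆ Q)).card ≤ 3)
    (v : V) (n : ℕ) (hn : n ≤ Fintype.card V) (m p : ℝ) (hm : m = Fintype.card V)
    (hp : p = n / m) :
    ((((univ : Finset V).powersetCard n).filter (fun Y => v ∉ Y ∧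
      ¬ ∀ Q ∈ 𝒬, Q ⊆ Y → (Q ∩ (LkF 𝒬 Y v).biUnion id).card ≤ 1)).card : ℝ) ≤
    (Fintype.card V).choose n * (54 * m ^ 3 * p ^ 5 + 36 * m ^ 2 * p ^ 4 + 432 * m ^ 5 * p ^ 8) := by
  have h0 : 0 < Fintype.card V := Fintype.card_pos_iff.2 ⟨v⟩
  set P2 := (𝒬 ×ˢ 𝒬).filter (fun p => v ∈ p.1 ∧ (p.1 ∩ p.2).card = 2) with hP2
  set P3 := (𝒬 ×ˢ 𝒬).filter (fun p => v ∈ p.1 ∧ (p.1 ∩ p.2).card = 3) with hP3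
  set P8 := (𝒬 ×ˢ (𝒬 ×ˢ 𝒬)).filter (fun p => v ∈ p.1 ∧ v ∈ p.2.1 ∧ v ∉ p.2.2 ∧
      (p.1 ∩ p.2.1).card = 1 ∧ (p.2.2 ∩ p.1).card = 1 ∧ (p.2.2 ∩ p.2.1).card = 1) with hP8
  have c2 := pair_count 𝒬 h4 hcd v 2 _ (deg2 𝒬 h4 hcd)
  have c3 := pair_count 𝒬 h4 hcd v 3 _ hcd
  have c8 := triple_count 𝒬 h4 hcd v
  rw [← hP2] at c2
  rw [← hP3] at c3
  rw [← hP8] at c8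
  have u2 := cover_union n hn h0 P2 (fun p => (p.1 ∪ p.2).erase v) 5 (by
    rintro ⟨Q₁, Q₂⟩ h
    simp only [hP2, mem_filter, mem_product] at h
    have := card_union_add_card_inter Q₁ Q₂
    rw [h4 _ h.1.1, h4 _ h.1.2, h.2.2] at this
    rw [card_erase_of_mem (mem_union_left _ h.2.1)]
    simp only
    omega)
  have u3 := cover_union n hn h0 P3 (fun p => (p.1 ∪ p.2).erase v) 4 (by
    rintro ⟨Q₁, Q₂⟩ h
    simp only [hP3, mem_filter, mem_product] at h
    have := card_union_add_card_inter Q₁ Q₂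
    rw [h4 _ h.1.1, h4 _ h.1.2, h.2.2] at this
    rw [card_erase_of_mem (mem_union_left _ h.2.1)]
    simp only
    omega)
  have u8 := cover_union n hn h0 P8 (fun p => ((p.1 ∪ p.2.1) ∪ p.2.2).erase v) 8 (by
    rintro ⟨Q₁, Q₂, Q⟩ h
    simp only [hP8, mem_filter, mem_product] at h
    obtain ⟨⟨hQ₁, hQ₂, hQ⟩, hv1, hv2, hv, h12, hq1, hq2⟩ := h
    have e1 := card_union_add_card_inter Q₁ Q₂
    have e2 := card_union_add_card_inter (Q₁ ∪ Q₂) Q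
    have e3 : ((Q₁ ∪ Q₂) ∩ Q).card = 2 := by
      have : (Q₁ ∪ Q₂) ∩ Q = (Q ∩ Q₁) ∪ (Q ∩ Q₂) := by
        rw [inter_comm, inter_union_distrib_left]
      rw [this, card_union_of_disjoint, hq1, hq2]
      rw [Finset.disjoint_left]
      intro a ha hb
      rw [mem_inter] at ha hb
      have : a = v := card_le_one.1 h12.le a (mem_inter.2 ⟨ha.2, hb.2⟩) v
        (mem_inter.2 ⟨hv1, hv2⟩)
      exact hv (this ▸ ha.1)
    rw [h4 _ hQ₁, h4 _ hQ₂, h12] at e1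
    rw [h4 _ hQ, e3] at e2
    rw [card_erase_of_mem (mem_union_left _ (mem_union_left _ hv1))]
    simp only
    omega)
  set PS := (univ : Finset V).powersetCard n with hPS
  have hsub : PS.filter (fun Y => v ∉ Y ∧
      ¬ ∀ Q ∈ 𝒬, Q ⊆ Y → (Q ∩ (LkF 𝒬 Y v).biUnion id).card ≤ 1) ⊆
      PS.filter (fun Y => ∃ i ∈ P2, (i.1 ∪ i.2).erase v ⊆ Y) ∪
      PS.filter (fun Y => ∃ i ∈ P3, (i.1 ∪ i.2).erase v ⊆ Y) ∪
      PS.filter (fun Y => ∃ i ∈ P8, ((i.1 ∪ i.2.1) ∪ i.2.2).erase v ⊆ Y) := by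
    intro Y hY
    simp only [mem_filter] at hY
    obtain ⟨hY, hvY, hbad⟩ := hY
    push Not at hbad
    obtain ⟨Q, hQ, hQY, hcard⟩ := hbad
    obtain ⟨a, ha, b, hb, hab⟩ := one_lt_card.1 hcard
    simp only [mem_inter, mem_biUnion, id, LkF, mem_filter, mem_powerset] at ha hb
    obtain ⟨haQ, T₁, ⟨hT₁Y, hT₁⟩, haT₁⟩ := ha
    obtain ⟨hbQ, T₂, ⟨hT₂Y, hT₂⟩, hbT₂⟩ := hb
    by_contra hcon
    simp only [mem_union, mem_filter, hY, true_and, not_or] at hcon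
    obtain ⟨⟨n2, n3⟩, n8⟩ := hcon
    have hvQ : v ∉ Q := fun h => hvY (hQY h)
    -- no two distinct edges through `v` overlap in two or three vertices
    have key : ∀ T, T ⊆ Y → insert v T ∈ 𝒬 → ∀ Q' ∈ 𝒬, Q'.erase v ⊆ Y → Q' ≠ insert v T →
        (insert v T ∩ Q').card ≤ 1 := by
      intro T hTY hT Q' hQ' hQ'Y hne
      have hle : (insert v T ∩ Q').card < 4 := by
        by_contra hge
        push Not at hge
        have e1 : insert v T ∩ Q' = insert v T :=
          eq_of_subset_of_card_le inter_subset_left (by rw [h4 _ hT]; exact hge)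
        have e2 : insert v T ∩ Q' = Q' :=
          eq_of_subset_of_card_le inter_subset_right (by rw [h4 _ hQ']; exact hge)
        exact hne (e2.symm.trans e1)
      have hsubY : (insert v T ∪ Q').erase v ⊆ Y := by
        intro x hx
        rw [mem_erase, mem_union, mem_insert] at hx
        obtain ⟨hxv, (hx | hx) | hx⟩ := hx
        · exact absurd hx hxv
        · exact hTY hx
        · exact hQ'Y (mem_erase.2 ⟨hxv, hx⟩)
      have g2 : (insert v T ∩ Q').card ≠ 2 := by
        intro h
        exact n2 ⟨(insert v T, Q'), by
          simp only [hP2, mem_filter, mem_product]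
          exact ⟨⟨hT, hQ'⟩, mem_insert_self _ _, h⟩, hsubY⟩
      have g3 : (insert v T ∩ Q').card ≠ 3 := by
        intro h
        exact n3 ⟨(insert v T, Q'), by
          simp only [hP3, mem_filter, mem_product]
          exact ⟨⟨hT, hQ'⟩, mem_insert_self _ _, h⟩, hsubY⟩
      omega
    have k1 := key T₁ hT₁Y hT₁ Q hQ ((erase_subset _ _).trans hQY)
      (fun h => hvQ (h ▸ mem_insert_self _ _))
    have k2 := key T₂ hT₂Y hT₂ Q hQ ((erase_subset _ _).trans hQY)
      (fun h => hvQ (h ▸ mem_insert_self _ _))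
    have m1 : a ∈ insert v T₁ ∩ Q := mem_inter.2 ⟨mem_insert_of_mem haT₁, haQ⟩
    have m2 : b ∈ insert v T₂ ∩ Q := mem_inter.2 ⟨mem_insert_of_mem hbT₂, hbQ⟩
    have hne : insert v T₂ ≠ insert v T₁ := by
      intro h
      rw [h] at m2
      exact hab (card_le_one.1 k1 a m1 b m2)
    have k3 := key T₁ hT₁Y hT₁ (insert v T₂) hT₂ ((erase_insert_subset _ _).trans hT₂Y) hne
    have m3 : v ∈ insert v T₁ ∩ insert v T₂ :=
      mem_inter.2 ⟨mem_insert_self _ _, mem_insert_self _ _⟩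
    refine n8 ⟨(insert v T₁, insert v T₂, Q), ?_, ?_⟩
    · simp only [hP8, mem_filter, mem_product]
      refine ⟨⟨hT₁, hT₂, hQ⟩, mem_insert_self _ _, mem_insert_self _ _, hvQ, ?_, ?_, ?_⟩
      · exact le_antisymm k3 (card_pos.2 ⟨v, m3⟩)
      · rw [inter_comm]; exact le_antisymm k1 (card_pos.2 ⟨a, m1⟩)
      · rw [inter_comm]; exact le_antisymm k2 (card_pos.2 ⟨b, m2⟩)
    · intro x hx
      simp only [mem_erase, mem_union, mem_insert] at hx
      obtain ⟨hxv, ((hx | hx) | (hx | hx)) | hx⟩ := hx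
      · exact absurd hx hxv
      · exact hT₁Y hx
      · exact absurd hx hxv
      · exact hT₂Y hx
      · exact hQY hx
  have hc : ((PS.filter (fun Y => v ∉ Y ∧
      ¬ ∀ Q ∈ 𝒬, Q ⊆ Y → (Q ∩ (LkF 𝒬 Y v).biUnion id).card ≤ 1)).card : ℝ) ≤
      (PS.filter (fun Y => ∃ i ∈ P2, (i.1 ∪ i.2).erase v ⊆ Y)).card +
      (PS.filter (fun Y => ∃ i ∈ P3, (i.1 ∪ i.2).erase v ⊆ Y)).card +
      (PS.filter (fun Y => ∃ i ∈ P8, ((i.1 ∪ i.2.1) ∪ i.2.2).erase v ⊆ Y)).card := by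
    have := (card_le_card hsub).trans ((card_union_le _ _).trans
      (Nat.add_le_add_right (card_union_le _ _) _))
    exact_mod_cast this
  refine hc.trans ?_
  rw [← hm] at u2 u3 u8
  rw [← hp] at u2 u3 u8
  have hp0 : 0 ≤ p := by rw [hp, hm]; positivity
  have c2' : (P2.card : ℝ) ≤ m * (m * 3) * (6 * (m * 3)) := by
    rw [hm]; exact_mod_cast c2
  have c3' : (P3.card : ℝ) ≤ m * (m * 3) * (4 * 3) := by
    rw [hm]; exact_mod_cast c3
  have c8' : (P8.card : ℝ) ≤ (m * (m * 3)) * ((m * (m * 3)) * (16 * (m * 3))) := by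
    rw [hm]; exact_mod_cast c8
  have hC : (0:ℝ) ≤ (Fintype.card V).choose n := by positivity
  have v2 := u2.trans (mul_le_mul_of_nonneg_right c2' (mul_nonneg hC (pow_nonneg hp0 5)))
  have v3 := u3.trans (mul_le_mul_of_nonneg_right c3' (mul_nonneg hC (pow_nonneg hp0 4)))
  have v8 := u8.trans (mul_le_mul_of_nonneg_right c8' (mul_nonneg hC (pow_nonneg hp0 8)))
  refine (add_le_add (add_le_add v2 v3) v8).trans (le_of_eq ?_)
  ring

/-- probability that a random independent subset of `Y` extends by `v` -/
noncomputable def PrF {V : Type*} [DecidableEq V] (𝒬 : Finset (Finset V)) (Y : Finset V) (v : V) : ℝ :=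
  (((IndF 𝒬 Y).filter (fun I => ∀ T ∈ LkF 𝒬 Y v, ¬ T ⊆ I)).card : ℝ) / ((IndF 𝒬 Y).card : ℝ)

/-- expected number of link edges -/
noncomputable def ExF {V : Type*} [DecidableEq V] (𝒬 : Finset (Finset V)) (Y : Finset V) (v : V) : ℝ :=
  (∑ I ∈ IndF 𝒬 Y, (((LkF 𝒬 Y v).filter (fun T => T ⊆ I)).card : ℝ)) / ((IndF 𝒬 Y).card : ℝ)

open Finset in
theorem IndF_pos {V : Type*} [DecidableEq V] (𝒬 : Finset (Finset V))
    (h4 : ∀ Q ∈ 𝒬, Q.card = 4) (Y : Finset V) : 0 < (IndF 𝒬 Y).card := by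
  refine card_pos.2 ⟨∅, ?_⟩
  simp only [IndF, mem_filter, mem_powerset, empty_subset, true_and]
  intro Q hQ h
  rw [subset_empty] at h
  have := h4 Q hQ
  rw [h] at this
  simp at this

open Finset in
theorem stepA {V : Type*} [DecidableEq V] (𝒬 : Finset (Finset V))
    (h4 : ∀ Q ∈ 𝒬, Q.card = 4) (s : ℕ) (Z : Finset V)
    (hs : ∀ I ∈ IndF 𝒬 Z, I.card ≤ s) :
    ∑ v ∈ Z, PrF 𝒬 (Z.erase v) v ≤ 2 * s := by
  have hZ := IndF_pos 𝒬 h4 Z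
  have hZ' : (0:ℝ) < (IndF 𝒬 Z).card := by exact_mod_cast hZ
  have h1 : ∀ v ∈ Z, PrF 𝒬 (Z.erase v) v ≤
      2 * (((IndF 𝒬 Z).filter (fun I => v ∈ I)).card : ℝ) / ((IndF 𝒬 Z).card : ℝ) := by
    intro v hv
    have hY := IndF_pos 𝒬 h4 (Z.erase v)
    have hY' : (0:ℝ) < (IndF 𝒬 (Z.erase v)).card := by exact_mod_cast hY
    have e1 : ((IndF 𝒬 (Z.erase v)).filter (fun I => ∀ T ∈ LkF 𝒬 (Z.erase v) v, ¬ T ⊆ I)).card ≤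
        ((IndF 𝒬 Z).filter (fun I => v ∈ I)).card := by
      apply card_le_card_of_injOn (fun J => insert v J)
      · intro J hJ
        obtain ⟨hJa, hJ2⟩ := mem_filter.1 (mem_coe.1 hJ)
        obtain ⟨hJZ, hJ1⟩ := mem_filter.1 hJa
        rw [mem_powerset] at hJZ
        refine mem_coe.2 ?_
        simp only [IndF, mem_filter, mem_powerset]
        refine ⟨⟨insert_subset hv (hJZ.trans (erase_subset _ _)), ?_⟩, mem_insert_self _ _⟩
        intro Q hQ hQs
        have hQJ : Q.erase v ⊆ J := by
          intro x hx
          rw [mem_erase] at hx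
          rcases mem_insert.1 (hQs hx.2) with h | h
          · exact absurd h hx.1
          · exact h
        by_cases hvQ : v ∈ Q
        · exact hJ2 (Q.erase v) (mem_filter.2 ⟨mem_powerset.2 (hQJ.trans hJZ), by rw [insert_erase hvQ]; exact hQ⟩) hQJ
        · rw [erase_eq_of_notMem hvQ] at hQJ
          exact hJ1 Q hQ hQJ
      · intro J hJ K hK hJK
        simp only [coe_filter, IndF, mem_filter, mem_powerset, Set.mem_ofPred_eq] at hJ hK
        have a1 : v ∉ J := fun h => (mem_erase.1 (hJ.1.1 h)).1 rfl
        have a2 : v ∉ K := fun h => (mem_erase.1 (hK.1.1 h)).1 rfl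
        simp only at hJK
        rw [← erase_insert a1, ← erase_insert a2, hJK]
    have e2 : (IndF 𝒬 Z).card ≤ 2 * (IndF 𝒬 (Z.erase v)).card := by
      rw [← card_filter_add_card_filter_not (s := IndF 𝒬 Z) (fun I => v ∈ I), two_mul]
      apply Nat.add_le_add
      · apply card_le_card_of_injOn (fun J => J.erase v)
        · intro J hJ
          simp only [coe_filter, IndF, mem_filter, mem_powerset, Set.mem_ofPred_eq] at hJ
          simp only [coe_filter, IndF, mem_powerset, Set.mem_ofPred_eq]
          exact ⟨erase_subset_erase _ hJ.1.1, fun Q hQ h => hJ.1.2 Q hQ (h.trans (erase_subset _ _))⟩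
        · intro J hJ K hK hJK
          simp only [coe_filter, Set.mem_ofPred_eq] at hJ hK
          simp only at hJK
          rw [← insert_erase hJ.2, ← insert_erase hK.2, hJK]
      · apply card_le_card
        intro J hJ
        simp only [IndF, mem_filter, mem_powerset] at hJ ⊢
        exact ⟨subset_erase.2 ⟨hJ.1.1, hJ.2⟩, hJ.1.2⟩
    unfold PrF
    rw [div_le_div_iff₀ hY' hZ']
    have e1' : ((((IndF 𝒬 (Z.erase v)).filter
      (fun I => ∀ T ∈ LkF 𝒬 (Z.erase v) v, ¬ T ⊆ I)).card : ℕ) : ℝ) ≤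
        (((IndF 𝒬 Z).filter (fun I => v ∈ I)).card : ℝ) := by exact_mod_cast e1
    have e2' : ((IndF 𝒬 Z).card : ℝ) ≤ 2 * ((IndF 𝒬 (Z.erase v)).card : ℝ) := by exact_mod_cast e2
    calc _ ≤ (((IndF 𝒬 Z).filter (fun I => v ∈ I)).card : ℝ) *
          (2 * ((IndF 𝒬 (Z.erase v)).card : ℝ)) :=
          mul_le_mul e1' e2' (by positivity) (by positivity)
      _ = _ := by ring
  refine (sum_le_sum h1).trans ?_
  rw [← sum_div, ← mul_sum, div_le_iff₀ hZ']
  have h2 : ∑ v ∈ Z, ((IndF 𝒬 Z).filter (fun I => v ∈ I)).card ≤ (IndF 𝒬 Z).card * s := by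
    have : ∑ v ∈ Z, ((IndF 𝒬 Z).filter (fun I => v ∈ I)).card =
        ∑ I ∈ IndF 𝒬 Z, (Z.filter (fun v => v ∈ I)).card :=
      sum_card_bipartiteAbove_eq_sum_card_bipartiteBelow (fun v I => v ∈ I)
    rw [this, ← smul_eq_mul]
    apply sum_le_card_nsmul
    intro I hI
    refine le_trans (card_le_card ?_) (hs I hI)
    intro v hv
    exact (mem_filter.1 hv).2
  have h2' : ∑ v ∈ Z, (((IndF 𝒬 Z).filter (fun I => v ∈ I)).card : ℝ) ≤
    ((IndF 𝒬 Z).card : ℝ) * s := by exact_mod_cast h2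
  nlinarith

open Finset in
theorem stepB {V : Type*} [DecidableEq V] [Fintype V] (n : ℕ) (g : Finset V → V → ℝ) :
    ∑ Z ∈ (univ : Finset V).powersetCard (n + 1), ∑ v ∈ Z, g (Z.erase v) v =
    ∑ Y ∈ (univ : Finset V).powersetCard n, ∑ v ∈ Yᶜ, g Y v := by
  rw [sum_sigma', sum_sigma']
  refine sum_bij' (fun x _ => ⟨x.1.erase x.2, x.2⟩) (fun x _ => ⟨insert x.2 x.1, x.2⟩)
    ?_ ?_ ?_ ?_ ?_
  · rintro ⟨Z, v⟩ h
    simp only [mem_sigma, mem_powersetCard, subset_univ, true_and, mem_compl] at h ⊢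
    exact ⟨by rw [card_erase_of_mem h.2, h.1]; rfl, by simp⟩
  · rintro ⟨Y, v⟩ h
    simp only [mem_sigma, mem_powersetCard, subset_univ, true_and, mem_compl] at h ⊢
    exact ⟨by rw [card_insert_of_notMem h.2, h.1], mem_insert_self _ _⟩
  · rintro ⟨Z, v⟩ h
    simp only [mem_sigma] at h
    simp [insert_erase h.2]
  · rintro ⟨Y, v⟩ h
    simp only [mem_sigma, mem_compl] at h
    simp [erase_insert h.2]
  · rintro ⟨Z, v⟩ h
    rfl

open Finset in
theorem stepC {V : Type*} [DecidableEq V] [Fintype V] (𝒬 : Finset (Finset V))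
    (h4 : ∀ Q ∈ 𝒬, Q.card = 4)
    (hcd : ∀ U : Finset V, U.card = 3 → (𝒬.filter (fun Q => U ⊆ Q)).card ≤ 3)
    (s : ℕ) (Y : Finset V) (hs : ∀ I ∈ IndF 𝒬 Y, I.card ≤ s) :
    ∑ v ∈ Yᶜ, ExF 𝒬 Y v ≤ (s : ℝ) ^ 3 / 2 := by
  have hY : (0:ℝ) < (IndF 𝒬 Y).card := by exact_mod_cast IndF_pos 𝒬 h4 Y
  unfold ExF
  rw [← sum_div, div_le_iff₀ hY, sum_comm, mul_comm, ← nsmul_eq_mul]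
  apply sum_le_card_nsmul
  intro I hI
  have hIY : I ⊆ Y := by
    simp only [IndF, mem_filter, mem_powerset] at hI
    exact hI.1
  have h1 : ∑ v ∈ Yᶜ, ((LkF 𝒬 Y v).filter (fun T => T ⊆ I)).card ≤ I.card.choose 3 * 3 := by
    have e1 : ∀ v ∈ Yᶜ, ((LkF 𝒬 Y v).filter (fun T => T ⊆ I)).card ≤
        ((I.powersetCard 3).filter (fun T => insert v T ∈ 𝒬)).card := by
      intro v hv
      rw [mem_compl] at hv
      apply card_le_card
      intro T hT
      simp only [LkF, mem_filter, mem_powerset, mem_powersetCard] at hT ⊢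
      obtain ⟨⟨hTY, hT⟩, hTI⟩ := hT
      have := h4 _ hT
      rw [card_insert_of_notMem (fun h => hv (hTY h))] at this
      exact ⟨⟨hTI, by omega⟩, hT⟩
    refine (sum_le_sum e1).trans ?_
    have : ∑ v ∈ Yᶜ, ((I.powersetCard 3).filter (fun T => insert v T ∈ 𝒬)).card =
        ∑ T ∈ I.powersetCard 3, (Yᶜ.filter (fun v => insert v T ∈ 𝒬)).card :=
      sum_card_bipartiteAbove_eq_sum_card_bipartiteBelow (fun v T => insert v T ∈ 𝒬)
    rw [this, ← card_powersetCard, ← smul_eq_mul]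
    apply sum_le_card_nsmul
    intro T hT
    rw [mem_powersetCard] at hT
    refine le_trans ?_ (hcd T hT.2)
    apply card_le_card_of_injOn (fun v => insert v T)
    · intro v hv
      simp only [coe_filter, mem_compl, Set.mem_ofPred_eq] at hv ⊢
      exact ⟨hv.2, subset_insert _ _⟩
    · intro v hv w hw hvw
      simp only [coe_filter, mem_compl, Set.mem_ofPred_eq] at hv hw
      simp only at hvw
      have : v ∈ insert w T := hvw ▸ mem_insert_self _ _
      rcases mem_insert.1 this with h | h
      · exact h
      · exact absurd (hIY (hT.1 h)) hv.1
  have h2 : (∑ v ∈ Yᶜ, (((LkF 𝒬 Y v).filter (fun T => T ⊆ I)).card : ℝ)) ≤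
      (I.card.choose 3 : ℝ) * 3 := by exact_mod_cast h1
  refine h2.trans ?_
  have h3 : (I.card.choose 3 : ℝ) ≤ (I.card : ℝ) ^ 3 / 6 := by
    have := Nat.choose_le_pow_div (α := ℝ) 3 I.card
    simpa [Nat.factorial] using this
  have h5 : (I.card : ℝ) ^ 3 ≤ (s : ℝ) ^ 3 := by
    have : (I.card : ℝ) ≤ s := by exact_mod_cast hs I hI
    exact pow_le_pow_left₀ (by positivity) this 3
  linarith

/-- no edge inside `Y` meets the link twice -/
def GoodF {V : Type*} [DecidableEq V] (𝒬 : Finset (Finset V)) (Y : Finset V) (v : V) : Prop :=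
  ∀ Q ∈ 𝒬, Q ⊆ Y → (Q ∩ (LkF 𝒬 Y v).biUnion id).card ≤ 1

instance {V : Type*} [DecidableEq V] (𝒬 : Finset (Finset V)) (Y : Finset V) (v : V) :
    Decidable (GoodF 𝒬 Y v) := by
  unfold GoodF
  infer_instance

open Finset in
theorem stepD {V : Type*} [DecidableEq V] (𝒬 : Finset (Finset V))
    (h4 : ∀ Q ∈ 𝒬, Q.card = 4) (Y : Finset V) (v : V) (hv : v ∉ Y) (y : ℝ) :
    Real.exp (-2 * y) * ((1 + 2 * y) * (1 - if ¬ GoodF 𝒬 Y v then (1:ℝ) else 0) -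
      2 * ExF 𝒬 Y v) ≤ PrF 𝒬 Y v := by
  have hY : (0:ℝ) < (IndF 𝒬 Y).card := by exact_mod_cast IndF_pos 𝒬 h4 Y
  by_cases hg : GoodF 𝒬 Y v
  · have := local_lemma 𝒬 h4 Y v hv hg y
    rw [if_neg (by simpa using hg)]
    unfold PrF ExF
    rw [le_div_iff₀ hY]
    refine le_trans (le_of_eq ?_) this
    rw [mul_assoc, sub_mul, mul_assoc 2, div_mul_cancel₀ _ hY.ne', sub_zero, mul_one]
  · have h1 : 0 ≤ ExF 𝒬 Y v :=
      div_nonneg (sum_nonneg (fun _ _ => Nat.cast_nonneg _)) (Nat.cast_nonneg _)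
    have h2 : 0 ≤ PrF 𝒬 Y v := div_nonneg (Nat.cast_nonneg _) (Nat.cast_nonneg _)
    rw [if_pos hg]
    have := mul_nonneg (Real.exp_pos (-2 * y)).le h1
    rw [sub_self, mul_zero, zero_sub, mul_neg]
    linarith

open Finset in
theorem bad_count2 {V : Type*} [DecidableEq V] [Fintype V] (𝒬 : Finset (Finset V))
    (h4 : ∀ Q ∈ 𝒬, Q.card = 4)
    (hcd : ∀ U : Finset V, U.card = 3 → (𝒬.filter (fun Q => U ⊆ Q)).card ≤ 3)
    (v : V) (n : ℕ) (hn : n ≤ Fintype.card V) (m p : ℝ) (hm : m = Fintype.card V)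
    (hp : p = n / m) :
    ((((univ : Finset V).powersetCard n).filter (fun Y => v ∉ Y ∧ ¬ GoodF 𝒬 Y v)).card : ℝ) ≤
    (Fintype.card V).choose n *
      (54 * m ^ 3 * p ^ 5 + 36 * m ^ 2 * p ^ 4 + 432 * m ^ 5 * p ^ 8) := by
  refine le_trans (Nat.cast_le.2 (card_le_card ?_)) (bad_count 𝒬 h4 hcd v n hn m p hm hp)
  intro Y hY
  obtain ⟨h1, h2, h3⟩ := mem_filter.1 hY
  exact mem_filter.2 ⟨h1, h2, h3⟩

open Finset in
theorem main_ineq {V : Type*} [DecidableEq V] [Fintype V] (𝒬 : Finset (Finset V))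
    (h4 : ∀ Q ∈ 𝒬, Q.card = 4)
    (hcd : ∀ U : Finset V, U.card = 3 → (𝒬.filter (fun Q => U ⊆ Q)).card ≤ 3)
    (s n : ℕ) (hs : ∀ I : Finset V, (∀ Q ∈ 𝒬, ¬ Q ⊆ I) → I.card ≤ s)
    (m p : ℝ) (hm : m = Fintype.card V) (hp : p = n / m) (h0 : 0 < m)
    (hn : (n : ℝ) ≤ m / 4)
    (hbad : 54 * m ^ 3 * p ^ 5 + 36 * m ^ 2 * p ^ 4 + 432 * m ^ 5 * p ^ 8 ≤ 1 / 4) :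
    Real.exp (-2 * ((s : ℝ) ^ 3 / m)) * (n + 1) ≤ 4 * s := by
  have hnm : n ≤ Fintype.card V := by
    have : (n : ℝ) ≤ Fintype.card V := by rw [← hm]; linarith
    exact_mod_cast this
  have hs' : ∀ Y, ∀ I ∈ IndF 𝒬 Y, I.card ≤ s := by
    intro Y I hI
    simp only [IndF, mem_filter] at hI
    exact hs I hI.2
  set y : ℝ := (s : ℝ) ^ 3 / m with hy
  have hy0 : 0 ≤ y := by positivity
  set E := Real.exp (-2 * y) with hE
  have hE0 : 0 < E := Real.exp_pos _
  set C : ℝ := ((Fintype.card V).choose n : ℝ) with hC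
  have hC0 : 0 < C := by
    rw [hC]; exact_mod_cast Nat.choose_pos hnm
  set PS := (univ : Finset V).powersetCard n with hPS
  have hPScard : (PS.card : ℝ) = C := by
    rw [hPS, card_powersetCard, card_univ]
  -- upper bound
  have hup : ∑ Y ∈ PS, ∑ v ∈ Yᶜ, PrF 𝒬 Y v ≤
      ((Fintype.card V).choose (n + 1) : ℝ) * (2 * s) := by
    rw [hPS, ← stepB]
    have : ((Fintype.card V).choose (n + 1) : ℝ) =
        (((univ : Finset V).powersetCard (n + 1)).card : ℝ) := by
      rw [card_powersetCard, card_univ]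
    rw [this, ← nsmul_eq_mul]
    apply sum_le_card_nsmul
    intro Z _
    exact stepA 𝒬 h4 s Z (hs' Z)
  have hlow : ∀ Y ∈ PS, ∀ v ∈ Yᶜ, E * ((1 + 2 * y) * (1 - if ¬ GoodF 𝒬 Y v then (1:ℝ) else 0) -
      2 * ExF 𝒬 Y v) ≤ PrF 𝒬 Y v :=
    fun Y _ v hv => stepD 𝒬 h4 Y v (mem_compl.1 hv) y
  have hcompl : ∀ Y ∈ PS, ((Yᶜ).card : ℝ) = m - n := by
    intro Y hY
    rw [hPS, mem_powersetCard] at hY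
    rw [card_compl, hY.2, Nat.cast_sub hnm, hm]
  have hbadsum : ∑ Y ∈ PS, ∑ v ∈ Yᶜ, (if ¬ GoodF 𝒬 Y v then (1:ℝ) else 0) ≤ m * (C / 4) := by
    have e1 : ∀ Y ∈ PS, ∑ v ∈ Yᶜ, (if ¬ GoodF 𝒬 Y v then (1:ℝ) else 0) =
        ∑ v : V, (if v ∉ Y ∧ ¬ GoodF 𝒬 Y v then (1:ℝ) else 0) := by
      intro Y _
      rw [← sum_filter, ← sum_filter]
      congr 1
      ext v
      simp
    rw [sum_congr rfl e1, sum_comm]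
    have : m * (C / 4) = (univ : Finset V).card • (C / 4) := by
      rw [nsmul_eq_mul, card_univ, hm]
    rw [this]
    apply sum_le_card_nsmul
    intro v _
    rw [sum_boole]
    have := bad_count2 𝒬 h4 hcd v n hnm m p hm hp
    refine le_trans this ?_
    have := mul_le_mul_of_nonneg_left hbad hC0.le
    linarith
  have hex : ∑ Y ∈ PS, ∑ v ∈ Yᶜ, ExF 𝒬 Y v ≤ C * ((s : ℝ) ^ 3 / 2) := by
    rw [← hPScard, ← nsmul_eq_mul]
    apply sum_le_card_nsmul
    intro Y _
    exact stepC 𝒬 h4 hcd s Y (hs' Y)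
  have hone : ∑ Y ∈ PS, ∑ v ∈ Yᶜ, (1:ℝ) = C * (m - n) := by
    rw [← hPScard, ← nsmul_eq_mul]
    apply sum_eq_card_nsmul
    intro Y hY
    rw [sum_const, nsmul_eq_mul, mul_one, hcompl Y hY]
  have hlow' := sum_le_sum (fun Y hY => sum_le_sum (hlow Y hY))
  simp only [← mul_sum, sum_sub_distrib] at hlow'
  rw [hone] at hlow'
  set Bd := ∑ Y ∈ PS, ∑ v ∈ Yᶜ, (if ¬ GoodF 𝒬 Y v then (1:ℝ) else 0) with hBd
  set Ex := ∑ Y ∈ PS, ∑ v ∈ Yᶜ, ExF 𝒬 Y v with hEx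
  have hfin := hlow'.trans hup
  have hch : ((Fintype.card V).choose (n + 1) : ℝ) * (n + 1) = C * (m - n) := by
    have := Nat.choose_succ_right_eq (Fintype.card V) n
    have h' : (((Fintype.card V).choose (n + 1) * (n + 1) : ℕ) : ℝ) =
      (((Fintype.card V).choose n * (Fintype.card V - n) : ℕ) : ℝ) := by rw [this]
    push_cast [Nat.cast_sub hnm] at h'
    rw [hm, h']
  have hym : y * m = (s : ℝ) ^ 3 := by rw [hy]; field_simp
  have hinner : C * m / 2 ≤ (1 + 2 * y) * (C * (m - n) - Bd) - 2 * Ex := by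
    have a1 : C * m / 2 ≤ C * (m - n) - Bd := by nlinarith
    have a2 : (1 + 2 * y) * (C * m / 2) ≤ (1 + 2 * y) * (C * (m - n) - Bd) :=
      mul_le_mul_of_nonneg_left a1 (by linarith)
    have a3 : (1 + 2 * y) * (C * m / 2) = C * m / 2 + C * (s:ℝ) ^ 3 := by
      rw [← hym]; ring
    linarith
  have hf2 : E * (C * m / 2) ≤ ((Fintype.card V).choose (n + 1) : ℝ) * (2 * s) :=
    (mul_le_mul_of_nonneg_left hinner hE0.le).trans hfin
  have hf3 : E * (C * m / 2) * (n + 1) ≤ C * (m - n) * (2 * s) := by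
    rw [← hch]
    have := mul_le_mul_of_nonneg_right hf2 (by positivity : (0:ℝ) ≤ (n:ℝ) + 1)
    linarith
  have hf4 : C * (m - n) * (2 * s) ≤ C * m * (2 * s) := by
    have : (0:ℝ) ≤ n := by positivity
    have : C * (m - n) ≤ C * m := by nlinarith
    exact mul_le_mul_of_nonneg_right this (by positivity)
  have hCm : 0 < C * m / 2 := by positivity
  have : (C * m / 2) * (E * (n + 1)) ≤ (C * m / 2) * (4 * s) := by linarith
  exact le_of_mul_le_mul_left this hCm

open Finset in
theorem hyp_thm {V : Type*} [DecidableEq V] [Fintype V] (𝒬 : Finset (Finset V))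
    (h4 : ∀ Q ∈ 𝒬, Q.card = 4)
    (hcd : ∀ U : Finset V, U.card = 3 → (𝒬.filter (fun Q => U ⊆ Q)).card ≤ 3)
    (k s : ℕ) (hk : 10 ^ 6 ≤ k) (hV : Fintype.card V = k ^ 11)
    (hs : 12 * (s : ℝ) ^ 3 ≤ (k : ℝ) ^ 11 * Real.log k) :
    ∃ I : Finset V, (∀ Q ∈ 𝒬, ¬ Q ⊆ I) ∧ I.card = s := by
  by_contra hcon
  have hle : ∀ I : Finset V, (∀ Q ∈ 𝒬, ¬ Q ⊆ I) → I.card ≤ s := by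
    intro I hI
    by_contra h
    push Not at h
    obtain ⟨J, hJI, hJ⟩ := exists_subset_card_eq h.le
    exact hcon ⟨J, fun Q hQ hQJ => hI Q hQ (hQJ.trans hJI), hJ⟩
  have hK : (10:ℝ) ^ 6 ≤ k := by exact_mod_cast hk
  have hK0 : (0:ℝ) < k := by linarith [show (0:ℝ) < 10 ^ 6 by norm_num]
  set K : ℝ := (k : ℝ) with hKdef
  set L := Real.log K with hL
  have hm : K ^ 11 = (Fintype.card V : ℝ) := by rw [hV]; push_cast; rfl
  have hp : 1 / K ^ 7 = ((k ^ 4 : ℕ) : ℝ) / K ^ 11 := by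
    push_cast
    rw [← hKdef]
    field_simp
  have key := main_ineq 𝒬 h4 hcd s (k ^ 4) hle (K ^ 11) (1 / K ^ 7) hm hp (by positivity)
    (by
      push_cast
      rw [← hKdef]
      have h1 : (4:ℝ) ≤ K ^ 7 := by
        calc (4:ℝ) ≤ (10 ^ 6) ^ 7 := by norm_num
          _ ≤ K ^ 7 := pow_le_pow_left₀ (by norm_num) hK 7
      have h2 : (0:ℝ) < K ^ 4 := by positivity
      have : K ^ 11 = K ^ 4 * K ^ 7 := by ring
      rw [this]
      nlinarith)
    (by
      have e : 54 * (K ^ 11) ^ 3 * (1 / K ^ 7) ^ 5 + 36 * (K ^ 11) ^ 2 * (1 / K ^ 7) ^ 4 +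
          432 * (K ^ 11) ^ 5 * (1 / K ^ 7) ^ 8 = 54 / K ^ 2 + 36 / K ^ 6 + 432 / K := by
        field_simp
      rw [e]
      have a1 : 54 / K ^ 2 ≤ 54 / (10 ^ 6) ^ 2 := by gcongr
      have a2 : 36 / K ^ 6 ≤ 36 / (10 ^ 6) ^ 6 := by gcongr
      have a3 : 432 / K ≤ 432 / 10 ^ 6 := by gcongr
      refine (add_le_add (add_le_add a1 a2) a3).trans ?_
      norm_num)
  push_cast at key
  rw [← hKdef] at key
  set y : ℝ := (s:ℝ) ^ 3 / K ^ 11 with hy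
  have hyL : y ≤ L / 12 := by
    rw [hy, div_le_iff₀ (by positivity)]
    linarith
  have key2 : Real.exp (-(L / 6)) * K ^ 4 ≤ 4 * s := by
    refine le_trans ?_ key
    apply mul_le_mul (Real.exp_le_exp.2 (by linarith)) (by linarith) (by positivity)
      (Real.exp_pos _).le
  have key3 : (Real.exp (-(L / 6)) * K ^ 4) ^ 3 ≤ (4 * s) ^ 3 :=
    pow_le_pow_left₀ (by positivity) key2 3
  have hKL : K = Real.exp L := (Real.exp_log hK0).symm
  have e3 : (Real.exp (-(L / 6)) * K ^ 4) ^ 3 = K ^ 11 * Real.exp (L / 2) := by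
    have : Real.exp (-(L / 6)) ^ 3 * Real.exp L = Real.exp (L / 2) := by
      rw [← Real.exp_nat_mul, ← Real.exp_add]
      congr 1
      push_cast
      ring
    rw [← this, ← hKL]
    ring
  rw [e3] at key3
  have key4 : K ^ 11 * Real.exp (L / 2) ≤ K ^ 11 * (16 / 3 * L) := by
    nlinarith
  have key5 := le_of_mul_le_mul_left key4 (by positivity)
  have hL13 : 13 ≤ L := by
    rw [hL, Real.le_log_iff_exp_le hK0]
    have h1 := Real.exp_one_lt_d9
    have h2 : Real.exp 13 = Real.exp 1 ^ 13 := by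
      rw [← Real.exp_nat_mul]; norm_num
    rw [h2]
    calc Real.exp 1 ^ 13 ≤ 2.7182818286 ^ 13 :=
          pow_le_pow_left₀ (Real.exp_pos _).le h1.le 13
      _ ≤ 10 ^ 6 := by norm_num
      _ ≤ K := hK
  have key6 := Real.pow_div_factorial_le_exp (L / 2) (by linarith) 4
  have e24 : ((Nat.factorial 4 : ℕ) : ℝ) = 24 := by norm_num [Nat.factorial]
  rw [e24] at key6
  set x := L / 2 with hx
  have hx0 : 6.5 ≤ x := by rw [hx]; norm_num; linarith
  have hx3 : (6.5:ℝ) ^ 3 ≤ x ^ 3 := pow_le_pow_left₀ (by norm_num) hx0 3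
  have : x * x ^ 3 ≤ x * 256 := by
    have : x ^ 4 = x * x ^ 3 := by ring
    linarith
  have := le_of_mul_le_mul_left this (by linarith)
  norm_num at hx3
  linarith

open Finset in
theorem rainbow_clique_s11 {V : Type*} [DecidableEq V] [Fintype V] (col : V → V → ℕ)
    (hsym : ∀ a b, col a b = col b a)
    (hprop : ∀ a b c, b ≠ a → c ≠ a → col a b = col a c → b = c)
    (k s : ℕ) (hk : 10 ^ 6 ≤ k) (hV : Fintype.card V = k ^ 11)
    (hs : 12 * (s : ℝ) ^ 3 ≤ (k : ℝ) ^ 11 * Real.log k) :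
    ∃ I : Finset V, I.card = s ∧ ∀ a ∈ I, ∀ b ∈ I, ∀ c ∈ I, ∀ d ∈ I, a ≠ b → c ≠ d →
      col a b = col c d → (a = c ∧ b = d) ∨ (a = d ∧ b = c) := by
  classical
  let 𝒬 : Finset (Finset V) := univ.filter (fun Q => ∃ a b c d, a ≠ b ∧ a ≠ c ∧ a ≠ d ∧ b ≠ c ∧
    b ≠ d ∧ c ≠ d ∧ Q = {a, b, c, d} ∧ col a b = col c d)
  have h4 : ∀ Q ∈ 𝒬, Q.card = 4 := by
    intro Q hQ
    obtain ⟨-, a, b, c, d, h1, h2, h3, h4, h5, h6, rfl, -⟩ := mem_filter.1 hQ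
    rw [card_insert_of_notMem, card_insert_of_notMem, card_insert_of_notMem, card_singleton] <;>
      simp [*]
  have hcd : ∀ U : Finset V, U.card = 3 → (𝒬.filter (fun Q => U ⊆ Q)).card ≤ 3 := by
    intro U hU
    have hex : ∀ Q ∈ 𝒬.filter (fun Q => U ⊆ Q), ∃ a ∈ U, ∃ v, v ∉ U ∧ Q = insert v U ∧
        ∃ x y, U.erase a = {x, y} ∧ col a v = col x y := by
      intro Q hQ
      obtain ⟨hQ, hUQ⟩ := mem_filter.1 hQ
      have hc := h4 Q hQ
      obtain ⟨-, a, b, c, d, h1, h2, h3, h4, h5, h6, hQe, hcol⟩ := mem_filter.1 hQ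
      have hsd : (Q \ U).card = 1 := by
        rw [card_sdiff_of_subset hUQ]; omega
      obtain ⟨v, hv⟩ := card_eq_one.1 hsd
      have hvm : v ∈ Q \ U := by rw [hv]; simp
      obtain ⟨hvQ, hvU⟩ := mem_sdiff.1 hvm
      have hQi : Q = insert v U := by
        ext z
        constructor
        · intro hz
          by_cases hzU : z ∈ U
          · exact mem_insert_of_mem hzU
          · have : z ∈ Q \ U := mem_sdiff.2 ⟨hz, hzU⟩
            rw [hv, mem_singleton] at this
            rw [this]; exact mem_insert_self _ _
        · intro hz
          rcases mem_insert.1 hz with rfl | h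
          · exact hvQ
          · exact hUQ h
      have hUe : U = Q.erase v := by rw [hQi, erase_insert hvU]
      have hvm : v = a ∨ v = b ∨ v = c ∨ v = d := by
        rw [hQe] at hvQ; simpa using hvQ
      have hmU : ∀ z, z ∈ U ↔ z ≠ v ∧ (z = a ∨ z = b ∨ z = c ∨ z = d) := by
        intro z; rw [hUe, mem_erase, hQe]; simp
      rcases hvm with h | h | h | h <;> subst h
      · refine ⟨b, (hmU b).2 (by grind), v, hvU, hQi, c, d, ?_, by rw [hsym, hcol]⟩
        ext z; rw [mem_erase, hmU]; simp; grind
      · refine ⟨a, (hmU a).2 (by grind), v, hvU, hQi, c, d, ?_, by rw [hcol]⟩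
        ext z; rw [mem_erase, hmU]; simp; grind
      · refine ⟨d, (hmU d).2 (by grind), v, hvU, hQi, a, b, ?_, by rw [hsym, hcol]⟩
        ext z; rw [mem_erase, hmU]; simp; grind
      · refine ⟨c, (hmU c).2 (by grind), v, hvU, hQi, a, b, ?_, by rw [hcol]⟩
        ext z; rw [mem_erase, hmU]; simp; grind
    rw [← hU]
    let f : Finset V → V := fun Q => if h : Q ∈ 𝒬.filter (fun Q => U ⊆ Q) then (hex Q h).choose
      else (card_pos.1 (by omega : 0 < U.card)).choose
    have hf : ∀ Q (h : Q ∈ 𝒬.filter (fun Q => U ⊆ Q)), f Q ∈ U ∧ ∃ v, v ∉ U ∧ Q = insert v U ∧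
        ∃ x y, U.erase (f Q) = {x, y} ∧ col (f Q) v = col x y := by
      intro Q h
      simp only [f, dif_pos h]
      exact (hex Q h).choose_spec
    apply card_le_card_of_injOn f
    · intro Q hQ
      exact mem_coe.2 (hf Q (mem_coe.1 hQ)).1
    · intro Q hQ Q' hQ' he
      obtain ⟨h1, v, hv, hQv, x, y, hxy, hc⟩ := hf Q (mem_coe.1 hQ)
      obtain ⟨h1', v', hv', hQv', x', y', hxy', hc'⟩ := hf Q' (mem_coe.1 hQ')
      rw [← he] at hxy' hc' h1'
      have hcc : col x y = col x' y' := by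
        have : ({x, y} : Finset V) = {x', y'} := by rw [← hxy, ← hxy']
        have e1 : x ∈ ({x', y'} : Finset V) := this ▸ (by simp)
        have e2 : y ∈ ({x', y'} : Finset V) := this ▸ (by simp)
        have e3 : x' ∈ ({x, y} : Finset V) := this ▸ (by simp)
        have e4 : y' ∈ ({x, y} : Finset V) := this ▸ (by simp)
        simp only [mem_insert, mem_singleton] at e1 e2 e3 e4
        have := hsym x y
        grind
      have : v = v' := hprop (f Q) v v' (fun h => hv (h ▸ h1)) (fun h => hv' (h ▸ h1'))
        (by rw [hc, hc', hcc])
      rw [hQv, hQv', this]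
  obtain ⟨I, hI, hIc⟩ := hyp_thm 𝒬 h4 hcd k s hk hV hs
  refine ⟨I, hIc, ?_⟩
  intro a ha b hb c hc d hd hab hcd hcol
  by_contra hne
  have hac : a ≠ c := by
    rintro rfl
    exact hne (Or.inl ⟨rfl, hprop a b d hab.symm hcd.symm hcol⟩)
  have had : a ≠ d := by
    rintro rfl
    exact hne (Or.inr ⟨rfl, hprop a b c hab.symm hcd (by rw [hcol, hsym])⟩)
  have hbc : b ≠ c := by
    rintro rfl
    exact hne (Or.inr ⟨hprop b a d hab hcd.symm (by rw [hsym, hcol]), rfl⟩)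
  have hbd : b ≠ d := by
    rintro rfl
    exact hne (Or.inl ⟨hprop b a c hab hcd (by rw [hsym, hcol, hsym]), rfl⟩)
  refine hI {a, b, c, d} (mem_filter.2 ⟨mem_univ _, a, b, c, d, hab, hac, had, hbc, hbd, hcd, rfl,
    hcol⟩) ?_
  intro z hz
  simp only [mem_insert, mem_singleton] at hz
  rcases hz with rfl | rfl | rfl | rfl <;> assumption


theorem choose_k : ∃ C : ℝ, 1 ≤ C ∧ ∀ s : ℕ, 2 ≤ s → ∃ k : ℕ, 10 ^ 6 ≤ k ∧
    12 * (s : ℝ) ^ 3 ≤ (k : ℝ) ^ 11 * Real.log k ∧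
    (k : ℝ) ^ 11 ≤ C * ((s : ℝ) ^ 3 / Real.log s) := by
  refine ⟨2 ^ 11 * 10 ^ 66, by norm_num, ?_⟩
  intro s hs
  have hs2 : (2:ℝ) ≤ s := by exact_mod_cast hs
  have hlog : 0 < Real.log s := Real.log_pos (by linarith)
  have hlogle : Real.log s ≤ s := (Real.log_le_sub_one_of_pos (by linarith)).trans (by linarith)
  set R : ℝ := (s : ℝ) ^ 3 / Real.log s with hR
  have hR2 : (s : ℝ) ^ 2 ≤ R := by
    rw [hR, le_div_iff₀ hlog]
    have : (s:ℝ) ^ 3 = s ^ 2 * s := by ring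
    rw [this]
    exact mul_le_mul_of_nonneg_left hlogle (by positivity)
  have hR1 : 1 ≤ R := by nlinarith
  set X : ℝ := 10 ^ 66 * R with hX
  have hex : ∃ k : ℕ, X ≤ (k : ℝ) ^ 11 := by
    obtain ⟨j, hj⟩ := exists_nat_ge X
    refine ⟨j + 1, hj.trans ?_⟩
    have h1 : (1:ℝ) ≤ ((j + 1 : ℕ) : ℝ) := by push_cast; linarith [Nat.cast_nonneg (α := ℝ) j]
    calc (j : ℝ) ≤ ((j + 1 : ℕ) : ℝ) := by push_cast; linarith
      _ ≤ _ := le_self_pow₀ h1 (by norm_num)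
  classical
  set k := Nat.find hex with hk
  have hkX : X ≤ (k : ℝ) ^ 11 := Nat.find_spec hex
  have hk6 : 10 ^ 6 ≤ k := by
    by_contra h
    push Not at h
    have h1 : (k : ℝ) < 10 ^ 6 := by exact_mod_cast h
    have h2 : (k : ℝ) ^ 11 < (10 ^ 6) ^ 11 := pow_lt_pow_left₀ h1 (by positivity) (by norm_num)
    have h3 : ((10:ℝ) ^ 6) ^ 11 = 10 ^ 66 := by norm_num
    have h4 : (10:ℝ) ^ 66 ≤ X := by
      rw [hX]; exact le_mul_of_one_le_right (by positivity) hR1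
    linarith
  have hkmin : ((k - 1 : ℕ) : ℝ) ^ 11 < X := by
    have := Nat.find_min hex (m := k - 1) (by omega)
    exact not_le.1 this
  have hk2 : (k : ℝ) ≤ 2 * ((k - 1 : ℕ) : ℝ) := by
    have : k ≤ 2 * (k - 1) := by omega
    exact_mod_cast this
  have hk0 : (0:ℝ) < k := by
    have : 0 < k := by omega
    exact_mod_cast this
  refine ⟨k, hk6, ?_, ?_⟩
  · have hlk : 2 * Real.log s ≤ 11 * Real.log k := by
      have h1 : (s : ℝ) ^ 2 ≤ (k : ℝ) ^ 11 := by
        have : R ≤ X := by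
          rw [hX]; exact le_mul_of_one_le_left (by linarith) (by norm_num)
        linarith
      have := Real.log_le_log (by positivity) h1
      rw [Real.log_pow, Real.log_pow] at this
      exact_mod_cast this
    have h2 : X * (2 / 11 * Real.log s) ≤ (k:ℝ) ^ 11 * Real.log k :=
      mul_le_mul hkX (by linarith) (by positivity) (by positivity)
    refine le_trans ?_ h2
    have h3 : R * Real.log s = (s:ℝ) ^ 3 := by rw [hR]; field_simp
    have h4 : X * (2 / 11 * Real.log s) = 10 ^ 66 * (2 / 11) * (R * Real.log s) := by
      rw [hX]; ring
    rw [h4, h3]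
    exact mul_le_mul_of_nonneg_right (by norm_num) (by positivity)
  · calc (k : ℝ) ^ 11 ≤ (2 * ((k - 1 : ℕ) : ℝ)) ^ 11 := pow_le_pow_left₀ hk0.le hk2 11
      _ = 2 ^ 11 * ((k - 1 : ℕ) : ℝ) ^ 11 := by rw [mul_pow]
      _ ≤ 2 ^ 11 * X := mul_le_mul_of_nonneg_left hkmin.le (by positivity)
      _ = _ := by rw [hX]; ring

theorem Kst_adj_left {m N : ℕ} (a : Fin m) (x : Fin m ⊕ Fin N) (h : x ≠ Sum.inl a) :
    (Kst m N).Adj (Sum.inl a) x := by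
  simp only [Kst, SimpleGraph.fromRel_adj]
  exact ⟨h.symm, Or.inl rfl⟩

theorem Kst_edge {m N : ℕ} (e : Sym2 (Fin m ⊕ Fin N)) (h : e ∈ (Kst m N).edgeSet) :
    ∃ (a : Fin m) (x : Fin m ⊕ Fin N), x ≠ Sum.inl a ∧ e = s(Sum.inl a, x) := by
  induction e using Sym2.ind with
  | _ u v =>
    rw [SimpleGraph.mem_edgeSet] at h
    simp only [Kst, SimpleGraph.fromRel_adj] at h
    obtain ⟨hne, h | h⟩ := h
    · obtain ⟨a, rfl⟩ := Sum.isLeft_iff.1 h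
      exact ⟨a, v, hne.symm, rfl⟩
    · obtain ⟨a, rfl⟩ := Sum.isLeft_iff.1 h
      exact ⟨a, u, hne, Sym2.eq_swap⟩

/-- the copy spanned by `S` and `T` is rainbow -/
def RbF {m N : ℕ} (c : Sym2 (Fin m ⊕ Fin N) → ℕ) (S : Finset (Fin m)) (T : Finset (Fin N)) : Prop :=
  ∀ a ∈ S, ∀ b ∈ S, ∀ x ∈ S.disjSum T, ∀ y ∈ S.disjSum T, x ≠ Sum.inl a → y ≠ Sum.inl b →
    c s(Sum.inl a, x) = c s(Sum.inl b, y) → s(Sum.inl a, x) = s(Sum.inl b, y)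

theorem proper_at {V : Type*} {G : SimpleGraph V} {c : Sym2 V → ℕ} (h : IsProperEdgeColoring G c)
    {v x y : V} (hx : G.Adj v x) (hy : G.Adj v y) (hc : c s(v, x) = c s(v, y)) : x = y := by
  by_contra hne
  refine h s(v, x) hx s(v, y) hy ?_ ⟨v, by simp, by simp⟩ hc
  intro he
  exact hne (Sym2.congr_right.1 he)

open Finset in
theorem greedy_step {m N : ℕ} (c : Sym2 (Fin m ⊕ Fin N) → ℕ)
    (hc : IsProperEdgeColoring (Kst m N) c) (S : Finset (Fin m)) (T : Finset (Fin N))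
    (hS : 0 < S.card) (h : RbF c S T) (hN : S.card * (S.card * (S.card + T.card)) < N) :
    ∃ w, w ∉ T ∧ RbF c S (insert w T) := by
  classical
  set D : Finset ℕ := (S ×ˢ (S.disjSum T)).image (fun p => c s(Sum.inl p.1, p.2)) with hD
  have hDc : D.card ≤ S.card * (S.card + T.card) := by
    refine card_image_le.trans ?_
    rw [card_product, card_disjSum]
  set B : Finset (Fin N) := (S ×ˢ D).biUnion
    (fun p => univ.filter (fun w => c s(Sum.inl p.1, Sum.inr w) = p.2)) with hB
  have hBc : B.card < N := by
    have h1 : B.card ≤ (S ×ˢ D).card * 1 := by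
      apply card_biUnion_le_card_mul
      intro p _
      rw [card_le_one]
      intro w hw w' hw'
      have e1 := (mem_filter.1 hw).2
      have e2 := (mem_filter.1 hw').2
      have := proper_at hc (Kst_adj_left p.1 (Sum.inr w) (by simp))
        (Kst_adj_left p.1 (Sum.inr w') (by simp)) (e1.trans e2.symm)
      exact Sum.inr_injective this
    rw [card_product, mul_one] at h1
    exact lt_of_le_of_lt (h1.trans (Nat.mul_le_mul_left _ hDc)) hN
  obtain ⟨w, hw⟩ : ∃ w, w ∉ B := by
    by_contra hall
    push Not at hall
    have : B = univ := eq_univ_of_forall hall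
    rw [this, card_univ, Fintype.card_fin] at hBc
    exact lt_irrefl _ hBc
  have hwD : ∀ a ∈ S, c s(Sum.inl a, Sum.inr w) ∉ D := by
    intro a ha hd
    exact hw (mem_biUnion.2 ⟨(a, c s(Sum.inl a, Sum.inr w)), mem_product.2 ⟨ha, hd⟩,
      mem_filter.2 ⟨mem_univ _, rfl⟩⟩)
  have hDm : ∀ a ∈ S, ∀ x ∈ S.disjSum T, c s(Sum.inl a, x) ∈ D := by
    intro a ha x hx
    exact mem_image.2 ⟨(a, x), mem_product.2 ⟨ha, hx⟩, rfl⟩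
  have hsplit : ∀ x ∈ S.disjSum (insert w T), x = Sum.inr w ∨ x ∈ S.disjSum T := by
    intro x hx
    rcases x with x | x
    · right; simpa using hx
    · simpa using hx
  refine ⟨w, ?_, ?_⟩
  · intro hwT
    obtain ⟨a, ha⟩ := card_pos.1 hS
    exact hwD a ha (hDm a ha _ (by simpa using hwT))
  · intro a ha b hb x hx y hy hxa hyb he
    rcases hsplit x hx with rfl | hx' <;> rcases hsplit y hy with rfl | hy'
    · have h1 : c s(Sum.inr w, Sum.inl a) = c s(Sum.inr w, Sum.inl b) := by
        rw [Sym2.eq_swap, he, Sym2.eq_swap]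
      have := proper_at hc (Kst_adj_left a (Sum.inr w) (by simp)).symm
        (Kst_adj_left b (Sum.inr w) (by simp)).symm h1
      rw [this]
    · exact absurd (he ▸ hDm b hb y hy') (hwD a ha)
    · exact absurd (he ▸ hDm a ha x hx') (hwD b hb)
    · exact h a ha b hb x hx' y hy' hxa hyb he

open Finset in
theorem greedy {m N : ℕ} (c : Sym2 (Fin m ⊕ Fin N) → ℕ)
    (hc : IsProperEdgeColoring (Kst m N) c) (S : Finset (Fin m))
    (hS : 0 < S.card) (h : RbF c S ∅) (t : ℕ) (hN : S.card * (S.card * (S.card + t)) ≤ N) :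
    ∃ T : Finset (Fin N), T.card = t ∧ RbF c S T := by
  induction t with
  | zero => exact ⟨∅, rfl, h⟩
  | succ t ih =>
    have hlt : S.card * (S.card * (S.card + t)) < S.card * (S.card * (S.card + (t + 1))) := by
      apply Nat.mul_lt_mul_of_pos_left _ hS
      apply Nat.mul_lt_mul_of_pos_left _ hS
      omega
    obtain ⟨T, hT, hR⟩ := ih (by omega)
    obtain ⟨w, hw, hR'⟩ := greedy_step c hc S T hS hR (by rw [hT]; omega)
    exact ⟨insert w T, by rw [card_insert_of_notMem hw, hT], hR'⟩

open Finset in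
theorem copy_of_RbF {m N s t : ℕ} (c : Sym2 (Fin m ⊕ Fin N) → ℕ) (S : Finset (Fin m))
    (T : Finset (Fin N)) (hS : S.card = s) (hT : T.card = t) (h : RbF c S T) :
    HasRainbowCopy (Kst m N) (Kst s t) c := by
  set f : Fin s ⊕ Fin t → Fin m ⊕ Fin N :=
    Sum.map (S.orderEmbOfFin hS) (T.orderEmbOfFin hT) with hf
  have hinj : Function.Injective f :=
    Sum.map_injective.2 ⟨(S.orderEmbOfFin hS).injective, (T.orderEmbOfFin hT).injective⟩
  have hmem : ∀ x, f x ∈ S.disjSum T := by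
    rintro (x | x)
    · simp [hf]
    · simp [hf]
  refine ⟨⟨f, ?_⟩, hinj, ?_⟩
  · intro u v huv
    have huv' : s(u, v) ∈ (Kst s t).edgeSet := huv
    simp only [Kst, SimpleGraph.fromRel_adj] at huv ⊢
    refine ⟨fun h => huv.1 (hinj h), ?_⟩
    rcases huv.2 with h | h
    · left; obtain ⟨a, rfl⟩ := Sum.isLeft_iff.1 h; rfl
    · right; obtain ⟨a, rfl⟩ := Sum.isLeft_iff.1 h; rfl
  · intro e₁ he₁ e₂ he₂ hcol
    obtain ⟨a, x, hxa, rfl⟩ := Kst_edge e₁ he₁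
    obtain ⟨b, y, hyb, rfl⟩ := Kst_edge e₂ he₂
    have ha : f (Sum.inl a) = Sum.inl (S.orderEmbOfFin hS a) := rfl
    have hb : f (Sum.inl b) = Sum.inl (S.orderEmbOfFin hS b) := rfl
    apply Sym2.map.injective hinj
    change s(f (Sum.inl a), f x) = s(f (Sum.inl b), f y)
    change c s(f (Sum.inl a), f x) = c s(f (Sum.inl b), f y) at hcol
    rw [ha, hb] at hcol ⊢
    exact h _ (orderEmbOfFin_mem _ _ _) _ (orderEmbOfFin_mem _ _ _) _ (hmem x) _ (hmem y)
      (fun h => hxa (hinj (h.trans ha.symm))) (fun h => hyb (hinj (h.trans hb.symm))) hcol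

theorem Kst_arrows (k s t : ℕ) (hs1 : 1 ≤ s) (hk : 10 ^ 6 ≤ k)
    (hs : 12 * (s : ℝ) ^ 3 ≤ (k : ℝ) ^ 11 * Real.log k) :
    ArrowsTo (Kst (k ^ 11) (s * (s * (s + t)))) (Kst s t) := by
  intro c hc
  obtain ⟨S, hS, hR⟩ := rainbow_clique_s11 (V := Fin (k ^ 11))
    (fun a b => c s(Sum.inl a, Sum.inl b)) (fun a b => by rw [Sym2.eq_swap])
    (fun a x y hx hy he => Sum.inl_injective (proper_at hc
      (Kst_adj_left a (Sum.inl x) (fun h => hx (Sum.inl_injective h)))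
      (Kst_adj_left a (Sum.inl y) (fun h => hy (Sum.inl_injective h))) he))
    k s hk (Fintype.card_fin _) hs
  have hR0 : RbF c S ∅ := by
    intro a ha b hb x hx y hy hxa hyb he
    rcases x with x | x
    · rcases y with y | y
      · have hx' : x ∈ S := by simpa using hx
        have hy' : y ∈ S := by simpa using hy
        rcases hR a ha x hx' b hb y hy' (fun h => hxa (by rw [h])) (fun h => hyb (by rw [h])) he
          with ⟨h1, h2⟩ | ⟨h1, h2⟩
        · rw [h1, h2]
        · rw [h1, h2, Sym2.eq_swap]
      · simp at hy
    · simp at hx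
  obtain ⟨T, hT, hRT⟩ := greedy c hc S (by omega) hR0 t (by rw [hS])
  exact copy_of_RbF c S T hS hT hRT

theorem Kst_edges (m N : ℕ) : (Kst m N).edgeSet.ncard ≤ m * (m + N) := by
  have hsub : (Kst m N).edgeSet ⊆
      Set.range (fun p : Fin m × (Fin m ⊕ Fin N) => s(Sum.inl p.1, p.2)) := by
    intro e he
    obtain ⟨a, x, -, rfl⟩ := Kst_edge e he
    exact ⟨(a, x), rfl⟩
  refine (Set.ncard_le_ncard hsub (Set.finite_range _)).trans ?_
  rw [← Set.image_univ]
  refine (Set.ncard_image_le Set.finite_univ).trans ?_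
  rw [Set.ncard_univ, Nat.card_eq_fintype_card]
  simp

theorem ARs_le {V W : Type*} [Fintype V] (G : SimpleGraph V) (H : SimpleGraph W)
    (h : ArrowsTo G H) : ∃ (n : ℕ) (G' : SimpleGraph (Fin n)), ArrowsTo G' H ∧
      G'.edgeSet.ncard = G.edgeSet.ncard := by
  set e := Fintype.equivFin V with he
  refine ⟨Fintype.card V, G.map e.toEmbedding, ?_, ?_⟩
  · intro c hc
    let φ : G ≃g G.map e.toEmbedding := SimpleGraph.Iso.map e G
    have hc' : IsProperEdgeColoring G (c ∘ Sym2.map φ) := by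
      intro e₁ h₁ e₂ h₂ hne hv
      obtain ⟨v, hv1, hv2⟩ := hv
      refine hc _ (φ.toHom.map_mem_edgeSet h₁) _ (φ.toHom.map_mem_edgeSet h₂)
        (fun h' => hne (Sym2.map.injective φ.injective h')) ⟨φ v, ?_, ?_⟩
      · exact Sym2.mem_map.2 ⟨v, hv1, rfl⟩
      · exact Sym2.mem_map.2 ⟨v, hv2, rfl⟩
    obtain ⟨f, hf, hr⟩ := h _ hc'
    refine ⟨φ.toHom.comp f, φ.injective.comp hf, ?_⟩
    intro e₁ h₁ e₂ h₂ heq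
    apply hr e₁ h₁ e₂ h₂
    simp only [Function.comp, Sym2.map_map]
    exact heq
  · exact (Nat.card_congr (SimpleGraph.Iso.map e G).mapEdgeSet).symm

theorem copy_mono {V W U : Type*} {G : SimpleGraph V} {K : SimpleGraph U} {H : SimpleGraph W}
    (g : H →g K) (hg : Function.Injective g) (h : ArrowsTo G K) : ArrowsTo G H := by
  intro c hc
  obtain ⟨f, hf, hr⟩ := h c hc
  refine ⟨f.comp g, hf.comp hg, ?_⟩
  intro e₁ h₁ e₂ h₂ heq
  apply Sym2.map.injective hg
  apply hr _ (g.map_mem_edgeSet h₁) _ (g.map_mem_edgeSet h₂)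
  rw [Sym2.map_map, Sym2.map_map]
  exact heq

theorem cover_embed {W : Type*} [Fintype W] (H : SimpleGraph W) :
    ∃ g : H →g Kst (coverNumber H) (Fintype.card W - coverNumber H), Function.Injective g := by
  classical
  obtain ⟨S, -, hS, hcov⟩ : coverNumber H ∈
      {m | ∃ S : Set W, S.Finite ∧ S.ncard = m ∧ ∀ e ∈ H.edgeSet, ∃ v ∈ S, v ∈ e} := by
    apply Nat.sInf_mem
    refine ⟨_, Set.univ, Set.finite_univ, rfl, ?_⟩
    intro e _
    induction e using Sym2.ind with
    | _ u v => exact ⟨u, Set.mem_univ _, by simp⟩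
  have h1 : Fintype.card S = coverNumber H := by
    rw [← hS, ← Nat.card_coe_set_eq, Nat.card_eq_fintype_card]
  have h2 : Fintype.card (Sᶜ : Set W) = Fintype.card W - coverNumber H := by
    rw [Fintype.card_compl_set, h1]
  let E : W ≃ Fin (coverNumber H) ⊕ Fin (Fintype.card W - coverNumber H) :=
    (Equiv.Set.sumCompl S).symm.trans
      (Equiv.sumCongr (Fintype.equivFinOfCardEq h1) (Fintype.equivFinOfCardEq h2))
  have hE : ∀ v ∈ S, (E v).isLeft = true := by
    intro v hv
    simp only [E, Equiv.trans_apply]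
    rw [Equiv.Set.sumCompl_symm_apply_of_mem hv]
    rfl
  refine ⟨⟨E, ?_⟩, E.injective⟩
  intro u v huv
  simp only [Kst, SimpleGraph.fromRel_adj]
  refine ⟨fun h => huv.ne (E.injective h), ?_⟩
  obtain ⟨w, hw, hwe⟩ := hcov s(u, v) huv
  rcases Sym2.mem_iff.1 hwe with rfl | rfl
  · exact Or.inl (hE _ hw)
  · exact Or.inr (hE _ hw)


theorem stmt_11 :
    ∃ c : ℝ, 0 < c ∧
      ∀ (W : Type) [Fintype W] (H : SimpleGraph W),
        (∀ v : W, ∃ w, H.Adj v w) → 2 ≤ coverNumber H →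
        ARs H ≤ ARs (Kst (coverNumber H) (Fintype.card W - coverNumber H)) ∧
        (ARs (Kst (coverNumber H) (Fintype.card W - coverNumber H)) : ℝ) ≤
          c * (Fintype.card W : ℝ) * (coverNumber H : ℝ) ^ 5 / Real.log (coverNumber H) +
          c * (coverNumber H : ℝ) ^ 6 / Real.log (coverNumber H) := by
  obtain ⟨C, hC1, hC⟩ := choose_k
  refine ⟨2 * C ^ 2, by positivity, ?_⟩
  intro W _ H _ hτ
  set τ := coverNumber H with hτdef
  set n := Fintype.card W with hn
  obtain ⟨k, hk6, hk12, hkC⟩ := hC τ hτ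
  have harr := Kst_arrows k τ (n - τ) (by omega) hk6 hk12
  obtain ⟨n', G', hG', hcard⟩ := ARs_le _ _ harr
  constructor
  · have hne : {m | ∃ (n' : ℕ) (G : SimpleGraph (Fin n')), ArrowsTo G (Kst τ (n - τ)) ∧
        G.edgeSet.ncard = m}.Nonempty := ⟨_, n', G', hG', rfl⟩
    obtain ⟨n'', G, hG, hm⟩ := Nat.sInf_mem hne
    obtain ⟨g, hg⟩ := cover_embed H
    exact Nat.sInf_le ⟨n'', G, copy_mono g hg hG, hm⟩
  · have hle : ARs (Kst τ (n - τ)) ≤ k ^ 11 * (k ^ 11 + τ * (τ * (τ + (n - τ)))) := by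
      refine le_trans ?_ (Kst_edges _ _)
      exact Nat.sInf_le ⟨n', G', hG', hcard⟩
    have hτn : τ ≤ n := by
      obtain ⟨v⟩ : Nonempty (Fin τ) := ⟨⟨0, by omega⟩⟩
      refine Nat.sInf_le ?_ |>.trans (le_of_eq (Set.ncard_univ W |>.trans Nat.card_eq_fintype_card))
      refine ⟨Set.univ, Set.finite_univ, rfl, ?_⟩
      intro e _
      induction e using Sym2.ind with
      | _ u v => exact ⟨u, Set.mem_univ _, by simp⟩
    rw [Nat.add_sub_cancel' hτn] at hle
    have hle' : (ARs (Kst τ (n - τ)) : ℝ) ≤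
        (k:ℝ) ^ 11 * ((k:ℝ) ^ 11 + (τ:ℝ) * ((τ:ℝ) * (n:ℝ))) := by exact_mod_cast hle
    have hτ2 : (2:ℝ) ≤ τ := by exact_mod_cast hτ
    have hlog2 : (1/2:ℝ) ≤ Real.log τ := by
      have := Real.log_two_gt_d9
      have := Real.log_le_log (by norm_num) hτ2
      linarith
    set L := Real.log (τ:ℝ) with hL
    have hL0 : 0 < L := by linarith
    set M : ℝ := (k:ℝ) ^ 11 with hM
    have hM0 : 0 ≤ M := by positivity
    refine hle'.trans ?_
    have h1 : M * M ≤ 2 * C ^ 2 * (τ:ℝ) ^ 6 / L := by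
      calc M * M ≤ (C * ((τ:ℝ) ^ 3 / L)) * (C * ((τ:ℝ) ^ 3 / L)) :=
            mul_le_mul hkC hkC hM0 (by positivity)
        _ = C ^ 2 * (τ:ℝ) ^ 6 / L * (1 / L) := by ring
        _ ≤ C ^ 2 * (τ:ℝ) ^ 6 / L * 2 := by
            apply mul_le_mul_of_nonneg_left _ (by positivity)
            rw [div_le_iff₀ hL0]; linarith
        _ = _ := by ring
    have h2 : M * ((τ:ℝ) * ((τ:ℝ) * (n:ℝ))) ≤ 2 * C ^ 2 * (n:ℝ) * (τ:ℝ) ^ 5 / L := by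
      calc M * ((τ:ℝ) * ((τ:ℝ) * (n:ℝ))) ≤ (C * ((τ:ℝ) ^ 3 / L)) * ((τ:ℝ) * ((τ:ℝ) * (n:ℝ))) :=
            mul_le_mul_of_nonneg_right hkC (by positivity)
        _ = C * ((n:ℝ) * (τ:ℝ) ^ 5 / L) := by ring
        _ ≤ (2 * C ^ 2) * ((n:ℝ) * (τ:ℝ) ^ 5 / L) := by
            apply mul_le_mul_of_nonneg_right _ (by positivity)
            nlinarith
        _ = _ := by ring
    linarith
end

section
/- Let H be a graph with k ≥ 1 edges and chromatic index χ′(H) (the minimum number of colors in a proper edge coloring of H). Then every H-good graph G has at least k²/(4·χ′(H)) edges. -/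
open SimpleGraph

/-- An `H`-good coloring of `G`: a proper edge coloring with colors in the
positive integers that contains a rainbow copy of `H`, and such that every edge
of color `i` has, for each `1 ≤ j < i`, an adjacent edge of color `j`. -/
def IsHGoodColoring {V W : Type*} (H : SimpleGraph W) (G : SimpleGraph V)
    (c : Sym2 V → ℕ) : Prop :=
  IsProperEdgeColoring G c ∧
  (∀ e ∈ G.edgeSet, 1 ≤ c e) ∧
  HasRainbowCopy G H c ∧
  ∀ e ∈ G.edgeSet, ∀ j : ℕ, 1 ≤ j → j < c e →
    ∃ e' ∈ G.edgeSet, c e' = j ∧ ∃ v, v ∈ e ∧ v ∈ e'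

/-- A graph `G` is `H`-good if it admits an `H`-good coloring. -/
def HGood {V W : Type*} (H : SimpleGraph W) (G : SimpleGraph V) : Prop :=
  ∃ c : Sym2 V → ℕ, IsHGoodColoring H G c

theorem card_sq_le_sum (S : Finset ℕ) : (∀ x ∈ S, 1 ≤ x) → S.card ^ 2 ≤ 2 * ∑ x ∈ S, x := by
  induction S using Finset.induction_on_max with
  | empty => simp
  | insert a s ha ih =>
    intro h
    have has : a ∉ s := fun h => lt_irrefl _ (ha a h)
    have h1 := ih (fun x hx => h x (Finset.mem_insert_of_mem hx))
    have h2 : insert a s ⊆ Finset.Icc 1 a := by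
      intro x hx
      rw [Finset.mem_Icc]
      refine ⟨h x hx, ?_⟩
      rcases Finset.mem_insert.1 hx with rfl | hx
      · exact le_rfl
      · exact (ha x hx).le
    have h3 := Finset.card_le_card h2
    rw [Finset.card_insert_of_notMem has, Nat.card_Icc, Nat.add_sub_cancel] at h3
    rw [Finset.card_insert_of_notMem has, Finset.sum_insert has]
    nlinarith

theorem chromIndex_spec {W : Type} [Fintype W] (H : SimpleGraph W) :
    ∃ d : Sym2 W → ℕ, IsProperEdgeColoring H d ∧ ∀ e ∈ H.edgeSet, d e < chromIndex H := by
  classical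
  have hne : {m | ∃ c : Sym2 W → ℕ, IsProperEdgeColoring H c ∧
      ∀ e ∈ H.edgeSet, c e < m}.Nonempty := by
    refine ⟨Fintype.card (Sym2 W), fun e => (Fintype.equivFin (Sym2 W) e : ℕ), ?_, ?_⟩
    · intro e₁ _ e₂ _ hne _ h
      exact hne ((Fintype.equivFin (Sym2 W)).injective (Fin.ext h))
    · intro e _
      exact (Fintype.equivFin (Sym2 W) e).2
  exact Nat.sInf_mem hne

theorem stmt_12 {W : Type} [Fintype W] (H : SimpleGraph W)
    (hk : 1 ≤ H.edgeSet.ncard)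
    (V : Type) [Fintype V] (G : SimpleGraph V) (hG : HGood H G) :
    (H.edgeSet.ncard : ℝ) ^ 2 / (4 * (chromIndex H : ℝ)) ≤ (G.edgeSet.ncard : ℝ) := by
  classical
  obtain ⟨c, hc, hpos, ⟨f, hf, hrain⟩, hgood⟩ := hG
  obtain ⟨d, hd, hdlt⟩ := chromIndex_spec H
  have hmap : ∀ e ∈ H.edgeSet, Sym2.map f e ∈ G.edgeSet := by
    intro e he
    induction e using Sym2.ind with
    | _ a b => exact f.map_adj he
  -- a dart of color `j` starting at a vertex of the image of `e`
  have hdart : ∀ p : (_ : Sym2 W) × ℕ, ∃ x : Option G.Dart,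
      p.1 ∈ H.edgeSet → 1 ≤ p.2 → p.2 ≤ c (Sym2.map f p.1) →
      ∃ y : G.Dart, x = some y ∧ c y.edge = p.2 ∧ y.fst ∈ Sym2.map f p.1 := by
    rintro ⟨e, j⟩
    by_cases h : e ∈ H.edgeSet ∧ 1 ≤ j ∧ j ≤ c (Sym2.map f e)
    · obtain ⟨he, h1, h2⟩ := h
      have : ∃ e' ∈ G.edgeSet, c e' = j ∧ ∃ v, v ∈ Sym2.map f e ∧ v ∈ e' := by
        rcases h2.lt_or_eq with h2 | h2
        · exact hgood _ (hmap e he) j h1 h2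
        · obtain ⟨v, hv⟩ : ∃ v, v ∈ Sym2.map f e := ⟨_, Sym2.out_fst_mem _⟩
          exact ⟨_, hmap e he, h2.symm, v, hv, hv⟩
      obtain ⟨e', he', hj, v, hv, hv'⟩ := this
      obtain ⟨w, rfl⟩ := Sym2.mem_iff_exists.1 hv'
      exact ⟨some ⟨(v, w), he'⟩, fun _ _ _ => ⟨_, rfl, hj, hv⟩⟩
    · exact ⟨none, fun a b c => absurd ⟨a, b, c⟩ h⟩
  choose g hg using hdart
  let A := H.edgeFinset.sigma (fun e => Finset.Icc 1 (c (Sym2.map f e)))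
  have hA : ∀ p ∈ A, ∃ y : G.Dart, g p = some y ∧ c y.edge = p.2 ∧
      y.fst ∈ Sym2.map f p.1 ∧ p.1 ∈ H.edgeSet := by
    intro p hp
    simp only [A, Finset.mem_sigma, Finset.mem_Icc, SimpleGraph.mem_edgeFinset] at hp
    obtain ⟨y, h1, h2, h3⟩ := hg p hp.1 hp.2.1 hp.2.2
    exact ⟨y, h1, h2, h3, hp.1⟩
  have hcard : A.card ≤ (((Finset.univ : Finset G.Dart).image some) ×ˢ
      Finset.range (chromIndex H)).card := by
    apply Finset.card_le_card_of_injOn (fun p => (g p, d p.1))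
    · intro p hp
      obtain ⟨y, h1, h2, h3, h4⟩ := hA p hp
      simp [h1, hdlt _ h4]
    · rintro ⟨e, j⟩ hp ⟨e', j'⟩ hp' h
      obtain ⟨y, h1, h2, h3, h4⟩ := hA _ hp
      obtain ⟨y', h1', h2', h3', h4'⟩ := hA _ hp'
      simp only [Prod.mk.injEq] at h h2 h2' h3 h3' h4 h4'
      obtain ⟨ha, hb⟩ := h
      rw [h1, h1', Option.some.injEq] at ha
      subst ha
      have hj : j = j' := h2.symm.trans h2'
      subst hj
      have he : e = e' := by
        by_contra hne
        obtain ⟨u, hu, hu2⟩ := Sym2.mem_map.1 h3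
        obtain ⟨v, hv, hv2⟩ := Sym2.mem_map.1 h3'
        have huv : u = v := hf (hu2.trans hv2.symm)
        subst huv
        exact hd e h4 e' h4' hne ⟨u, hu, hv⟩ hb
      subst he
      rfl
  rw [Finset.card_product, Finset.card_image_of_injective _ (Option.some_injective _),
    Finset.card_univ, G.dart_card_eq_twice_card_edges, Finset.card_range] at hcard
  have hAc : A.card = ∑ e ∈ H.edgeFinset, c (Sym2.map f e) := by
    simp [A, Finset.card_sigma]
  have hinj : Set.InjOn (fun e => c (Sym2.map f e)) (H.edgeFinset : Set (Sym2 W)) := by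
    intro a ha b hb h
    exact hrain a (by simpa using ha) b (by simpa using hb) h
  have hS := card_sq_le_sum (H.edgeFinset.image (fun e => c (Sym2.map f e))) (by
    intro x hx
    obtain ⟨e, he, rfl⟩ := Finset.mem_image.1 hx
    exact hpos _ (hmap e (by simpa using he)))
  rw [Finset.card_image_of_injOn hinj, Finset.sum_image hinj, ← hAc] at hS
  have hH : H.edgeSet.ncard = H.edgeFinset.card := by
    rw [← SimpleGraph.coe_edgeFinset, Set.ncard_coe_finset]
  have hG' : G.edgeSet.ncard = G.edgeFinset.card := by
    rw [← SimpleGraph.coe_edgeFinset, Set.ncard_coe_finset]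
  rw [hH, hG']
  apply div_le_of_le_mul₀ (by positivity) (by positivity)
  have : H.edgeFinset.card ^ 2 ≤ G.edgeFinset.card * (4 * chromIndex H) := by
    nlinarith
  exact_mod_cast this
end
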